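/- Let (C,p,Q) be a Brascamp–Lieb datum with BL(C,p,Q) < +∞, and suppose it is extremizable: there exist nonnegative functions f_i ∈ L¹(ℝ^{n_i}), not almost everywhere zero, each more log-convex than g_{Q_i}, such that ∫_{ℝⁿ} ∏_{i=1}^m f_i(C_i x)^{p_i} dx = BL(C,p,Q) · ∏_{i=1}^m (∫_{ℝ^{n_i}} f_i)^{p_i}. Then it is Gaussian-extremizable: there exist symmetric matrices B_i with 0 < B_i ≤ Q_i such that BL(C,p,Q)² = ∏_{i=1}^m det(B_i)^{p_i} / det(∑_{i=1}^m p_i C_iᵀ B_i C_i). -/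

import Mathlib

open MeasureTheory Matrix
open scoped ENNReal

noncomputable section

/-- The centered Gaussian function attached to a matrix `Q` : `g_Q(x) = exp(-π⟨Qx,x⟩)`. -/
def gaussFn {k : ℕ} (Q : Matrix (Fin k) (Fin k) ℝ) (x : Fin k → ℝ) : ℝ :=
  Real.exp (-Real.pi * (Q.mulVec x ⬝ᵥ x))

/-- A nonnegative log-convex function. -/
def LogConvexFun {k : ℕ} (h : (Fin k → ℝ) → ℝ) : Prop :=
  (∀ x, 0 ≤ h x) ∧
    ∀ x y : Fin k → ℝ, ∀ a b : ℝ, 0 ≤ a → 0 ≤ b → a + b = 1 →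
      h (a • x + b • y) ≤ h x ^ a * h y ^ b

/-- `f` is more log-convex than `g_Q`, i.e. `f = g_Q · h` with `h` log-convex. -/
def MoreLogConvex {k : ℕ} (f : (Fin k → ℝ) → ℝ) (Q : Matrix (Fin k) (Fin k) ℝ) : Prop :=
  ∃ h : (Fin k → ℝ) → ℝ, LogConvexFun h ∧ f = fun x => gaussFn Q x * h x

/-- The regularized Brascamp–Lieb constant of a datum `(C, p, Q)`. -/
def BLconst {n m : ℕ} {ni : Fin m → ℕ} (C : ∀ i, Matrix (Fin (ni i)) (Fin n) ℝ)
    (p : Fin m → ℝ) (Q : ∀ i, Matrix (Fin (ni i)) (Fin (ni i)) ℝ) : ℝ≥0∞ :=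
  ⨆ (B : ∀ i, Matrix (Fin (ni i)) (Fin (ni i)) ℝ)
    (_ : ∀ i, (B i).PosDef ∧ (Q i - B i).PosSemidef),
    ((∏ i, ENNReal.ofReal ((B i).det) ^ p i) /
        ENNReal.ofReal ((∑ i, p i • ((C i)ᵀ * B i * C i)).det)) ^ ((2 : ℝ)⁻¹)

/-!
A maximizer `B` of the Gaussian functional over `0 < B ≤ Q` satisfies first-order optimality
conditions. Under these, the heat flow and a Gaussian form of Jensen's inequality show that `B` is
optimal among all inputs more log-convex than `g_Q`. Maximizers need not exist, but they do for the
exponents `(1 + ε) p`: the extra powers of the determinants keep maximizing sequences away from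
degenerate matrices. Letting `ε → 0` yields the Brascamp–Lieb inequality.

To recover an extremal Gaussian from an extremizer, rotate its tensor square. Applying the
inequality to the slices and then to the marginal shows that almost every slice is again an
extremizer, and the product over a slice is `F₁ * F₂` with `F₁` and `F₂` integrable. Hence the
integral of `(F₁ * F₂) ^ (1 + ε)` drops only linearly in `ε`, which bounds the determinants of the
maximizers for `(1 + ε) p` from below, and a compactness argument ends the proof.
-/

open ProbabilityTheory Filter Topology

/-! ### Second-order expansion of weighted geometric means -/

section GeometricMean

variable {ι : Type*} [Fintype ι] {q : ι → ℝ}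

lemma log_one_add_le_cubic {t : ℝ} (ht : -1 < t) :
    Real.log (1 + t) ≤ t - t ^ 2 / 2 + 2 * |t| ^ 3 := by
  rcases le_or_gt |t| (1 / 2) with hsmall | hlarge
  · have htaylor := Real.abs_log_sub_add_sum_range_le (x := -t) (by rw [abs_neg]; linarith) 2
    simp only [Finset.sum_range_succ, Finset.sum_range_zero, sub_neg_eq_add, abs_neg] at htaylor
    have hremainder : |t| ^ 3 / (1 - |t|) ≤ 2 * |t| ^ 3 := by
      rw [div_le_iff₀ (by linarith)]
      nlinarith [mul_nonneg (pow_nonneg (abs_nonneg t) 3) (sub_nonneg.2 hsmall)]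
    have := (abs_le.1 (htaylor.trans hremainder)).2
    norm_num at this
    linarith
  · have hlog : Real.log (1 + t) ≤ t := by
      linarith [Real.log_le_sub_one_of_pos (show 0 < 1 + t by linarith)]
    have hsq : t ^ 2 ≤ 4 * |t| ^ 3 := by
      rw [← sq_abs]
      nlinarith [mul_nonneg (sq_nonneg |t|) (sub_nonneg.2 hlarge.le)]
    linarith

lemma exp_le_quadratic_add_cubic (s : ℝ) :
    Real.exp s ≤ 1 + s + s ^ 2 / 2 + |s| ^ 3 * Real.exp |s| := by
  have htaylor := Complex.norm_exp_sub_sum_le_norm_mul_exp (s : ℂ) 3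
  have hpoly : Complex.exp (s : ℂ) - ∑ m ∈ Finset.range 3, (s : ℂ) ^ m / (m.factorial : ℂ)
      = ((Real.exp s - (1 + s + s ^ 2 / 2) : ℝ) : ℂ) := by
    simp [Finset.sum_range_succ, Nat.factorial]
  rw [hpoly, Complex.norm_real, Complex.norm_real, Real.norm_eq_abs, Real.norm_eq_abs] at htaylor
  linarith [(abs_le.1 htaylor).2]

lemma exists_exp_add_le {a b R : ℝ} (ha : 0 ≤ a) (hb : 0 ≤ b) (hR : 0 ≤ R) :
    ∃ A : ℝ, 0 ≤ A ∧ ∀ σ ρ τ : ℝ, 0 ≤ τ → τ ≤ R → |σ| ≤ a * τ → |ρ| ≤ b * τ ^ 2 →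
      Real.exp (σ + ρ) ≤ 1 + σ + ρ + σ ^ 2 / 2 + A * τ ^ 3 := by
  refine ⟨a * b + b ^ 2 * R / 2 + (a + b * R) ^ 3 * Real.exp ((a + b * R) * R), by positivity,
    fun σ ρ τ hτ hτR hσ hρ => ?_⟩
  have hsum : |σ + ρ| ≤ (a + b * R) * τ := by
    have : b * τ ^ 2 ≤ b * R * τ := by rw [sq, ← mul_assoc]; gcongr
    linarith [abs_add_le σ ρ]
  have hcross : σ * ρ ≤ a * b * τ ^ 3 := by
    calc σ * ρ ≤ |σ| * |ρ| := (le_abs_self _).trans_eq (abs_mul _ _)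
      _ ≤ (a * τ) * (b * τ ^ 2) := by gcongr
      _ = a * b * τ ^ 3 := by ring
  have hsquare : ρ ^ 2 ≤ b ^ 2 * R * τ ^ 3 := by
    calc ρ ^ 2 = |ρ| ^ 2 := (sq_abs _).symm
      _ ≤ (b * τ ^ 2) ^ 2 := by gcongr
      _ = b ^ 2 * τ * τ ^ 3 := by ring
      _ ≤ b ^ 2 * R * τ ^ 3 := by gcongr
  have hcubic : |σ + ρ| ^ 3 * Real.exp |σ + ρ| ≤
      (a + b * R) ^ 3 * Real.exp ((a + b * R) * R) * τ ^ 3 := by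
    calc |σ + ρ| ^ 3 * Real.exp |σ + ρ|
        ≤ ((a + b * R) * τ) ^ 3 * Real.exp ((a + b * R) * R) := by
          gcongr
          exact hsum.trans (by gcongr)
      _ = (a + b * R) ^ 3 * Real.exp ((a + b * R) * R) * τ ^ 3 := by ring
  linarith [exp_le_quadratic_add_cubic (σ + ρ), add_sq σ ρ]

lemma abs_sum_mul_le (hq : ∀ i, 0 ≤ q i) {x : ι → ℝ} {X : ℝ} (hx : ∀ i, |x i| ≤ X) :
    |∑ i, q i * x i| ≤ (∑ i, q i) * X := by
  rw [Finset.sum_mul]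
  refine (Finset.abs_sum_le_sum_abs _ _).trans (Finset.sum_le_sum fun i _ => ?_)
  rw [abs_mul, abs_of_nonneg (hq i)]
  exact mul_le_mul_of_nonneg_left (hx i) (hq i)

lemma prod_one_add_rpow_le_exp (hq : ∀ i, 0 ≤ q i) {t : ι → ℝ} (ht : ∀ i, -1 < t i) :
    ∏ i, (1 + t i) ^ q i ≤
      Real.exp (∑ i, q i * t i + ∑ i, q i * (-t i ^ 2 / 2 + 2 * |t i| ^ 3)) := by
  rw [← Finset.sum_add_distrib, Real.exp_sum]
  refine Finset.prod_le_prod (fun i _ => Real.rpow_nonneg (by linarith [ht i]) _) fun i _ => ?_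
  rw [Real.rpow_def_of_pos (by linarith [ht i]), Real.exp_le_exp, mul_comm, ← mul_add]
  exact mul_le_mul_of_nonneg_left (by linarith [log_one_add_le_cubic (ht i)]) (hq i)

lemma exists_prod_one_add_rpow_le (hq : ∀ i, 0 ≤ q i) {R : ℝ} (hR : 0 ≤ R) :
    ∃ A : ℝ, 0 ≤ A ∧ ∀ t : ι → ℝ, ∀ τ : ℝ, (∀ i, -1 < t i) → (∀ i, |t i| ≤ τ) →
      0 ≤ τ → τ ≤ R →
      ∏ i, (1 + t i) ^ q i ≤
        1 + ∑ i, q i * t i + ((∑ i, q i * t i) ^ 2 - ∑ i, q i * t i ^ 2) / 2 + A * τ ^ 3 := by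
  set S := ∑ i, q i
  have hS : 0 ≤ S := Finset.sum_nonneg fun i _ => hq i
  obtain ⟨A, hA, hexp⟩ :=
    exists_exp_add_le hS (show 0 ≤ S * (1 / 2 + 2 * R) by positivity) hR
  refine ⟨A + 2 * S, by positivity, fun t τ ht hτ hτ0 hτR => (prod_one_add_rpow_le_exp hq ht).trans
    ((hexp _ _ τ hτ0 hτR (abs_sum_mul_le hq hτ) ?_).trans ?_)⟩
  · rw [mul_assoc]
    refine abs_sum_mul_le hq fun i => ?_
    have hsq : t i ^ 2 ≤ τ ^ 2 := by rw [← sq_abs]; gcongr; exact hτ i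
    have hcube : |t i| ^ 3 ≤ R * τ ^ 2 := by
      calc |t i| ^ 3 ≤ τ ^ 3 := by gcongr; exact hτ i
        _ = τ * τ ^ 2 := by ring
        _ ≤ R * τ ^ 2 := by gcongr
    rw [abs_le]
    constructor <;> nlinarith [abs_nonneg (t i), sq_nonneg (t i), pow_nonneg (abs_nonneg (t i)) 3]
  · have hsplit : ∑ i, q i * (-t i ^ 2 / 2 + 2 * |t i| ^ 3) =
        -(∑ i, q i * t i ^ 2) / 2 + 2 * ∑ i, q i * |t i| ^ 3 := by
      rw [neg_div, Finset.sum_div, ← Finset.sum_neg_distrib, Finset.mul_sum,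
        ← Finset.sum_add_distrib]
      exact Finset.sum_congr rfl fun i _ => by ring
    have hcube : ∑ i, q i * |t i| ^ 3 ≤ S * τ ^ 3 :=
      (le_abs_self _).trans (abs_sum_mul_le hq fun i => by
        rw [abs_pow, abs_abs]; gcongr; exact hτ i)
    rw [hsplit]
    linarith

lemma abs_sq_sub_sq_le {x y X Y : ℝ} (hx : |x| ≤ X) (hy : |y| ≤ X) (hxy : |x - y| ≤ Y) :
    |x ^ 2 - y ^ 2| ≤ 2 * X * Y := by
  rw [sq_sub_sq, abs_mul]
  exact mul_le_mul ((abs_add_le _ _).trans (by linarith)) hxy (abs_nonneg _)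
    (by linarith [abs_nonneg x])

lemma exists_prod_one_add_rpow_le_of_approx (hq : ∀ i, 0 ≤ q i) {R : ℝ} (hR : 0 ≤ R) :
    ∃ A : ℝ, 0 ≤ A ∧ ∀ t l : ι → ℝ, ∀ θ : ℝ, 0 ≤ θ → (∀ i, -1 < t i) → (∀ i, |t i| ≤ R) →
      (∀ i, |l i| ≤ R * θ) → (∀ i, |t i - l i| ≤ R * θ ^ 2) →
      ∏ i, (1 + t i) ^ q i ≤
        1 + ∑ i, q i * t i + ((∑ i, q i * l i) ^ 2 - ∑ i, q i * l i ^ 2) / 2 + A * θ ^ 3 := by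
  obtain ⟨A, hA, hTaylor⟩ := exists_prod_one_add_rpow_le hq hR
  set S := ∑ i, q i
  have hS : 0 ≤ S := Finset.sum_nonneg fun i _ => hq i
  refine ⟨A * (2 * R) ^ 3 + 2 * (S ^ 2 + S) * R ^ 2, by positivity,
    fun t l θ hθ ht htR hl htl => ?_⟩
  have ht2 : ∀ i, |t i| ≤ 2 * R * θ := fun i => by
    rcases le_total θ 1 with h | h
    · have : |t i| ≤ |t i - l i| + |l i| := by simpa using abs_add_le (t i - l i) (l i)
      have : R * θ ^ 2 ≤ R * θ := by gcongr; nlinarith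
      linarith [hl i, htl i]
    · nlinarith [htR i, mul_nonneg hR hθ]
  have hl2 : ∀ i, |l i| ≤ 2 * R * θ := fun i => by nlinarith [hl i, mul_nonneg hR hθ]
  have hsum : |(∑ i, q i * t i) ^ 2 - (∑ i, q i * l i) ^ 2| ≤
      2 * (S * (2 * R * θ)) * (S * (R * θ ^ 2)) := by
    refine abs_sq_sub_sq_le (abs_sum_mul_le hq ht2) (abs_sum_mul_le hq hl2) ?_
    simpa only [mul_sub, Finset.sum_sub_distrib] using abs_sum_mul_le hq htl
  have hsq : |∑ i, q i * t i ^ 2 - ∑ i, q i * l i ^ 2| ≤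
      S * (2 * (2 * R * θ) * (R * θ ^ 2)) := by
    simpa only [mul_sub, Finset.sum_sub_distrib] using
      abs_sum_mul_le hq fun i => abs_sq_sub_sq_le (ht2 i) (hl2 i) (htl i)
  have hτ : A * min R (2 * R * θ) ^ 3 ≤ A * (2 * R * θ) ^ 3 := by
    gcongr
    exact min_le_right _ _
  have hmain := hTaylor t (min R (2 * R * θ)) ht (fun i => le_min (htR i) (ht2 i))
    (le_min hR (by positivity)) (min_le_left _ _)
  linarith [(abs_le.1 hsum).2, (abs_le.1 hsq).1]

end GeometricMean

/-! ### The heat semigroup -/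

section HeatSemigroup

variable {E : Type*} [NormedAddCommGroup E] [InnerProductSpace ℝ E] [FiniteDimensional ℝ E]
  [MeasurableSpace E] [BorelSpace E]

/-- The heat semigroup on a Euclidean space, in the normalisation `e^{sΔ/2}`. -/
def heatSemigroup {F : Type*} [NormedAddCommGroup F] [NormedSpace ℝ F] (s : ℝ) (K : E → F)
    (x : E) : F :=
  ∫ w, K (x + √s • w) ∂(stdGaussian E)

lemma integrable_comp_add_smul {F : Type*} [NormedAddCommGroup F] {K : E → F} (hK : Continuous K)
    {D : ℝ} (hD : ∀ x, ‖K x‖ ≤ D) (s : ℝ) (x : E) :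
    Integrable (fun w => K (x + √s • w)) (stdGaussian E) := by
  refine Integrable.of_bound (C := D) ?_ (ae_of_all _ fun w => hD _)
  exact (by fun_prop : Continuous fun w => K (x + √s • w)).aestronglyMeasurable

section Basic

variable {F : Type*} [NormedAddCommGroup F] [NormedSpace ℝ F] {K : E → F} {D : ℝ}

lemma continuous_heatSemigroup (hK : Continuous K) (hD : ∀ x, ‖K x‖ ≤ D) (s : ℝ) :
    Continuous (heatSemigroup s K) := by
  refine continuous_of_dominated (bound := fun _ => D)
    (fun x => (integrable_comp_add_smul hK hD s x).1) (fun x => ae_of_all _ fun w => hD _)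
    (integrable_const _) (ae_of_all _ fun w => by fun_prop)

lemma norm_heatSemigroup_le (hD : ∀ x, ‖K x‖ ≤ D) (s : ℝ) (x : E) :
    ‖heatSemigroup s K x‖ ≤ D :=
  (norm_integral_le_of_norm_le_const (ae_of_all _ fun w => hD _)).trans (by simp)

lemma heatSemigroup_zero [CompleteSpace F] (K : E → F) : heatSemigroup 0 K = K := by
  ext x
  simp [heatSemigroup]

lemma exists_cos_sin_mul_sqrt_add {s t : ℝ} (hs : 0 ≤ s) (ht : 0 ≤ t) :
    ∃ θ : ℝ, √(s + t) * Real.cos θ = √s ∧ √(s + t) * Real.sin θ = √t := by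
  have hnorm : ‖(⟨√s, √t⟩ : ℂ)‖ = √(s + t) := by
    rw [Complex.norm_def, Complex.normSq_mk, Real.mul_self_sqrt hs, Real.mul_self_sqrt ht]
  refine ⟨Complex.arg ⟨√s, √t⟩, ?_, ?_⟩
  · rw [← hnorm, Complex.norm_mul_cos_arg]
  · rw [← hnorm, Complex.norm_mul_sin_arg]

lemma heatSemigroup_heatSemigroup [CompleteSpace F] (hK : Continuous K) (hD : ∀ x, ‖K x‖ ≤ D)
    {s t : ℝ} (hs : 0 ≤ s) (ht : 0 ≤ t) (x : E) :
    heatSemigroup s (heatSemigroup t K) x = heatSemigroup (s + t) K x := by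
  set γ := stdGaussian E
  obtain ⟨θ, hcos, hsin⟩ := exists_cos_sin_mul_sqrt_add hs ht
  have hcont : Continuous fun p : E × E => K (x + √(s + t) • p.1) := by fun_prop
  have hcont_rot : Continuous fun p : E × E =>
      K (x + √(s + t) • (ContinuousLinearMap.rotation θ p).1) := by fun_prop
  calc heatSemigroup s (heatSemigroup t K) x
      = ∫ w, ∫ w', K (x + √(s + t) • (ContinuousLinearMap.rotation θ (w, w')).1) ∂γ ∂γ := by
        simp only [heatSemigroup, ContinuousLinearMap.rotation_apply, smul_add, smul_smul, hcos,
          hsin, add_assoc, γ]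
    _ = ∫ p, K (x + √(s + t) • (ContinuousLinearMap.rotation θ p).1) ∂(γ.prod γ) :=
        (integral_prod _ (.of_bound hcont_rot.aestronglyMeasurable D
          (ae_of_all _ fun _ => hD _))).symm
    _ = ∫ p, K (x + √(s + t) • p.1) ∂((γ.prod γ).map (ContinuousLinearMap.rotation θ)) :=
        (integral_map (by fun_prop) hcont.aestronglyMeasurable).symm
    _ = ∫ p, K (x + √(s + t) • p.1) ∂(γ.prod γ) := by
        rw [IsGaussian.map_rotation_eq_self (by simp [γ]) θ]
    _ = heatSemigroup (s + t) K x := by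
        rw [integral_prod _ (.of_bound hcont.aestronglyMeasurable D (ae_of_all _ fun _ => hD _))]
        simp [heatSemigroup, γ]

end Basic

/-! ### Moments of the standard Gaussian -/

lemma integral_inner_stdGaussian (u : E) : ∫ w, inner ℝ u w ∂(stdGaussian E) = 0 := by
  simpa using integral_strongDual_stdGaussian (E := E) (innerSL ℝ u)

lemma integral_inner_sq_stdGaussian (u : E) :
    ∫ w, inner ℝ u w ^ 2 ∂(stdGaussian E) = ‖u‖ ^ 2 := by
  have hcov := covarianceBilin_apply (μ := stdGaussian E) IsGaussian.memLp_two_id u u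
  simp only [covarianceBilin_stdGaussian, id_eq, integral_id_stdGaussian, sub_zero, ← sq] at hcov
  rw [← hcov]
  exact real_inner_self_eq_norm_sq u

lemma integrable_norm_pow_stdGaussian (k : ℕ) :
    Integrable (fun w : E => ‖w‖ ^ k) (stdGaussian E) := by
  rcases Nat.eq_zero_or_pos k with rfl | hk
  · simp
  · exact (IsGaussian.memLp_id (stdGaussian E) k (by simp)).integrable_norm_pow hk.ne'

lemma integrable_inner_pow_stdGaussian (u : E) (k : ℕ) :
    Integrable (fun w => inner ℝ u w ^ k) (stdGaussian E) := by
  refine ((integrable_norm_pow_stdGaussian k).const_mul (‖u‖ ^ k)).mono' (by fun_prop)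
    (ae_of_all _ fun w => ?_)
  rw [Real.norm_eq_abs, abs_pow, ← mul_pow]
  exact pow_le_pow_left₀ (abs_nonneg _) (abs_real_inner_le_norm u w) k

lemma integrable_inner_stdGaussian (u : E) :
    Integrable (fun w => inner ℝ u w) (stdGaussian E) := by
  simpa only [pow_one] using integrable_inner_pow_stdGaussian u 1

/-! ### Functions pinched between positive constants -/

/-- `K` takes values in `[c, D]` with `c > 0`, and `v` plays the role of its gradient: it is
bounded by `D`, takes values in the subspace `S`, and gives a first-order expansion of `K` with
quadratic error. The class is stable under the heat semigroup. -/
structure RegularPositive {E : Type*} [NormedAddCommGroup E] [InnerProductSpace ℝ E]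
    (S : Submodule ℝ E) (c D : ℝ) (K : E → ℝ) (v : E → E) : Prop where
  pos : 0 < c
  cont : Continuous K
  contGrad : Continuous v
  lower : ∀ x, c ≤ K x
  upper : ∀ x, K x ≤ D
  mem : ∀ x, v x ∈ S
  bound : ∀ x, ‖v x‖ ≤ D
  taylor : ∀ x y, |K (x + y) - K x - inner ℝ (v x) y| ≤ D * ‖y‖ ^ 2

namespace RegularPositive

section Basic

variable {E : Type*} [NormedAddCommGroup E] [InnerProductSpace ℝ E]
  {S : Submodule ℝ E} {c D : ℝ} {K : E → ℝ} {v : E → E}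

lemma apply_pos (h : RegularPositive S c D K v) (x : E) : 0 < K x := h.pos.trans_le (h.lower x)

lemma norm_le (h : RegularPositive S c D K v) (x : E) : ‖K x‖ ≤ D := by
  rw [Real.norm_of_nonneg (h.apply_pos x).le]
  exact h.upper x

lemma nonneg (h : RegularPositive S c D K v) : 0 ≤ D := (norm_nonneg _).trans (h.norm_le 0)

lemma mono (h : RegularPositive S c D K v) {D' : ℝ} (hD : D ≤ D') :
    RegularPositive S c D' K v where
  pos := h.pos
  cont := h.cont
  contGrad := h.contGrad
  lower := h.lower
  upper x := (h.upper x).trans hD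
  mem := h.mem
  bound x := (h.bound x).trans hD
  taylor x y := (h.taylor x y).trans (by gcongr)

lemma abs_taylor_smul_le (h : RegularPositive S c D K v) {s : ℝ} (hs : 0 ≤ s) (x w : E) :
    |K (x + √s • w) - K x - √s * inner ℝ (v x) w| ≤ D * s * ‖w‖ ^ 2 := by
  have htaylor := h.taylor x (√s • w)
  rwa [inner_smul_right, norm_smul, mul_pow, Real.norm_eq_abs, sq_abs, Real.sq_sqrt hs,
    ← mul_assoc] at htaylor

lemma continuous_prod_rpow {ι : Type*} [Fintype ι] {S : ι → Submodule ℝ E} {K : ι → E → ℝ}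
    {v : ι → E → E} (h : ∀ i, RegularPositive (S i) c D (K i) (v i)) (q : ι → ℝ) :
    Continuous fun x => ∏ i, K i x ^ q i :=
  continuous_finsetProd _ fun i _ => (h i).cont.rpow_const fun x => Or.inl ((h i).apply_pos x).ne'

lemma prod_rpow_pos {ι : Type*} [Fintype ι] {S : ι → Submodule ℝ E} {K : ι → E → ℝ}
    {v : ι → E → E} (h : ∀ i, RegularPositive (S i) c D (K i) (v i)) (q : ι → ℝ) (x : E) :
    0 < ∏ i, K i x ^ q i :=
  Finset.prod_pos fun i _ => Real.rpow_pos_of_pos ((h i).apply_pos x) _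

lemma prod_rpow_le {ι : Type*} [Fintype ι] {S : ι → Submodule ℝ E} {K : ι → E → ℝ}
    {v : ι → E → E} (h : ∀ i, RegularPositive (S i) c D (K i) (v i)) {q : ι → ℝ}
    (hq : ∀ i, 0 ≤ q i) (x : E) :
    ∏ i, K i x ^ q i ≤ ∏ i, D ^ q i :=
  Finset.prod_le_prod (fun i _ => Real.rpow_nonneg ((h i).apply_pos x).le _) fun i _ =>
    Real.rpow_le_rpow ((h i).apply_pos x).le ((h i).upper x) (hq i)

lemma norm_prod_rpow_le {ι : Type*} [Fintype ι] {S : ι → Submodule ℝ E} {K : ι → E → ℝ}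
    {v : ι → E → E} (h : ∀ i, RegularPositive (S i) c D (K i) (v i)) {q : ι → ℝ}
    (hq : ∀ i, 0 ≤ q i) (x : E) :
    ‖∏ i, K i x ^ q i‖ ≤ ∏ i, D ^ q i := by
  rw [Real.norm_of_nonneg (prod_rpow_pos h q x).le]
  exact prod_rpow_le h hq x

end Basic

variable {S : Submodule ℝ E} {c D : ℝ} {K : E → ℝ} {v : E → E}

lemma integrable_shift (h : RegularPositive S c D K v) (s : ℝ) (x : E) :
    Integrable (fun w => K (x + √s • w)) (stdGaussian E) :=
  integrable_comp_add_smul h.cont h.norm_le s x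

lemma heatSemigroup_taylor (h : RegularPositive S c D K v) (s : ℝ) (x y : E) :
    |heatSemigroup s K (x + y) - heatSemigroup s K x - inner ℝ (heatSemigroup s v x) y| ≤
      D * ‖y‖ ^ 2 := by
  have hv := integrable_comp_add_smul h.contGrad h.bound s x
  have hshift : Integrable (fun w => K (x + √s • w + y)) (stdGaussian E) := by
    simpa only [add_right_comm] using h.integrable_shift s (x + y)
  have hdiff : Integrable (fun w => K (x + √s • w + y) - K (x + √s • w)) (stdGaussian E) :=
    hshift.sub (h.integrable_shift s x)
  have hintegral : heatSemigroup s K (x + y) - heatSemigroup s K x -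
      inner ℝ (heatSemigroup s v x) y = ∫ w, (K ((x + √s • w) + y) - K (x + √s • w) -
        inner ℝ (v (x + √s • w)) y) ∂(stdGaussian E) := by
    rw [integral_sub hdiff (hv.inner_const y),
      integral_sub hshift (h.integrable_shift s x)]
    simp only [heatSemigroup, add_right_comm _ y]
    rw [real_inner_comm, ← integral_inner hv]
    simp only [real_inner_comm]
  rw [hintegral, ← Real.norm_eq_abs]
  refine (norm_integral_le_of_norm_le_const
    (ae_of_all _ fun w => h.taylor (x + √s • w) y)).trans ?_
  simp

lemma heat (h : RegularPositive S c D K v) (s : ℝ) :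
    RegularPositive S c D (heatSemigroup s K) (heatSemigroup s v) where
  pos := h.pos
  cont := continuous_heatSemigroup h.cont h.norm_le s
  contGrad := continuous_heatSemigroup h.contGrad h.bound s
  lower x := by
    simpa [heatSemigroup] using integral_mono (μ := stdGaussian E) (integrable_const c)
      (h.integrable_shift s x) (fun w => h.lower _)
  upper x := by
    simpa [heatSemigroup] using integral_mono (μ := stdGaussian E) (h.integrable_shift s x)
      (integrable_const D) (fun w => h.upper _)
  mem x := S.convex.integral_mem S.closed_of_finiteDimensional
    (ae_of_all _ fun w => h.mem _) (integrable_comp_add_smul h.contGrad h.bound s x)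
  bound := norm_heatSemigroup_le h.bound s
  taylor := h.heatSemigroup_taylor s

lemma abs_heatSemigroup_sub_le (h : RegularPositive S c D K v) {s : ℝ} (hs : 0 ≤ s) (x : E) :
    |heatSemigroup s K x - K x| ≤ D * s * ∫ y, ‖y‖ ^ 2 ∂(stdGaussian E) := by
  have hlin := (integrable_inner_stdGaussian (v x)).const_mul (√s)
  have hdiff : Integrable (fun w => K (x + √s • w) - K x) (stdGaussian E) :=
    (h.integrable_shift s x).sub (integrable_const _)
  have hintegral : heatSemigroup s K x - K x =
      ∫ w, (K (x + √s • w) - K x - √s * inner ℝ (v x) w) ∂(stdGaussian E) := by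
    rw [integral_sub hdiff hlin,
      integral_sub (h.integrable_shift s x) (integrable_const _), integral_const_mul,
      integral_inner_stdGaussian]
    simp [heatSemigroup]
  rw [hintegral, ← integral_const_mul, ← Real.norm_eq_abs]
  exact norm_integral_le_of_norm_le ((integrable_norm_pow_stdGaussian 2).const_mul _)
    (ae_of_all _ fun w => h.abs_taylor_smul_le hs x w)

/- Comparing `K (x + √s w)` with its mean value instead of `K x` makes the first-order fluctuation
exactly centred, so that no second derivative of `K` enters. -/
lemma abs_sub_heatSemigroup_sub_le (h : RegularPositive S c D K v) {s : ℝ} (hs : 0 ≤ s)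
    (x w : E) :
    |K (x + √s • w) - heatSemigroup s K x - √s * inner ℝ (v x) w| ≤
      D * s * (‖w‖ ^ 2 + ∫ y, ‖y‖ ^ 2 ∂(stdGaussian E)) := by
  have hpoint := abs_le.1 (h.abs_taylor_smul_le hs x w)
  have hmean := abs_le.1 (h.abs_heatSemigroup_sub_le hs x)
  rw [mul_add, abs_le]
  constructor <;> linarith

end RegularPositive

end HeatSemigroup

/-! ### A Gaussian Jensen inequality -/

section HeatWeight

variable {E : Type*} [NormedAddCommGroup E] [InnerProductSpace ℝ E] [FiniteDimensional ℝ E]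
  [MeasurableSpace E]

/-- A weight at least `1` dominating `‖w‖` and the error terms of a single step of the heat flow,
with Gaussian moments of all orders. -/
def heatWeight (w : E) : ℝ := 1 + ‖w‖ ^ 2 + ∫ y : E, ‖y‖ ^ 2 ∂(stdGaussian E)

lemma integral_norm_sq_stdGaussian_nonneg : 0 ≤ ∫ y : E, ‖y‖ ^ 2 ∂(stdGaussian E) :=
  integral_nonneg fun _ => by positivity

lemma one_le_heatWeight (w : E) : 1 ≤ heatWeight w := by
  unfold heatWeight
  linarith [sq_nonneg ‖w‖, integral_norm_sq_stdGaussian_nonneg (E := E)]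

lemma norm_le_heatWeight (w : E) : ‖w‖ ≤ heatWeight w := by
  unfold heatWeight
  nlinarith [sq_nonneg (‖w‖ - 1), integral_norm_sq_stdGaussian_nonneg (E := E)]

lemma integrable_heatWeight_pow_three [BorelSpace E] :
    Integrable (fun w : E => heatWeight w ^ 3) (stdGaussian E) := by
  set κ := ∫ y : E, ‖y‖ ^ 2 ∂(stdGaussian E)
  have hexpand : (fun w : E => heatWeight w ^ 3) = fun w : E => ‖w‖ ^ 6 +
      3 * (1 + κ) * ‖w‖ ^ 4 + 3 * (1 + κ) ^ 2 * ‖w‖ ^ 2 + (1 + κ) ^ 3 := by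
    ext w
    simp only [heatWeight]
    ring
  rw [hexpand]
  exact ((((integrable_norm_pow_stdGaussian 6).add
    ((integrable_norm_pow_stdGaussian 4).const_mul _)).add
    ((integrable_norm_pow_stdGaussian 2).const_mul _)).add (integrable_const _))

end HeatWeight

section GaussianJensen

variable {ι : Type*} [Fintype ι] {q : ι → ℝ}
  {E : Type*} [NormedAddCommGroup E] [InnerProductSpace ℝ E] [FiniteDimensional ℝ E]
  [MeasurableSpace E] [BorelSpace E]

lemma integrable_sum_mul_sub_sq (u : ι → E) (q : ι → ℝ) :
    Integrable (fun w => (∑ i, q i * inner ℝ (u i) w) ^ 2 - ∑ i, q i * inner ℝ (u i) w ^ 2)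
      (stdGaussian E) := by
  have hsum (w : E) : ∑ i, q i * inner ℝ (u i) w = inner ℝ (∑ i, q i • u i) w := by
    simp only [sum_inner, real_inner_smul_left]
  simp only [hsum]
  exact (integrable_inner_pow_stdGaussian _ 2).sub
    (integrable_finsetSum _ fun i _ => (integrable_inner_pow_stdGaussian _ 2).const_mul _)

lemma integral_sum_mul_sub_sq (u : ι → E) (q : ι → ℝ) :
    ∫ w, ((∑ i, q i * inner ℝ (u i) w) ^ 2 - ∑ i, q i * inner ℝ (u i) w ^ 2) ∂(stdGaussian E) =
      ‖∑ i, q i • u i‖ ^ 2 - ∑ i, q i * ‖u i‖ ^ 2 := by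
  have hsum (w : E) : ∑ i, q i * inner ℝ (u i) w = inner ℝ (∑ i, q i • u i) w := by
    simp only [sum_inner, real_inner_smul_left]
  have hi : ∀ i ∈ Finset.univ, Integrable (fun w => q i * inner ℝ (u i) w ^ 2) (stdGaussian E) :=
    fun i _ => (integrable_inner_pow_stdGaussian _ 2).const_mul _
  simp only [hsum]
  rw [integral_sub (integrable_inner_pow_stdGaussian _ 2) (integrable_finsetSum _ hi),
    integral_finsetSum _ hi]
  simp only [integral_const_mul, integral_inner_sq_stdGaussian]

lemma exists_integral_prod_one_add_rpow_le (hq : ∀ i, 0 ≤ q i) {R : ℝ} (hR : 0 ≤ R) :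
    ∃ A : ℝ, 0 ≤ A ∧ ∀ (t : ι → E → ℝ) (u : ι → E) (Θ : E → ℝ),
      (∀ i, Integrable (t i) (stdGaussian E)) → (∀ i, ∫ w, t i w ∂(stdGaussian E) = 0) →
      Integrable (fun w => Θ w ^ 3) (stdGaussian E) → (∀ w, 0 ≤ Θ w) → (∀ i w, -1 < t i w) →
      (∀ i w, |t i w| ≤ R) → (∀ i w, |inner ℝ (u i) w| ≤ R * Θ w) →
      (∀ i w, |t i w - inner ℝ (u i) w| ≤ R * Θ w ^ 2) →
      ∫ w, ∏ i, (1 + t i w) ^ q i ∂(stdGaussian E) ≤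
        1 + (‖∑ i, q i • u i‖ ^ 2 - ∑ i, q i * ‖u i‖ ^ 2) / 2 +
          A * ∫ w, Θ w ^ 3 ∂(stdGaussian E) := by
  obtain ⟨A, hA, hTaylor⟩ := exists_prod_one_add_rpow_le_of_approx hq hR
  refine ⟨A, hA, fun t u Θ hint hmean hΘ hΘ0 ht htR hu htu => ?_⟩
  have hlin : Integrable (fun w => ∑ i, q i * t i w) (stdGaussian E) :=
    integrable_finsetSum _ fun i _ => (hint i).const_mul _
  have hlin_mean : ∫ w, ∑ i, q i * t i w ∂(stdGaussian E) = 0 := by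
    rw [integral_finsetSum _ fun i _ => (hint i).const_mul _]
    simp only [integral_const_mul, hmean, mul_zero, Finset.sum_const_zero]
  have hquad := (integrable_sum_mul_sub_sq u q).div_const 2
  have haffine : Integrable (fun w => 1 + ∑ i, q i * t i w) (stdGaussian E) :=
    (integrable_const 1).add hlin
  have hsecond : Integrable (fun w => 1 + ∑ i, q i * t i w +
      ((∑ i, q i * inner ℝ (u i) w) ^ 2 - ∑ i, q i * inner ℝ (u i) w ^ 2) / 2) (stdGaussian E) :=
    haffine.add hquad
  calc ∫ w, ∏ i, (1 + t i w) ^ q i ∂(stdGaussian E)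
      ≤ ∫ w, (1 + ∑ i, q i * t i w + ((∑ i, q i * inner ℝ (u i) w) ^ 2 -
          ∑ i, q i * inner ℝ (u i) w ^ 2) / 2 + A * Θ w ^ 3) ∂(stdGaussian E) :=
        integral_mono_of_nonneg
          (ae_of_all _ fun w => Finset.prod_nonneg fun i _ =>
            Real.rpow_nonneg (by linarith [ht i w]) _)
          (hsecond.add (hΘ.const_mul A))
          (ae_of_all _ fun w => hTaylor (t · w) _ (Θ w) (hΘ0 w) (ht · w) (htR · w) (hu · w)
            (htu · w))
    _ = 1 + (‖∑ i, q i • u i‖ ^ 2 - ∑ i, q i * ‖u i‖ ^ 2) / 2 +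
          A * ∫ w, Θ w ^ 3 ∂(stdGaussian E) := by
        rw [integral_add hsecond (hΘ.const_mul A), integral_add haffine hquad,
          integral_add (integrable_const 1) hlin, hlin_mean, integral_div,
          integral_sum_mul_sub_sq, integral_const_mul]
        simp

namespace RegularPositive

variable {S : Submodule ℝ E} {c D : ℝ} {K : E → ℝ} {v : E → E}

lemma div_heatSemigroup_sub_one_mem (h : RegularPositive S c D K v) (s : ℝ) (x y : E) :
    -1 < K y / heatSemigroup s K x - 1 ∧ |K y / heatSemigroup s K x - 1| ≤ D / c := by
  have hpos := div_pos (h.apply_pos y) ((h.heat s).apply_pos x)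
  have hle : K y / heatSemigroup s K x ≤ D / c :=
    div_le_div₀ h.nonneg (h.upper y) h.pos ((h.heat s).lower x)
  have hone : 1 ≤ D / c := (one_le_div h.pos).2 ((h.lower 0).trans (h.upper 0))
  refine ⟨by linarith, abs_le.2 ⟨by linarith, by linarith⟩⟩

lemma abs_inner_gradient_le (h : RegularPositive S c D K v) (s : ℝ) (x w : E) :
    |inner ℝ ((√s / heatSemigroup s K x) • v x) w| ≤ D / c * (√s * heatWeight w) := by
  have hm := (h.heat s).apply_pos x
  rw [real_inner_smul_left, abs_mul, abs_of_nonneg (by positivity)]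
  calc √s / heatSemigroup s K x * |inner ℝ (v x) w|
      ≤ √s / c * (D * heatWeight w) := by
        have := h.pos
        gcongr
        · exact (h.heat s).lower x
        · exact (abs_real_inner_le_norm _ _).trans
            (mul_le_mul (h.bound x) (norm_le_heatWeight w) (norm_nonneg _) h.nonneg)
    _ = D / c * (√s * heatWeight w) := by ring

lemma abs_div_sub_one_sub_inner_le (h : RegularPositive S c D K v) {s : ℝ} (hs : 0 ≤ s)
    (x w : E) :
    |K (x + √s • w) / heatSemigroup s K x - 1 -
        inner ℝ ((√s / heatSemigroup s K x) • v x) w| ≤ D / c * (√s * heatWeight w) ^ 2 := by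
  have hm := (h.heat s).apply_pos x
  have hfactor : K (x + √s • w) / heatSemigroup s K x - 1 -
      inner ℝ ((√s / heatSemigroup s K x) • v x) w =
        (K (x + √s • w) - heatSemigroup s K x - √s * inner ℝ (v x) w) / heatSemigroup s K x := by
    rw [real_inner_smul_left]
    field_simp
  rw [hfactor, abs_div, abs_of_pos hm, mul_pow, Real.sq_sqrt hs]
  calc _ ≤ D * s * (‖w‖ ^ 2 + ∫ y, ‖y‖ ^ 2 ∂(stdGaussian E)) / c :=
        div_le_div₀ (mul_nonneg (mul_nonneg h.nonneg hs)
          (add_nonneg (sq_nonneg _) integral_norm_sq_stdGaussian_nonneg))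
          (h.abs_sub_heatSemigroup_sub_le hs x w) h.pos ((h.heat s).lower x)
    _ ≤ D * s * heatWeight w ^ 2 / c := by
        have hweight : ‖w‖ ^ 2 + ∫ y, ‖y‖ ^ 2 ∂(stdGaussian E) ≤ heatWeight w ^ 2 := by
          have : heatWeight w ≤ heatWeight w ^ 2 := by nlinarith [one_le_heatWeight w]
          simp only [heatWeight] at this ⊢
          linarith
        have := h.nonneg
        have := h.pos
        gcongr
    _ = D / c * (s * heatWeight w ^ 2) := by ring

lemma prod_rpow_eq_mul {S : ι → Submodule ℝ E} {K : ι → E → ℝ} {v : ι → E → E}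
    (h : ∀ i, RegularPositive (S i) c D (K i) (v i)) (q : ι → ℝ) (s : ℝ) (x y : E) :
    ∏ i, K i y ^ q i = (∏ i, heatSemigroup s (K i) x ^ q i) *
      ∏ i, (1 + (K i y / heatSemigroup s (K i) x - 1)) ^ q i := by
  rw [← Finset.prod_mul_distrib]
  refine Finset.prod_congr rfl fun i _ => ?_
  have hm := ((h i).heat s).apply_pos x
  rw [add_sub_cancel, ← Real.mul_rpow hm.le (div_nonneg ((h i).apply_pos y).le hm.le),
    mul_div_cancel₀ _ hm.ne']

lemma integral_div_heatSemigroup_sub_one (h : RegularPositive S c D K v) (s : ℝ) (x : E) :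
    ∫ w, (K (x + √s • w) / heatSemigroup s K x - 1) ∂(stdGaussian E) = 0 := by
  rw [integral_sub ((h.integrable_shift s x).div_const _) (integrable_const _), integral_div,
    ← heatSemigroup, div_self ((h.heat s).apply_pos x).ne']
  simp

lemma exists_heatSemigroup_prod_rpow_le (hq : ∀ i, 0 ≤ q i) {S : ι → Submodule ℝ E}
    (hS : ∀ u : ι → E, (∀ i, u i ∈ S i) → ‖∑ i, q i • u i‖ ^ 2 ≤ ∑ i, q i * ‖u i‖ ^ 2)
    {c D : ℝ} (hc : 0 ≤ c) (hD : 0 ≤ D) :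
    ∃ A, 0 ≤ A ∧ ∀ (K : ι → E → ℝ) (v : ι → E → E), (∀ i, RegularPositive (S i) c D (K i) (v i)) →
      ∀ s, 0 ≤ s → ∀ x, heatSemigroup s (fun y => ∏ i, K i y ^ q i) x ≤
        ∏ i, (heatSemigroup s (K i) x) ^ q i + A * √s ^ 3 := by
  obtain ⟨A, hA, hstep⟩ :=
    exists_integral_prod_one_add_rpow_le (E := E) hq (show 0 ≤ D / c by positivity)
  set α := ∫ w : E, heatWeight w ^ 3 ∂(stdGaussian E)
  have hα : 0 ≤ α :=
    integral_nonneg fun w => pow_nonneg (zero_le_one.trans (one_le_heatWeight w)) 3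
  refine ⟨(∏ i, D ^ q i) * (A * α), by positivity, fun K v hK s hs x => ?_⟩
  set m : ι → ℝ := fun i => heatSemigroup s (K i) x
  set u : ι → E := fun i => (√s / m i) • v i x
  set P := ∏ i, m i ^ q i
  have hP : 0 < P := prod_rpow_pos (fun i => (hK i).heat s) q x
  have hPD : P ≤ ∏ i, D ^ q i := prod_rpow_le (fun i => (hK i).heat s) hq x
  have hcov : ‖∑ i, q i • u i‖ ^ 2 - ∑ i, q i * ‖u i‖ ^ 2 ≤ 0 :=
    sub_nonpos.2 (hS u fun i => (S i).smul_mem _ ((hK i).mem x))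
  have hmain := hstep (fun i w => K i (x + √s • w) / m i - 1) u (fun w => √s * heatWeight w)
    (fun i => (((hK i).integrable_shift s x).div_const _).sub (integrable_const _))
    (fun i => (hK i).integral_div_heatSemigroup_sub_one s x)
    (by simpa only [mul_pow] using integrable_heatWeight_pow_three.const_mul (√s ^ 3))
    (fun w => mul_nonneg (Real.sqrt_nonneg s) (zero_le_one.trans (one_le_heatWeight w)))
    (fun i w => ((hK i).div_heatSemigroup_sub_one_mem s x _).1)
    (fun i w => ((hK i).div_heatSemigroup_sub_one_mem s x _).2)
    (fun i w => (hK i).abs_inner_gradient_le s x w)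
    (fun i w => (hK i).abs_div_sub_one_sub_inner_le hs x w)
  simp only [mul_pow, integral_const_mul] at hmain
  calc heatSemigroup s (fun y => ∏ i, K i y ^ q i) x
      = P * ∫ w, ∏ i, (1 + (K i (x + √s • w) / m i - 1)) ^ q i ∂(stdGaussian E) := by
        simp only [heatSemigroup, prod_rpow_eq_mul hK q s x (x + √s • _), integral_const_mul, P, m]
    _ ≤ P * (1 + A * (√s ^ 3 * α)) := mul_le_mul_of_nonneg_left (by linarith) hP.le
    _ = P + P * (A * (√s ^ 3 * α)) := by ring
    _ ≤ P + (∏ i, D ^ q i) * (A * (√s ^ 3 * α)) := by gcongr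
    _ = P + (∏ i, D ^ q i) * (A * α) * √s ^ 3 := by ring

lemma heatSemigroup_mul_prod_rpow_le (hq : ∀ i, 0 ≤ q i) {S : ι → Submodule ℝ E} {c D A δ : ℝ}
    (hδ : 0 ≤ δ)
    (hstep : ∀ (K : ι → E → ℝ) (v : ι → E → E),
      (∀ i, RegularPositive (S i) c D (K i) (v i)) → ∀ x,
        heatSemigroup δ (fun y => ∏ i, K i y ^ q i) x ≤ ∏ i, (heatSemigroup δ (K i) x) ^ q i + A)
    {K : ι → E → ℝ} {v : ι → E → E} (hK : ∀ i, RegularPositive (S i) c D (K i) (v i)) (j : ℕ)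
    (x : E) :
    heatSemigroup (j * δ) (fun y => ∏ i, K i y ^ q i) x ≤
      ∏ i, (heatSemigroup (j * δ) (K i) x) ^ q i + j * A := by
  induction j generalizing x with
  | zero => simp [heatSemigroup_zero]
  | succ j ih =>
    have hj : (0 : ℝ) ≤ j * δ := by positivity
    have htime : ((j + 1 : ℕ) : ℝ) * δ = δ + j * δ := by push_cast; ring
    have hKj := fun i => (hK i).heat (j * δ)
    have hU := continuous_prod_rpow hK q
    have hV := integrable_comp_add_smul (continuous_prod_rpow hKj q) (norm_prod_rpow_le hKj hq) δ x
    rw [htime, ← heatSemigroup_heatSemigroup hU (norm_prod_rpow_le hK hq) hδ hj]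
    simp_rw [← fun i => heatSemigroup_heatSemigroup (hK i).cont (hK i).norm_le hδ hj x]
    calc heatSemigroup δ (heatSemigroup (j * δ) fun y => ∏ i, K i y ^ q i) x
        ≤ ∫ w, (∏ i, heatSemigroup (j * δ) (K i) (x + √δ • w) ^ q i + j * A) ∂(stdGaussian E) :=
          integral_mono (integrable_comp_add_smul
              (continuous_heatSemigroup hU (norm_prod_rpow_le hK hq) _)
              (norm_heatSemigroup_le (norm_prod_rpow_le hK hq) _) δ x)
            (hV.add (integrable_const _)) fun w => ih (x + √δ • w)
      _ = heatSemigroup δ (fun y => ∏ i, heatSemigroup (j * δ) (K i) y ^ q i) x + j * A := by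
          rw [integral_add hV (integrable_const _)]
          simp [heatSemigroup]
      _ ≤ ∏ i, heatSemigroup δ (heatSemigroup (j * δ) (K i)) x ^ q i + (j + 1 : ℕ) * A := by
          push_cast
          linarith [hstep _ _ hKj x]

lemma integral_prod_rpow_le (hq : ∀ i, 0 ≤ q i) {S : ι → Submodule ℝ E}
    (hS : ∀ u : ι → E, (∀ i, u i ∈ S i) → ‖∑ i, q i • u i‖ ^ 2 ≤ ∑ i, q i * ‖u i‖ ^ 2)
    {c D : ℝ} (hc : 0 ≤ c) (hD : 0 ≤ D) {K : ι → E → ℝ} {v : ι → E → E}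
    (hK : ∀ i, RegularPositive (S i) c D (K i) (v i)) :
    ∫ w, ∏ i, K i w ^ q i ∂(stdGaussian E) ≤ ∏ i, (∫ w, K i w ∂(stdGaussian E)) ^ q i := by
  obtain ⟨A, -, hstep⟩ := exists_heatSemigroup_prod_rpow_le hq hS hc hD
  have hdiscrete (N : ℕ) : ∫ w, ∏ i, K i w ^ q i ∂(stdGaussian E) ≤
      ∏ i, (∫ w, K i w ∂(stdGaussian E)) ^ q i + A * √(1 / ((N : ℝ) + 1)) := by
    have hδ : (0 : ℝ) ≤ 1 / ((N : ℝ) + 1) := by positivity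
    have hiterate := heatSemigroup_mul_prod_rpow_le hq hδ
      (fun K v hK x => hstep K v hK _ hδ x) hK (N + 1) 0
    have htime : ((N + 1 : ℕ) : ℝ) * (1 / ((N : ℝ) + 1)) = 1 := by
      push_cast
      field_simp
    have herror : ((N + 1 : ℕ) : ℝ) * (A * √(1 / ((N : ℝ) + 1)) ^ 3) =
        A * √(1 / ((N : ℝ) + 1)) := by
      calc _ = ((N + 1 : ℕ) : ℝ) * (√(1 / ((N : ℝ) + 1)) ^ 2) * (A * √(1 / ((N : ℝ) + 1))) := by
            ring
        _ = A * √(1 / ((N : ℝ) + 1)) := by rw [Real.sq_sqrt hδ, htime, one_mul]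
    rw [htime, herror] at hiterate
    simpa [heatSemigroup] using hiterate
  have hlim : Tendsto (fun N : ℕ => ∏ i, (∫ w, K i w ∂(stdGaussian E)) ^ q i +
      A * √(1 / ((N : ℝ) + 1))) atTop
      (𝓝 (∏ i, (∫ w, K i w ∂(stdGaussian E)) ^ q i + A * √0)) :=
    (tendsto_one_div_add_atTop_nhds_zero_nat.sqrt.const_mul A).const_add _
  simpa using ge_of_tendsto' hlim hdiscrete

end RegularPositive

end GaussianJensen

/-! ### Smooth approximation -/

section SmoothApproximation

variable {G : Type*} [NormedAddCommGroup G] [NormedSpace ℝ G] {φ : G → ℝ}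

lemma exists_taylor_bound_of_hasCompactSupport (hφ : HasCompactSupport φ)
    (hφ' : ContDiff ℝ 2 φ) :
    ∃ D, (∀ x, |φ x| ≤ D) ∧ (∀ x, ‖fderiv ℝ φ x‖ ≤ D) ∧
      ∀ x y, |φ (x + y) - φ x - fderiv ℝ φ x y| ≤ D * ‖y‖ ^ 2 := by
  obtain ⟨D₀, hD₀⟩ := hφ.exists_bound_of_continuous hφ'.continuous
  obtain ⟨D₁, hD₁⟩ := (hφ.fderiv ℝ).exists_bound_of_continuous
    (hφ'.continuous_fderiv (by norm_num))
  obtain ⟨D₂, hlip⟩ := (hφ'.fderiv_right (m := 1) (by norm_num)).lipschitzWith_of_hasCompactSupport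
    (hφ.fderiv ℝ) (by norm_num)
  have : (0 : ℝ) ≤ D₂ := D₂.2
  have hremainder (x y : G) : |φ (x + y) - φ x - fderiv ℝ φ x y| ≤ D₂ * ‖y‖ ^ 2 := by
    have hmvt := (convex_closedBall x ‖y‖).norm_image_sub_le_of_norm_hasFDerivWithin_le'
      (f := φ) (f' := fderiv ℝ φ) (φ := fderiv ℝ φ x) (C := D₂ * ‖y‖) (x := x) (y := x + y)
      (fun z _ => (hφ'.differentiable (by norm_num) z).hasFDerivAt.hasFDerivWithinAt)
      (fun z hz => by
        rw [← dist_eq_norm]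
        exact (hlip.dist_le_mul z x).trans (by gcongr; exact hz))
      (by simp) (by simp)
    rwa [add_sub_cancel_left, Real.norm_eq_abs, mul_assoc, ← sq] at hmvt
  refine ⟨max D₀ (max D₁ D₂), fun x => (hD₀ x).trans (le_max_left _ _),
    fun x => (hD₁ x).trans (by simp), fun x y => (hremainder x y).trans ?_⟩
  gcongr
  simp

lemma exists_regularPositive_comp {E : Type*} [NormedAddCommGroup E] [InnerProductSpace ℝ E]
    [FiniteDimensional ℝ E] (hφ : HasCompactSupport φ) (hφ' : ContDiff ℝ 2 φ)
    (hφ0 : ∀ x, 0 ≤ φ x) {c : ℝ} (hc : 0 < c) (L : E →L[ℝ] G) :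
    ∃ D v, RegularPositive (L.ker)ᗮ c D (fun x => c + φ (L x)) v := by
  obtain ⟨D, hvalue, hderiv, htaylor⟩ := exists_taylor_bound_of_hasCompactSupport hφ hφ'
  have hD : 0 ≤ D := (abs_nonneg _).trans (hvalue 0)
  set v : E → E := fun x =>
    (InnerProductSpace.toDual ℝ E).symm ((fderiv ℝ φ (L x)).comp L) with hv
  have hinner (x y : E) : inner ℝ (v x) y = fderiv ℝ φ (L x) (L y) := by
    rw [hv, InnerProductSpace.toDual_symm_apply]
    rfl
  set D' := c + D + D * ‖L‖ + D * ‖L‖ ^ 2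
  have hL : 0 ≤ D * ‖L‖ := by positivity
  have hL2 : 0 ≤ D * ‖L‖ ^ 2 := by positivity
  refine ⟨D', v, hc, ?_, ?_, fun x => by linarith [hφ0 (L x)],
    fun x => by linarith [(le_abs_self _).trans (hvalue (L x))], fun x => ?_, fun x => ?_,
    fun x y => ?_⟩
  · have := hφ'.continuous
    fun_prop
  · exact (LinearIsometryEquiv.continuous _).comp
      (((hφ'.continuous_fderiv (by norm_num)).comp L.continuous).clm_comp continuous_const)
  · rw [Submodule.mem_orthogonal']
    intro y (hy : L y = 0)
    rw [hinner, hy, map_zero]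
  · rw [hv, LinearIsometryEquiv.norm_map]
    have : ‖fderiv ℝ φ (L x)‖ * ‖L‖ ≤ D * ‖L‖ := by gcongr; exact hderiv _
    linarith [ContinuousLinearMap.opNorm_comp_le (fderiv ℝ φ (L x)) L]
  · rw [hinner, map_add, add_sub_add_left_eq_sub]
    calc |φ (L x + L y) - φ (L x) - fderiv ℝ φ (L x) (L y)|
        ≤ D * ‖L y‖ ^ 2 := htaylor _ _
      _ ≤ D * (‖L‖ * ‖y‖) ^ 2 := by gcongr; exact L.le_opNorm y
      _ = (D * ‖L‖ ^ 2) * ‖y‖ ^ 2 := by ring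
      _ ≤ D' * ‖y‖ ^ 2 := by gcongr; linarith

lemma abs_sub_sqrt_sq_add_sq_le {a b c : ℝ} (ha : 0 ≤ a) (hc : 0 ≤ c) :
    |a - √(b ^ 2 + c ^ 2)| ≤ |a - b| + c := by
  have hlower : |b| ≤ √(b ^ 2 + c ^ 2) := Real.abs_le_sqrt (by nlinarith)
  have hupper : √(b ^ 2 + c ^ 2) ≤ |b| + c := by
    rw [Real.sqrt_le_left (by positivity)]
    nlinarith [sq_abs b, mul_nonneg (abs_nonneg b) hc]
  have habs : |a - abs b| ≤ |a - b| := by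
    simpa [abs_of_nonneg ha] using abs_abs_sub_abs_le_abs_sub a b
  rw [abs_le] at habs ⊢
  constructor <;> linarith

variable [FiniteDimensional ℝ G] [MeasurableSpace G] [BorelSpace G]

lemma exists_contDiff_hasCompactSupport_approx {ν : Measure G} [IsProbabilityMeasure ν]
    {f : G → ℝ} (hf : Integrable f ν) (hf0 : ∀ y, 0 ≤ f y) {c : ℝ} (hc : 0 < c) :
    ∃ φ : G → ℝ, HasCompactSupport φ ∧ ContDiff ℝ 2 φ ∧ (∀ x, 0 ≤ φ x) ∧
      ∫⁻ y, ‖c + φ y - f y‖ₑ ∂ν ≤ ENNReal.ofReal (2 * c) := by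
  obtain ⟨g, hgsupp, hgsmooth, hg⟩ :=
    (memLp_one_iff_integrable.2 hf).exist_eLpNorm_sub_le (by simp) le_rfl hc
  -- `√(g² + c²) - c` is a smooth nonnegative substitute for `|g|` which vanishes where `g` does
  refine ⟨fun y => √(g y ^ 2 + c ^ 2) - c, hgsupp.mono fun y hy => ?_, ?_, fun y => ?_, ?_⟩
  · contrapose! hy
    simp [Function.notMem_support.1 hy, Real.sqrt_sq hc.le]
  · refine ContDiff.sub (ContDiff.sqrt ?_ fun y => by positivity) contDiff_const
    exact ((hgsmooth.of_le (WithTop.coe_le_coe.2 le_top)).pow 2).add contDiff_const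
  · exact sub_nonneg.2 (Real.le_sqrt_of_sq_le (by nlinarith [sq_nonneg (g y)]))
  · calc ∫⁻ y, ‖c + (√(g y ^ 2 + c ^ 2) - c) - f y‖ₑ ∂ν
        ≤ ∫⁻ y, (‖f y - g y‖ₑ + ENNReal.ofReal c) ∂ν := by
          refine lintegral_mono fun y => ?_
          rw [← ofReal_norm, ← ofReal_norm, ← ENNReal.ofReal_add (norm_nonneg _) hc.le,
            add_sub_cancel, norm_sub_rev]
          exact ENNReal.ofReal_le_ofReal (abs_sub_sqrt_sq_add_sq_le (hf0 y) hc.le)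
      _ = eLpNorm (f - g) 1 ν + ENNReal.ofReal c := by
          rw [lintegral_add_right _ measurable_const, eLpNorm_one_eq_lintegral_enorm]
          simp
      _ ≤ ENNReal.ofReal c + ENNReal.ofReal c := by gcongr
      _ = ENNReal.ofReal (2 * c) := by rw [← ENNReal.ofReal_add hc.le hc.le, two_mul]

lemma ae_tendsto_of_tsum_lintegral_enorm_sub_ne_top {α : Type*} [MeasurableSpace α]
    {ν : Measure α} {F : ℕ → α → ℝ} {f : α → ℝ} (hF : ∀ n, AEStronglyMeasurable (F n) ν)
    (hf : AEStronglyMeasurable f ν) (hsum : ∑' n, ∫⁻ y, ‖F n y - f y‖ₑ ∂ν ≠ ⊤) :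
    ∀ᵐ y ∂ν, Tendsto (fun n => F n y) atTop (𝓝 (f y)) := by
  have hmeas (n : ℕ) : AEMeasurable (fun y => ‖F n y - f y‖ₑ) ν := ((hF n).sub hf).enorm
  rw [← lintegral_tsum hmeas] at hsum
  filter_upwards [ae_lt_top' (AEMeasurable.tsum hmeas) hsum] with y hy
  rw [tendsto_iff_edist_tendsto_0]
  simpa only [edist_eq_enorm_sub] using ENNReal.tendsto_atTop_zero_of_tsum_ne_top hy.ne

lemma exists_contDiff_hasCompactSupport_seq_tendsto {ν : Measure G} [IsProbabilityMeasure ν]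
    {f : G → ℝ} (hf : Integrable f ν) (hf0 : ∀ y, 0 ≤ f y) :
    ∃ φ : ℕ → G → ℝ, (∀ n, HasCompactSupport (φ n)) ∧ (∀ n, ContDiff ℝ 2 (φ n)) ∧
      (∀ n x, 0 ≤ φ n x) ∧
      (∀ᵐ y ∂ν, Tendsto (fun n => (1 / 2) ^ n + φ n y) atTop (𝓝 (f y))) ∧
      Tendsto (fun n => ∫ y, ((1 / 2) ^ n + φ n y) ∂ν) atTop (𝓝 (∫ y, f y ∂ν)) := by
  choose φ hsupp hsmooth hnonneg herror using fun n : ℕ =>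
    exists_contDiff_hasCompactSupport_approx hf hf0 (c := (1 / 2) ^ n) (by positivity)
  have hsum : ∑' n, ∫⁻ y, ‖(1 / 2) ^ n + φ n y - f y‖ₑ ∂ν ≠ ⊤ := by
    refine ne_top_of_le_ne_top ?_ (ENNReal.tsum_le_tsum herror)
    rw [← ENNReal.ofReal_tsum_of_nonneg (fun n => by positivity)
      (summable_geometric_two.mul_left 2)]
    exact ENNReal.ofReal_ne_top
  have hint (n : ℕ) : Integrable (fun y => (1 / 2) ^ n + φ n y) ν :=
    (integrable_const _).add ((hsmooth n).continuous.integrable_of_hasCompactSupport (hsupp n))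
  exact ⟨φ, hsupp, hsmooth, hnonneg,
    ae_tendsto_of_tsum_lintegral_enorm_sub_ne_top (fun n => (hint n).aestronglyMeasurable)
      hf.aestronglyMeasurable hsum,
    tendsto_integral_of_L1 f hf.aestronglyMeasurable (Eventually.of_forall hint)
      (ENNReal.tendsto_atTop_zero_of_tsum_ne_top hsum)⟩

end SmoothApproximation

section GaussianJensenLinear

variable {ι : Type*} [Fintype ι] {q : ι → ℝ}
  {E : Type*} [NormedAddCommGroup E] [InnerProductSpace ℝ E] [FiniteDimensional ℝ E]
  [MeasurableSpace E] [BorelSpace E]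
  {G : ι → Type*} [∀ i, NormedAddCommGroup (G i)] [∀ i, NormedSpace ℝ (G i)]

lemma lintegral_ofReal_prod_rpow_le_of_hasCompactSupport (hq : ∀ i, 0 ≤ q i)
    {L : ∀ i, E →L[ℝ] G i}
    (hL : ∀ u : ι → E, (∀ i, u i ∈ ((L i).ker)ᗮ) →
      ‖∑ i, q i • u i‖ ^ 2 ≤ ∑ i, q i * ‖u i‖ ^ 2)
    {φ : ∀ i, G i → ℝ} (hφ : ∀ i, HasCompactSupport (φ i)) (hφ' : ∀ i, ContDiff ℝ 2 (φ i))
    (hφ0 : ∀ i x, 0 ≤ φ i x) {c : ℝ} (hc : 0 < c) :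
    ∫⁻ w, ENNReal.ofReal (∏ i, (c + φ i (L i w)) ^ q i) ∂(stdGaussian E) ≤
      ENNReal.ofReal (∏ i, (∫ w, (c + φ i (L i w)) ∂(stdGaussian E)) ^ q i) := by
  choose D v hreg using fun i => exists_regularPositive_comp (hφ i) (hφ' i) (hφ0 i) hc (L i)
  have hreg' i := (hreg i).mono
    (Finset.single_le_sum (fun i _ => (hreg i).nonneg) (Finset.mem_univ i))
  rw [← ofReal_integral_eq_lintegral_ofReal
    (Integrable.of_bound
      (RegularPositive.continuous_prod_rpow hreg' q).aestronglyMeasurable _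
      (ae_of_all _ (RegularPositive.norm_prod_rpow_le hreg' hq)))
    (ae_of_all _ fun w => (RegularPositive.prod_rpow_pos hreg' q w).le)]
  exact ENNReal.ofReal_le_ofReal (RegularPositive.integral_prod_rpow_le hq hL hc.le
    (Finset.sum_nonneg fun i _ => (hreg i).nonneg) hreg')

variable [∀ i, FiniteDimensional ℝ (G i)] [∀ i, MeasurableSpace (G i)] [∀ i, BorelSpace (G i)]

lemma lintegral_ofReal_prod_rpow_le_of_stdGaussian (hq : ∀ i, 0 ≤ q i) {L : ∀ i, E →L[ℝ] G i}
    (hL : ∀ u : ι → E, (∀ i, u i ∈ ((L i).ker)ᗮ) →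
      ‖∑ i, q i • u i‖ ^ 2 ≤ ∑ i, q i * ‖u i‖ ^ 2)
    {f : ∀ i, G i → ℝ} (hf : ∀ i, Measurable (f i)) (hf0 : ∀ i y, 0 ≤ f i y)
    (hfint : ∀ i, Integrable (fun w => f i (L i w)) (stdGaussian E)) :
    ∫⁻ w, ENNReal.ofReal (∏ i, f i (L i w) ^ q i) ∂(stdGaussian E) ≤
      ENNReal.ofReal (∏ i, (∫ w, f i (L i w) ∂(stdGaussian E)) ^ q i) := by
  have hLmeas i : AEMeasurable (L i) (stdGaussian E) := (L i).continuous.aemeasurable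
  have hprob (i) : IsProbabilityMeasure ((stdGaussian E).map (L i)) :=
    Measure.isProbabilityMeasure_map (hLmeas i)
  choose φ hsupp hsmooth hnonneg hae hint using fun i =>
    exists_contDiff_hasCompactSupport_seq_tendsto
      ((integrable_map_measure (hf i).aestronglyMeasurable (hLmeas i)).2 (hfint i)) (hf0 i)
  have hcont i n : Continuous fun y => (1 / 2) ^ n + φ i n y :=
    continuous_const.add (hsmooth i n).continuous
  have hae' : ∀ᵐ w ∂(stdGaussian E), ∀ i,
      Tendsto (fun n => (1 / 2) ^ n + φ i n (L i w)) atTop (𝓝 (f i (L i w))) :=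
    ae_all_iff.2 fun i => ae_of_ae_map (hLmeas i) (hae i)
  have hint' i : Tendsto (fun n => ∫ w, ((1 / 2) ^ n + φ i n (L i w)) ∂(stdGaussian E)) atTop
      (𝓝 (∫ w, f i (L i w) ∂(stdGaussian E))) := by
    have := hint i
    rw [integral_map (hLmeas i) (hf i).aestronglyMeasurable] at this
    refine this.congr fun n => integral_map (hLmeas i) (hcont i n).aestronglyMeasurable
  calc ∫⁻ w, ENNReal.ofReal (∏ i, f i (L i w) ^ q i) ∂(stdGaussian E)
      = ∫⁻ w, liminf (fun n : ℕ => ENNReal.ofReal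
          (∏ i, ((1 / 2) ^ n + φ i n (L i w)) ^ q i)) atTop ∂(stdGaussian E) := by
        refine lintegral_congr_ae ?_
        filter_upwards [hae'] with w hw
        exact (ENNReal.tendsto_ofReal (tendsto_finsetProd _ fun i _ =>
          (hw i).rpow_const (Or.inr (hq i)))).liminf_eq.symm
    _ ≤ liminf (fun n : ℕ => ∫⁻ w, ENNReal.ofReal
          (∏ i, ((1 / 2) ^ n + φ i n (L i w)) ^ q i) ∂(stdGaussian E)) atTop :=
        lintegral_liminf_le fun n => (Finset.measurable_prod _ fun i _ =>
          ((hcont i n).comp (L i).continuous).measurable.pow_const _).ennreal_ofReal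
    _ ≤ liminf (fun n : ℕ => ENNReal.ofReal (∏ i, (∫ w, ((1 / 2) ^ n + φ i n (L i w))
          ∂(stdGaussian E)) ^ q i)) atTop :=
        liminf_le_liminf (Eventually.of_forall fun n =>
          lintegral_ofReal_prod_rpow_le_of_hasCompactSupport hq hL (hsupp · n) (hsmooth · n)
            (hnonneg · n) (by positivity))
    _ = ENNReal.ofReal (∏ i, (∫ w, f i (L i w) ∂(stdGaussian E)) ^ q i) :=
        (ENNReal.tendsto_ofReal (tendsto_finsetProd _ fun i _ =>
          (hint' i).rpow_const (Or.inr (hq i)))).liminf_eq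

lemma ofReal_prod_rpow (hq : ∀ i, 0 ≤ q i) {a : ι → ℝ} (ha : ∀ i, 0 ≤ a i) :
    ENNReal.ofReal (∏ i, a i ^ q i) = ∏ i, ENNReal.ofReal (a i) ^ q i := by
  rw [ENNReal.ofReal_prod_of_nonneg fun i _ => Real.rpow_nonneg (ha i) _]
  exact Finset.prod_congr rfl fun i _ => (ENNReal.ofReal_rpow_of_nonneg (ha i) (hq i)).symm

lemma lintegral_prod_rpow_le_of_stdGaussian (hq : ∀ i, 0 ≤ q i) {L : ∀ i, E →L[ℝ] G i}
    (hL : ∀ u : ι → E, (∀ i, u i ∈ ((L i).ker)ᗮ) →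
      ‖∑ i, q i • u i‖ ^ 2 ≤ ∑ i, q i * ‖u i‖ ^ 2)
    {k : ∀ i, G i → ℝ≥0∞} (hk : ∀ i, Measurable (k i))
    (hfin : ∀ i, ∫⁻ w, k i (L i w) ∂(stdGaussian E) ≠ ⊤) :
    ∫⁻ w, ∏ i, k i (L i w) ^ q i ∂(stdGaussian E) ≤
      ∏ i, (∫⁻ w, k i (L i w) ∂(stdGaussian E)) ^ q i := by
  have hmeas i : Measurable fun w => k i (L i w) := (hk i).comp (L i).continuous.measurable
  have hae i : ∀ᵐ w ∂(stdGaussian E), ENNReal.ofReal (k i (L i w)).toReal = k i (L i w) := by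
    filter_upwards [ae_lt_top (hmeas i) (hfin i)] with w hw using ENNReal.ofReal_toReal hw.ne
  have hint i := integrable_toReal_of_lintegral_ne_top (hmeas i).aemeasurable (hfin i)
  have hreal := lintegral_ofReal_prod_rpow_le_of_stdGaussian hq hL
    (fun i => (hk i).ennreal_toReal) (fun i y => ENNReal.toReal_nonneg) hint
  simp_rw [ofReal_prod_rpow hq fun _ => ENNReal.toReal_nonneg] at hreal
  rw [ofReal_prod_rpow hq fun i => integral_nonneg fun w => ENNReal.toReal_nonneg] at hreal
  convert hreal using 1
  · refine lintegral_congr_ae ?_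
    filter_upwards [ae_all_iff.2 hae] with w hw
    simp_rw [hw]
  · refine Finset.prod_congr rfl fun i _ => ?_
    rw [ofReal_integral_eq_lintegral_ofReal (hint i) (ae_of_all _ fun w => ENNReal.toReal_nonneg),
      lintegral_congr_ae (hae i)]

end GaussianJensenLinear

/-! ### Linear images of the standard Gaussian measure -/

section GaussianLaws

section EuclideanSpace

variable {m κ : Type*} [Fintype m] [Fintype κ]

lemma norm_toLp_sq (v : κ → ℝ) : ‖WithLp.toLp 2 v‖ ^ 2 = v ⬝ᵥ v := by
  rw [EuclideanSpace.real_norm_sq_eq]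
  simp [dotProduct, sq]

lemma inner_toLp_mulVec (T : Matrix m κ ℝ) (w : κ → ℝ) (t : m → ℝ) :
    inner ℝ (WithLp.toLp 2 (T *ᵥ w)) (WithLp.toLp 2 t) =
      inner ℝ (WithLp.toLp 2 w) (WithLp.toLp 2 (Tᵀ *ᵥ t)) := by
  simp only [EuclideanSpace.inner_eq_star_dotProduct, star_trivial]
  rw [dotProduct_mulVec, mulVec_transpose]

lemma transpose_mulVec_dotProduct_self (T : Matrix m κ ℝ) (t : m → ℝ) :
    (Tᵀ *ᵥ t) ⬝ᵥ (Tᵀ *ᵥ t) = t ⬝ᵥ (T * Tᵀ) *ᵥ t := by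
  rw [← mulVec_mulVec, dotProduct_mulVec t, ← mulVec_transpose]

lemma norm_toLp_transpose_mulVec_sq (T : Matrix m κ ℝ) (t : m → ℝ) :
    ‖WithLp.toLp 2 (Tᵀ *ᵥ t)‖ ^ 2 = t ⬝ᵥ (T * Tᵀ) *ᵥ t := by
  rw [norm_toLp_sq, transpose_mulVec_dotProduct_self]

lemma charFun_stdGaussian_map_mulVec (T : Matrix m κ ℝ) (t : EuclideanSpace ℝ m) :
    charFun ((stdGaussian (EuclideanSpace ℝ κ)).map fun w => WithLp.toLp 2 (T *ᵥ w.ofLp)) t =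
      Complex.exp (-((t.ofLp ⬝ᵥ (T * Tᵀ) *ᵥ t.ofLp : ℝ) : ℂ) / 2) := by
  rw [charFun_apply, integral_map (by fun_prop) (by fun_prop)]
  have hadjoint (w : EuclideanSpace ℝ κ) : inner ℝ (WithLp.toLp 2 (T *ᵥ w.ofLp)) t =
      inner ℝ w (WithLp.toLp 2 (Tᵀ *ᵥ t.ofLp)) := inner_toLp_mulVec T w.ofLp t.ofLp
  simp_rw [hadjoint]
  rw [← charFun_apply, charFun_stdGaussian, ← norm_toLp_transpose_mulVec_sq, Complex.ofReal_pow]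

lemma stdGaussian_map_mulVec_eq_of_mul_transpose_eq {l κ' : Type*} [Finite l] [Fintype κ']
    {T : Matrix l κ ℝ} {S : Matrix l κ' ℝ} (h : T * Tᵀ = S * Sᵀ) :
    (stdGaussian (EuclideanSpace ℝ κ)).map (fun w => WithLp.toLp 2 (T *ᵥ w.ofLp)) =
      (stdGaussian (EuclideanSpace ℝ κ')).map fun w => WithLp.toLp 2 (S *ᵥ w.ofLp) := by
  have := Fintype.ofFinite l
  have := Measure.isProbabilityMeasure_map (μ := stdGaussian (EuclideanSpace ℝ κ))
    (f := fun w => WithLp.toLp 2 (T *ᵥ w.ofLp)) (by fun_prop)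
  have := Measure.isProbabilityMeasure_map (μ := stdGaussian (EuclideanSpace ℝ κ'))
    (f := fun w => WithLp.toLp 2 (S *ᵥ w.ofLp)) (by fun_prop)
  refine Measure.ext_of_charFun (funext fun t => ?_)
  rw [charFun_stdGaussian_map_mulVec, charFun_stdGaussian_map_mulVec, h]

lemma lintegral_stdGaussian_mulVec_eq_of_mul_transpose_eq {l κ' : Type*} [Finite l]
    [Fintype κ'] {T : Matrix l κ ℝ} {S : Matrix l κ' ℝ} (h : T * Tᵀ = S * Sᵀ)
    {ψ : (l → ℝ) → ℝ≥0∞} (hψ : Measurable ψ) :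
    ∫⁻ w, ψ (T *ᵥ w.ofLp) ∂(stdGaussian (EuclideanSpace ℝ κ)) =
      ∫⁻ w, ψ (S *ᵥ w.ofLp) ∂(stdGaussian (EuclideanSpace ℝ κ')) := by
  have := Fintype.ofFinite l
  have hT := lintegral_map (μ := stdGaussian (EuclideanSpace ℝ κ))
    (f := fun x : EuclideanSpace ℝ l => ψ x.ofLp) (g := fun w => WithLp.toLp 2 (T *ᵥ w.ofLp))
    (by fun_prop) (by fun_prop)
  rw [← hT, stdGaussian_map_mulVec_eq_of_mul_transpose_eq h,
    lintegral_map (by fun_prop) (by fun_prop)]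

end EuclideanSpace

section Scaling

variable {E : Type*} [NormedAddCommGroup E] [InnerProductSpace ℝ E] [FiniteDimensional ℝ E]
  [MeasurableSpace E] [BorelSpace E]

lemma integrable_exp_neg_pi_mul_norm_sq :
    Integrable fun x : E => Real.exp (-Real.pi * ‖x‖ ^ 2) := by
  have hgauss := (GaussianFourier.integrable_cexp_neg_mul_sq_norm_add (V := E)
    (b := (Real.pi : ℂ)) (by simpa using Real.pi_pos) 0 0).norm
  refine hgauss.congr (ae_of_all _ fun x => ?_)
  simp [Complex.norm_exp, ← Complex.ofReal_pow]

lemma charFun_withDensity_exp_neg_pi_mul_norm_sq (t : E) :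
    charFun ((volume : Measure E).withDensity
        fun x => ENNReal.ofReal (Real.exp (-Real.pi * ‖x‖ ^ 2))) t =
      Complex.exp (-‖t‖ ^ 2 / (4 * Real.pi)) := by
  rw [charFun_apply, integral_withDensity_eq_integral_toReal_smul (by fun_prop) (by simp)]
  have hintegrand (x : E) : (ENNReal.ofReal (Real.exp (-Real.pi * ‖x‖ ^ 2))).toReal •
        Complex.exp ((inner ℝ x t : ℝ) * Complex.I) =
      Complex.exp (-(Real.pi : ℂ) * ‖x‖ ^ 2 + Complex.I * (inner ℝ t x : ℝ)) := by
    rw [ENNReal.toReal_ofReal (Real.exp_pos _).le, Complex.real_smul, Complex.ofReal_exp,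
      ← Complex.exp_add, real_inner_comm]
    push_cast
    ring_nf
  simp_rw [hintegrand]
  rw [GaussianFourier.integral_cexp_neg_mul_sq_norm_add (by simpa using Real.pi_pos),
    div_self (by exact_mod_cast Real.pi_ne_zero), Complex.one_cpow, one_mul, Complex.I_sq,
    neg_one_mul]

lemma stdGaussian_map_smul_eq_withDensity :
    (stdGaussian E).map (fun w => (√(2 * Real.pi))⁻¹ • w) =
      volume.withDensity fun x => ENNReal.ofReal (Real.exp (-Real.pi * ‖x‖ ^ 2)) := by
  have hfinite := isFiniteMeasure_withDensity_ofReal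
    (integrable_exp_neg_pi_mul_norm_sq (E := E)).hasFiniteIntegral
  refine Measure.ext_of_charFun (funext fun t => ?_)
  rw [charFun_map_smul, charFun_stdGaussian, charFun_withDensity_exp_neg_pi_mul_norm_sq]
  congr 1
  rw [norm_smul, Real.norm_of_nonneg (by positivity), ← Complex.ofReal_pow, mul_pow, inv_pow,
    Real.sq_sqrt (by positivity)]
  push_cast
  field_simp
  ring

end Scaling

open scoped MatrixOrder Matrix.Norms.L2Operator in
lemma exists_eq_transpose_mul_self {κ : Type*} [Fintype κ] {A : Matrix κ κ ℝ}
    (hA : A.PosSemidef) : ∃ F : Matrix κ κ ℝ, A = Fᵀ * F := by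
  classical
  obtain ⟨F, hF⟩ := CStarAlgebra.nonneg_iff_eq_star_mul_self.mp hA.nonneg
  exact ⟨F, by rw [hF, star_eq_conjTranspose, conjTranspose_eq_transpose_of_trivial]⟩

lemma lintegral_comp_mulVec {κ : Type*} [Fintype κ] [DecidableEq κ] {F : Matrix κ κ ℝ}
    (hF : F.det ≠ 0) {H : (κ → ℝ) → ℝ≥0∞} (hH : Measurable H) :
    ENNReal.ofReal |F.det| * ∫⁻ y, H (F *ᵥ y) = ∫⁻ x, H x := by
  have hmap : ∫⁻ x, H x ∂((volume : Measure (κ → ℝ)).map (toLin' F)) = ∫⁻ y, H (F *ᵥ y) :=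
    lintegral_map hH (LinearMap.continuous_of_finiteDimensional _).measurable
  rw [← hmap, Real.map_matrix_volume_pi_eq_smul_volume_pi hF, lintegral_smul_measure, smul_eq_mul,
    ← mul_assoc, ← ENNReal.ofReal_mul (abs_nonneg _), ← abs_mul, mul_inv_cancel₀ hF, abs_one,
    ENNReal.ofReal_one, one_mul]

lemma lintegral_stdGaussian_smul {κ : Type*} [Fintype κ] {φ : (κ → ℝ) → ℝ≥0∞}
    (hφ : Measurable φ) :
    ∫⁻ w, φ ((√(2 * Real.pi))⁻¹ • w.ofLp) ∂(stdGaussian (EuclideanSpace ℝ κ)) =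
      ∫⁻ x, φ x * ENNReal.ofReal (Real.exp (-Real.pi * (x ⬝ᵥ x))) := by
  calc ∫⁻ w, φ ((√(2 * Real.pi))⁻¹ • w.ofLp) ∂(stdGaussian (EuclideanSpace ℝ κ))
      = ∫⁻ w : EuclideanSpace ℝ κ, φ w.ofLp ∂(stdGaussian (EuclideanSpace ℝ κ)).map
          (fun w => (√(2 * Real.pi))⁻¹ • w) := by
        rw [lintegral_map (by fun_prop) (by fun_prop)]
        rfl
    _ = ∫⁻ w : EuclideanSpace ℝ κ,
          φ w.ofLp * ENNReal.ofReal (Real.exp (-Real.pi * (w.ofLp ⬝ᵥ w.ofLp))) := by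
        rw [stdGaussian_map_smul_eq_withDensity,
          lintegral_withDensity_eq_lintegral_mul _ (by fun_prop) (by fun_prop)]
        simp only [Pi.mul_apply, mul_comm, ← norm_toLp_sq]
    _ = ∫⁻ x, φ x * ENNReal.ofReal (Real.exp (-Real.pi * (x ⬝ᵥ x))) :=
        ((PiLp.volume_preserving_toLp κ).lintegral_comp_emb
          (MeasurableEquiv.toLp 2 (κ → ℝ)).measurableEmbedding _).symm

lemma lintegral_stdGaussian_smul_mulVec {κ : Type*} [Fintype κ] {k : ℕ}
    {A : Matrix (Fin k) (Fin k) ℝ} (hA : A.PosDef) {T : Matrix (Fin k) κ ℝ} (hT : T * Tᵀ = A⁻¹)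
    {φ : (Fin k → ℝ) → ℝ≥0∞} (hφ : Measurable φ) :
    ∫⁻ w, φ ((√(2 * Real.pi))⁻¹ • (T *ᵥ w.ofLp)) ∂(stdGaussian (EuclideanSpace ℝ κ)) =
      ENNReal.ofReal (√A.det) * ∫⁻ y, φ y * ENNReal.ofReal (gaussFn A y) := by
  obtain ⟨F, rfl⟩ := exists_eq_transpose_mul_self hA.posSemidef
  have hdet : √(Fᵀ * F).det = |F.det| := by
    rw [det_mul, det_transpose, Real.sqrt_mul_self_eq_abs]
  have hF : F.det ≠ 0 := by
    simpa [det_mul] using hA.det_pos.ne'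
  have hT' : T * Tᵀ = F⁻¹ * F⁻¹ᵀ := by rw [hT, Matrix.mul_inv_rev, transpose_nonsing_inv]
  have hmeas : Measurable fun x : Fin k → ℝ => x ⬝ᵥ x := by unfold dotProduct; fun_prop
  calc ∫⁻ w, φ ((√(2 * Real.pi))⁻¹ • (T *ᵥ w.ofLp)) ∂(stdGaussian (EuclideanSpace ℝ κ))
      = ∫⁻ w, φ ((√(2 * Real.pi))⁻¹ • (F⁻¹ *ᵥ w.ofLp))
          ∂(stdGaussian (EuclideanSpace ℝ (Fin k))) :=
        lintegral_stdGaussian_mulVec_eq_of_mul_transpose_eq hT'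
          (ψ := fun x => φ ((√(2 * Real.pi))⁻¹ • x)) (by fun_prop)
    _ = ∫⁻ x, φ (F⁻¹ *ᵥ x) * ENNReal.ofReal (Real.exp (-Real.pi * (x ⬝ᵥ x))) := by
        simp_rw [← mulVec_smul]
        exact lintegral_stdGaussian_smul (φ := fun x => φ (F⁻¹ *ᵥ x)) (by fun_prop)
    _ = ENNReal.ofReal (√(Fᵀ * F).det) *
          ∫⁻ y, φ y * ENNReal.ofReal (gaussFn (Fᵀ * F) y) := by
        rw [← lintegral_comp_mulVec hF (by fun_prop), hdet]
        refine congrArg _ (lintegral_congr fun y => ?_)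
        rw [gaussFn, mulVec_mulVec, nonsing_inv_mul _ hF.isUnit, one_mulVec, ← mulVec_mulVec,
          mulVec_transpose, ← dotProduct_mulVec]

end GaussianLaws

section GaussianJensenMatrix

variable {κ m : Type*} [Fintype κ] [Fintype m]

lemma exists_eq_transpose_mulVec_of_mem_orthogonal_ker [DecidableEq κ] {T : Matrix m κ ℝ}
    {u : EuclideanSpace ℝ κ}
    (hu : u ∈ ((toEuclideanLin T).toContinuousLinearMap.ker)ᗮ) :
    ∃ w : m → ℝ, u = WithLp.toLp 2 (Tᵀ *ᵥ w) := by
  rw [ContinuousLinearMap.orthogonal_ker,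
    (Submodule.closed_of_finiteDimensional _).submodule_topologicalClosure_eq] at hu
  obtain ⟨y, rfl⟩ := hu
  refine ⟨y.ofLp, ext_inner_right ℝ fun z => ?_⟩
  refine (ContinuousLinearMap.adjoint_inner_left _ z y).trans ?_
  rw [real_inner_comm, real_inner_comm z]
  exact inner_toLp_mulVec T z.ofLp y.ofLp

lemma lintegral_prod_rpow_le_of_mulVec {ι : Type*} [Fintype ι] {m : ι → Type*}
    [∀ i, Fintype (m i)] {q : ι → ℝ} (hq : ∀ i, 0 ≤ q i) {T : ∀ i, Matrix (m i) κ ℝ}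
    (hT : ∀ w : ∀ i, m i → ℝ,
      (∑ i, q i • ((T i)ᵀ *ᵥ w i)) ⬝ᵥ (∑ i, q i • ((T i)ᵀ *ᵥ w i)) ≤
        ∑ i, q i * (((T i)ᵀ *ᵥ w i) ⬝ᵥ ((T i)ᵀ *ᵥ w i)))
    {h : ∀ i, (m i → ℝ) → ℝ≥0∞} (hh : ∀ i, Measurable (h i))
    (hfin : ∀ i, ∫⁻ w, h i (T i *ᵥ w.ofLp) ∂(stdGaussian (EuclideanSpace ℝ κ)) ≠ ⊤) :
    ∫⁻ w, ∏ i, h i (T i *ᵥ w.ofLp) ^ q i ∂(stdGaussian (EuclideanSpace ℝ κ)) ≤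
      ∏ i, (∫⁻ w, h i (T i *ᵥ w.ofLp) ∂(stdGaussian (EuclideanSpace ℝ κ))) ^ q i := by
  classical
  refine lintegral_prod_rpow_le_of_stdGaussian hq
    (L := fun i => (toEuclideanLin (T i)).toContinuousLinearMap)
    (k := fun i x => h i x.ofLp) (fun u hu => ?_) (fun i => by fun_prop) hfin
  choose w hw using fun i => exists_eq_transpose_mulVec_of_mem_orthogonal_ker (hu i)
  have hsum : ∑ i, q i • u i = WithLp.toLp 2 (∑ i, q i • ((T i)ᵀ *ᵥ w i)) := by simp [hw]
  rw [hsum, norm_toLp_sq]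
  simpa only [hw, norm_toLp_sq] using hT w

end GaussianJensenMatrix

/-! ### The Brascamp–Lieb matrix and its Gaussian coupling -/

section BLMatrix

variable {ι : Type*} [Fintype ι] {n : Type*} [Fintype n] {m : ι → Type*} [∀ i, Fintype (m i)]
  {C : ∀ i, Matrix (m i) n ℝ} {p : ι → ℝ} {B : ∀ i, Matrix (m i) (m i) ℝ}

/-- The matrix `∑ᵢ pᵢ Cᵢᵀ Bᵢ Cᵢ` of the Gaussian `∏ᵢ g_{Bᵢ}(Cᵢ x)^{pᵢ}`. -/
def blMatrix (C : ∀ i, Matrix (m i) n ℝ) (p : ι → ℝ) (B : ∀ i, Matrix (m i) (m i) ℝ) :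
    Matrix n n ℝ :=
  ∑ i, p i • ((C i)ᵀ * B i * C i)

lemma blMatrix_mulVec_dotProduct (x : n → ℝ) :
    blMatrix C p B *ᵥ x ⬝ᵥ x = ∑ i, p i * (B i *ᵥ (C i *ᵥ x) ⬝ᵥ (C i *ᵥ x)) := by
  rw [blMatrix, sum_mulVec, sum_dotProduct]
  refine Finset.sum_congr rfl fun i _ => ?_
  rw [smul_mulVec, smul_dotProduct, smul_eq_mul, ← mulVec_mulVec, ← mulVec_mulVec,
    mulVec_transpose, ← dotProduct_mulVec]

lemma mul_inv_mulVec {κ : Type*} [Fintype κ] [DecidableEq κ] {A : Matrix κ κ ℝ} (hA : A.PosDef)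
    (v : κ → ℝ) : A *ᵥ (A⁻¹ *ᵥ v) = v := by
  rw [mulVec_mulVec, mul_nonsing_inv _ hA.det_pos.ne'.isUnit, one_mulVec]

lemma two_mul_dotProduct_sub_le_dotProduct_inv {κ : Type*} [Fintype κ] [DecidableEq κ]
    {A : Matrix κ κ ℝ} (hA : A.PosDef) (s y : κ → ℝ) :
    2 * (s ⬝ᵥ y) - A *ᵥ y ⬝ᵥ y ≤ s ⬝ᵥ A⁻¹ *ᵥ s := by
  have hsymm : Aᵀ = A := (conjTranspose_eq_transpose_of_trivial A).symm.trans hA.1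
  have hnonneg := hA.posSemidef.dotProduct_mulVec_nonneg (A⁻¹ *ᵥ s - y)
  have hcross : (A⁻¹ *ᵥ s) ⬝ᵥ A *ᵥ y = s ⬝ᵥ y := by
    rw [dotProduct_mulVec, ← mulVec_transpose, hsymm, mul_inv_mulVec hA]
  simp only [star_trivial, mulVec_sub, mul_inv_mulVec hA, dotProduct_sub, sub_dotProduct,
    hcross] at hnonneg
  linarith [dotProduct_comm y s, dotProduct_comm (A⁻¹ *ᵥ s) s, dotProduct_comm y (A *ᵥ y)]

lemma dotProduct_blMatrix_inv_mulVec_le [DecidableEq n] [∀ i, DecidableEq (m i)]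
    (hp : ∀ i, 0 ≤ p i) (hB : ∀ i, (B i).PosDef) (hM : (blMatrix C p B).PosDef)
    (s : ∀ i, m i → ℝ) :
    (∑ i, p i • ((C i)ᵀ *ᵥ s i)) ⬝ᵥ (blMatrix C p B)⁻¹ *ᵥ (∑ i, p i • ((C i)ᵀ *ᵥ s i)) ≤
      ∑ i, p i * (s i ⬝ᵥ (B i)⁻¹ *ᵥ s i) := by
  set z := ∑ i, p i • ((C i)ᵀ *ᵥ s i) with hz
  set x := (blMatrix C p B)⁻¹ *ᵥ z
  have hMx : blMatrix C p B *ᵥ x = z := mul_inv_mulVec hM z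
  have hzx : z ⬝ᵥ x = ∑ i, p i * (s i ⬝ᵥ C i *ᵥ x) := by
    rw [hz, sum_dotProduct]
    refine Finset.sum_congr rfl fun i _ => ?_
    rw [smul_dotProduct, smul_eq_mul, mulVec_transpose, ← dotProduct_mulVec]
  calc z ⬝ᵥ x = 2 * (z ⬝ᵥ x) - blMatrix C p B *ᵥ x ⬝ᵥ x := by rw [hMx]; ring
    _ = ∑ i, p i * (2 * (s i ⬝ᵥ C i *ᵥ x) - B i *ᵥ (C i *ᵥ x) ⬝ᵥ (C i *ᵥ x)) := by
        rw [hzx, blMatrix_mulVec_dotProduct, Finset.mul_sum, ← Finset.sum_sub_distrib]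
        exact Finset.sum_congr rfl fun i _ => by ring
    _ ≤ ∑ i, p i * (s i ⬝ᵥ (B i)⁻¹ *ᵥ s i) := by
        gcongr with i
        · exact hp i
        · exact two_mul_dotProduct_sub_le_dotProduct_inv (hB i) _ _

end BLMatrix

section Coupling

variable {ι : Type*} [DecidableEq ι] {m : ι → Type*} [∀ i, DecidableEq (m i)]

/-- The projection of `⊕ᵢ ℝ^{mᵢ}` onto a summand. -/
def blockProj (m : ι → Type*) [∀ i, DecidableEq (m i)] (i : ι) :
    Matrix (m i) (Σ j, m j) ℝ :=
  (1 : Matrix (Σ j, m j) (Σ j, m j) ℝ).submatrix (fun a => ⟨i, a⟩) id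

variable [∀ i, Fintype (m i)] {n : Type*} [Fintype n] {C : ∀ i, Matrix (m i) n ℝ} {R : Matrix n n ℝ}
  {S : ∀ i, Matrix (m i) (m i) ℝ}

/-- For a standard Gaussian vector `w = (u, (vᵢ)ᵢ)` on `ℝⁿ ⊕ ⨁ᵢ ℝ^{mᵢ}`, the matrix
`couplingMatrix C R S (i, ±)` sends `w` to `Cᵢ R u ± Sᵢ vᵢ`; the sign is encoded by a `Bool`. -/
def couplingMatrix (C : ∀ i, Matrix (m i) n ℝ) (R : Matrix n n ℝ)
    (S : ∀ i, Matrix (m i) (m i) ℝ) (a : ι × Bool) : Matrix (m a.1) (n ⊕ Σ j, m j) ℝ :=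
  fromCols (C a.1 * R) ((if a.2 then (1 : ℝ) else -1) • (S a.1 * blockProj m a.1))

lemma couplingMatrix_transpose_mulVec (a : ι × Bool) (v : m a.1 → ℝ) :
    (couplingMatrix C R S a)ᵀ *ᵥ v =
      Sum.elim (Rᵀ *ᵥ ((C a.1)ᵀ *ᵥ v))
        ((blockProj m a.1)ᵀ *ᵥ ((S a.1)ᵀ *ᵥ ((if a.2 then (1 : ℝ) else -1) • v))) := by
  rw [couplingMatrix, transpose_fromCols, fromRows_mulVec, transpose_smul, transpose_mul,
    transpose_mul, ← mulVec_mulVec, smul_mulVec, ← mulVec_mulVec, mulVec_smul, mulVec_smul]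

variable [Fintype ι]

lemma blockProj_mul_transpose (i : ι) : blockProj m i * (blockProj m i)ᵀ = 1 := by
  ext a b
  simp [blockProj, mul_apply, one_apply]

lemma sum_blockProj_transpose_mulVec (v : ∀ i, m i → ℝ) :
    ∑ i, (blockProj m i)ᵀ *ᵥ v i = fun a => v a.1 a.2 := by
  ext a
  simp only [Finset.sum_apply, mulVec, dotProduct, blockProj, transpose_apply, submatrix_apply,
    id_eq, one_apply, ite_mul, one_mul, zero_mul]
  rw [← Fintype.sum_sigma' (f := fun i x => if (⟨i, x⟩ : Σ j, m j) = a then v i x else 0)]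
  simp

lemma sum_blockProj_transpose_mulVec_dotProduct_self (v : ∀ i, m i → ℝ) :
    (∑ i, (blockProj m i)ᵀ *ᵥ v i) ⬝ᵥ (∑ i, (blockProj m i)ᵀ *ᵥ v i) = ∑ i, v i ⬝ᵥ v i := by
  rw [sum_blockProj_transpose_mulVec]
  exact Fintype.sum_sigma _

lemma couplingMatrix_mulVec (a : ι × Bool) (w : (n ⊕ Σ j, m j) → ℝ) :
    couplingMatrix C R S a *ᵥ w = C a.1 *ᵥ (R *ᵥ (w ∘ Sum.inl)) +
      (if a.2 then (1 : ℝ) else -1) • (S a.1 *ᵥ (blockProj m a.1 *ᵥ (w ∘ Sum.inr))) := by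
  rw [couplingMatrix, fromCols_mulVec, smul_mulVec, mulVec_mulVec, mulVec_mulVec]

lemma couplingMatrix_mul_transpose (a : ι × Bool) :
    couplingMatrix C R S a * (couplingMatrix C R S a)ᵀ =
      C a.1 * (R * Rᵀ) * (C a.1)ᵀ + S a.1 * (S a.1)ᵀ := by
  have hnoise : S a.1 * blockProj m a.1 * (S a.1 * blockProj m a.1)ᵀ = S a.1 * (S a.1)ᵀ := by
    rw [transpose_mul, Matrix.mul_assoc, ← Matrix.mul_assoc (blockProj m a.1),
      blockProj_mul_transpose, Matrix.one_mul]
  rw [couplingMatrix, transpose_fromCols, fromCols_mul_fromRows, transpose_smul, Matrix.smul_mul,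
    Matrix.mul_smul, hnoise, transpose_mul]
  congr 1
  · simp only [Matrix.mul_assoc]
  · split_ifs <;> simp

variable {p : ι → ℝ}

lemma sum_couplingMatrix_transpose_mulVec {w : ∀ a : ι × Bool, m a.1 → ℝ} {s d : ∀ i, m i → ℝ}
    (htrue : ∀ i, w (i, true) = s i + d i) (hfalse : ∀ i, w (i, false) = s i - d i) :
    ∑ a, (p a.1 / 2) • ((couplingMatrix C R S a)ᵀ *ᵥ w a) =
      Sum.elim (Rᵀ *ᵥ ∑ i, p i • ((C i)ᵀ *ᵥ s i))
        (∑ i, (blockProj m i)ᵀ *ᵥ (p i • ((S i)ᵀ *ᵥ d i))) := by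
  have hpair (i : ι) : ∑ σ : Bool, (p i / 2) • ((couplingMatrix C R S (i, σ))ᵀ *ᵥ w (i, σ)) =
      Sum.elim (Rᵀ *ᵥ (p i • ((C i)ᵀ *ᵥ s i)))
        ((blockProj m i)ᵀ *ᵥ (p i • ((S i)ᵀ *ᵥ d i))) := by
    rw [Fintype.sum_bool, couplingMatrix_transpose_mulVec, couplingMatrix_transpose_mulVec,
      htrue, hfalse]
    ext (j | j) <;>
    · simp only [Pi.add_apply, Pi.smul_apply, Sum.elim_inl, Sum.elim_inr, mulVec_smul, mulVec_add,
        mulVec_sub, mulVec_neg, smul_eq_mul, if_true, Bool.false_eq_true, if_false, Pi.sub_apply,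
        one_smul, neg_smul, Pi.neg_apply]
      ring
  rw [Fintype.sum_prod_type]
  simp only [hpair]
  ext (j | j) <;> simp [Finset.sum_apply, mulVec_sum]

lemma sum_couplingMatrix_transpose_mulVec_dotProduct_self {A : ∀ i, Matrix (m i) (m i) ℝ}
    (hA : ∀ i, C i * (R * Rᵀ) * (C i)ᵀ + S i * (S i)ᵀ = A i)
    {w : ∀ a : ι × Bool, m a.1 → ℝ} {s d : ∀ i, m i → ℝ}
    (htrue : ∀ i, w (i, true) = s i + d i) (hfalse : ∀ i, w (i, false) = s i - d i) :
    ∑ a, (p a.1 / 2) * (((couplingMatrix C R S a)ᵀ *ᵥ w a) ⬝ᵥ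
        ((couplingMatrix C R S a)ᵀ *ᵥ w a)) =
      ∑ i, p i * (s i ⬝ᵥ A i *ᵥ s i) + ∑ i, p i * (d i ⬝ᵥ A i *ᵥ d i) := by
  rw [Fintype.sum_prod_type, ← Finset.sum_add_distrib]
  refine Finset.sum_congr rfl fun i _ => ?_
  simp only [Fintype.sum_bool, transpose_mulVec_dotProduct_self, couplingMatrix_mul_transpose, hA,
    htrue, hfalse, mulVec_add, mulVec_sub, add_dotProduct, dotProduct_add, sub_dotProduct,
    dotProduct_sub]
  ring

variable [DecidableEq n] {B : ∀ i, Matrix (m i) (m i) ℝ}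

lemma couplingMatrix_domination (hp : ∀ i, 0 ≤ p i) (hp1 : ∀ i, p i ≤ 1)
    (hB : ∀ i, (B i).PosDef) (hM : (blMatrix C p B).PosDef) (hR : R * Rᵀ = (blMatrix C p B)⁻¹)
    (hS : ∀ i, C i * (R * Rᵀ) * (C i)ᵀ + S i * (S i)ᵀ = (B i)⁻¹)
    (w : ∀ a : ι × Bool, m a.1 → ℝ) :
    (∑ a, (p a.1 / 2) • ((couplingMatrix C R S a)ᵀ *ᵥ w a)) ⬝ᵥ
        (∑ a, (p a.1 / 2) • ((couplingMatrix C R S a)ᵀ *ᵥ w a)) ≤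
      ∑ a, (p a.1 / 2) * (((couplingMatrix C R S a)ᵀ *ᵥ w a) ⬝ᵥ
        ((couplingMatrix C R S a)ᵀ *ᵥ w a)) := by
  set s : ∀ i, m i → ℝ := fun i => (2 : ℝ)⁻¹ • (w (i, true) + w (i, false)) with hs
  set d : ∀ i, m i → ℝ := fun i => (2 : ℝ)⁻¹ • (w (i, true) - w (i, false)) with hd
  have htrue (i : ι) : w (i, true) = s i + d i := by
    ext j; simp only [hs, hd, Pi.add_apply, Pi.smul_apply, Pi.sub_apply, smul_eq_mul]; ring
  have hfalse (i : ι) : w (i, false) = s i - d i := by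
    ext j; simp only [hs, hd, Pi.add_apply, Pi.smul_apply, Pi.sub_apply, smul_eq_mul]; ring
  rw [sum_couplingMatrix_transpose_mulVec htrue hfalse,
    sum_couplingMatrix_transpose_mulVec_dotProduct_self hS htrue hfalse,
    sumElim_dotProduct_sumElim, sum_blockProj_transpose_mulVec_dotProduct_self,
    transpose_mulVec_dotProduct_self, hR]
  refine add_le_add (dotProduct_blMatrix_inv_mulVec_le hp hB hM s)
    (Finset.sum_le_sum fun i _ => ?_)
  have hnoise : ((S i)ᵀ *ᵥ d i) ⬝ᵥ ((S i)ᵀ *ᵥ d i) ≤ d i ⬝ᵥ (B i)⁻¹ *ᵥ d i := by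
    have hsignal : 0 ≤ ((C i * R)ᵀ *ᵥ d i) ⬝ᵥ ((C i * R)ᵀ *ᵥ d i) := by
      simpa using dotProduct_self_star_nonneg ((C i * R)ᵀ *ᵥ d i)
    rw [transpose_mulVec_dotProduct_self, transpose_mul, ← Matrix.mul_assoc,
      Matrix.mul_assoc (C i)] at hsignal
    rw [transpose_mulVec_dotProduct_self, ← hS, add_mulVec, dotProduct_add]
    linarith
  have hnonneg : 0 ≤ ((S i)ᵀ *ᵥ d i) ⬝ᵥ ((S i)ᵀ *ᵥ d i) := by
    simpa using dotProduct_self_star_nonneg ((S i)ᵀ *ᵥ d i)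
  rw [smul_dotProduct, dotProduct_smul, smul_eq_mul, smul_eq_mul]
  exact mul_le_mul_of_nonneg_left
    ((mul_le_of_le_one_left hnonneg (hp1 i)).trans hnoise) (hp i)

end Coupling

/-! ### The Brascamp–Lieb inequality at a Gaussian critical point -/

section CriticalPoint

variable {ι : Type*} [Fintype ι] {n : Type*} {m : ι → Type*} [∀ i, Fintype (m i)]
  {C : ∀ i, Matrix (m i) n ℝ} {p : ι → ℝ} {Q B : ∀ i, Matrix (m i) (m i) ℝ}

lemma blMatrix_prod_fin {L : ℕ} (hL : L ≠ 0) :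
    blMatrix (ι := ι × Fin L) (fun a => C a.1) (fun a => p a.1 / L) (fun a => B a.1) =
      blMatrix C p B := by
  rw [blMatrix, Fintype.sum_prod_type, blMatrix]
  refine Finset.sum_congr rfl fun i _ => ?_
  change ∑ _l : Fin L, (p i / L) • ((C i)ᵀ * B i * C i) = _
  rw [Finset.sum_const, Finset.card_univ, Fintype.card_fin, ← Nat.cast_smul_eq_nsmul ℝ,
    smul_smul, mul_div_cancel₀ _ (Nat.cast_ne_zero.2 hL)]

variable [Fintype n] [DecidableEq n] [∀ i, DecidableEq (m i)]

/-- The matrix `Bᵢ⁻¹ - Cᵢ M⁻¹ Cᵢᵀ`, where `M = ∑ⱼ pⱼ Cⱼᵀ Bⱼ Cⱼ`: up to the factor `pᵢ`, the gradient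
of `B ↦ log (∏ⱼ det(Bⱼ)^{pⱼ} / det M)` in the variable `Bᵢ`. -/
def blSlack (C : ∀ i, Matrix (m i) n ℝ) (p : ι → ℝ) (B : ∀ i, Matrix (m i) (m i) ℝ) (i : ι) :
    Matrix (m i) (m i) ℝ :=
  (B i)⁻¹ - C i * (blMatrix C p B)⁻¹ * (C i)ᵀ

/-- The first-order optimality (Karush–Kuhn–Tucker) conditions for maximizing
`∏ᵢ det(Bᵢ)^{pᵢ} / det(∑ᵢ pᵢ Cᵢᵀ Bᵢ Cᵢ)` under the constraints `0 < Bᵢ ≤ Qᵢ`. -/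
structure IsCriticalPoint (C : ∀ i, Matrix (m i) n ℝ) (p : ι → ℝ)
    (Q B : ∀ i, Matrix (m i) (m i) ℝ) : Prop where
  posDef : ∀ i, (B i).PosDef
  posDef_blMatrix : (blMatrix C p B).PosDef
  posSemidef_blSlack : ∀ i, (blSlack C p B i).PosSemidef
  sub_mul_blSlack : ∀ i, (Q i - B i) * blSlack C p B i = 0

namespace IsCriticalPoint

lemma exists_factorization (h : IsCriticalPoint C p Q B) :
    ∃ (R : Matrix n n ℝ) (S : ∀ i, Matrix (m i) (m i) ℝ), R * Rᵀ = (blMatrix C p B)⁻¹ ∧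
      (∀ i, C i * (R * Rᵀ) * (C i)ᵀ + S i * (S i)ᵀ = (B i)⁻¹) ∧
      ∀ i v, Q i *ᵥ (S i *ᵥ v) = B i *ᵥ (S i *ᵥ v) := by
  obtain ⟨F, hF⟩ := exists_eq_transpose_mul_self h.posDef_blMatrix.inv.posSemidef
  choose G hG using fun i => exists_eq_transpose_mul_self (h.posSemidef_blSlack i)
  refine ⟨Fᵀ, fun i => (G i)ᵀ, by rw [transpose_transpose, hF], fun i => ?_, fun i v => ?_⟩
  · rw [transpose_transpose, transpose_transpose, ← hF, ← hG, blSlack]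
    abel
  · have hzero : (Q i - B i) * (G i)ᵀ = 0 := by
      have hslack := h.sub_mul_blSlack i
      rwa [hG, ← conjTranspose_eq_transpose_of_trivial,
        mul_conjTranspose_mul_self_eq_zero] at hslack
    rw [← sub_eq_zero, ← sub_mulVec, mulVec_mulVec, hzero, zero_mulVec]

lemma prod_fin (h : IsCriticalPoint C p Q B) {L : ℕ} (hL : L ≠ 0) :
    IsCriticalPoint (ι := ι × Fin L) (fun a => C a.1) (fun a => p a.1 / L) (fun a => Q a.1)
      (fun a => B a.1) where
  posDef a := h.posDef a.1
  posDef_blMatrix := by rw [blMatrix_prod_fin hL]; exact h.posDef_blMatrix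
  posSemidef_blSlack a := by rw [blSlack, blMatrix_prod_fin hL]; exact h.posSemidef_blSlack a.1
  sub_mul_blSlack a := by rw [blSlack, blMatrix_prod_fin hL]; exact h.sub_mul_blSlack a.1

end IsCriticalPoint

end CriticalPoint

section MidLogConvex

variable {k : ℕ} {f : (Fin k → ℝ) → ℝ≥0∞}

/-- The midpoint version of being more log-convex than `g_Q`, in a form without division. -/
def MidLogConvex (f : (Fin k → ℝ) → ℝ≥0∞) (Q : Matrix (Fin k) (Fin k) ℝ) : Prop :=
  ∀ y z, f y ^ 2 ≤
    f (y + z) * f (y - z) * ENNReal.ofReal (Real.exp (2 * Real.pi * (Q *ᵥ z ⬝ᵥ z)))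

/-- The quotient `f / g_B` of a function by a Gaussian. -/
def gaussQuot (B : Matrix (Fin k) (Fin k) ℝ) (f : (Fin k → ℝ) → ℝ≥0∞) (y : Fin k → ℝ) : ℝ≥0∞ :=
  f y * ENNReal.ofReal (Real.exp (Real.pi * (B *ᵥ y ⬝ᵥ y)))

lemma gaussQuot_mul_gaussFn (B : Matrix (Fin k) (Fin k) ℝ) (f : (Fin k → ℝ) → ℝ≥0∞)
    (y : Fin k → ℝ) : gaussQuot B f y * ENNReal.ofReal (gaussFn B y) = f y := by
  rw [gaussQuot, gaussFn, mul_assoc, ← ENNReal.ofReal_mul (Real.exp_pos _).le, ← Real.exp_add]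
  simp

@[fun_prop]
lemma measurable_gaussQuot (B : Matrix (Fin k) (Fin k) ℝ) (hf : Measurable f) :
    Measurable (gaussQuot B f) := by
  unfold gaussQuot dotProduct mulVec dotProduct
  fun_prop

lemma MidLogConvex.gaussQuot_sq_le {Q : Matrix (Fin k) (Fin k) ℝ} (hf : MidLogConvex f Q)
    (B : Matrix (Fin k) (Fin k) ℝ) {z : Fin k → ℝ} (hz : Q *ᵥ z = B *ᵥ z) (y : Fin k → ℝ) :
    gaussQuot B f y ^ 2 ≤ gaussQuot B f (y + z) * gaussQuot B f (y - z) := by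
  have hexp : ENNReal.ofReal (Real.exp (Real.pi * (B *ᵥ (y + z) ⬝ᵥ (y + z)))) *
      ENNReal.ofReal (Real.exp (Real.pi * (B *ᵥ (y - z) ⬝ᵥ (y - z)))) =
      ENNReal.ofReal (Real.exp (2 * Real.pi * (Q *ᵥ z ⬝ᵥ z))) *
      ENNReal.ofReal (Real.exp (Real.pi * (B *ᵥ y ⬝ᵥ y))) ^ 2 := by
    rw [← ENNReal.ofReal_mul (Real.exp_pos _).le, ← Real.exp_add,
      ← ENNReal.ofReal_pow (Real.exp_pos _).le, ← Real.exp_nat_mul,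
      ← ENNReal.ofReal_mul (Real.exp_pos _).le, ← Real.exp_add, hz]
    congr 2
    simp only [mulVec_add, mulVec_sub, dotProduct_add, dotProduct_sub, add_dotProduct,
      sub_dotProduct]
    push_cast
    ring
  unfold gaussQuot
  calc (f y * ENNReal.ofReal (Real.exp (Real.pi * (B *ᵥ y ⬝ᵥ y)))) ^ 2
      = f y ^ 2 * ENNReal.ofReal (Real.exp (Real.pi * (B *ᵥ y ⬝ᵥ y))) ^ 2 := mul_pow _ _ _
    _ ≤ f (y + z) * f (y - z) * ENNReal.ofReal (Real.exp (2 * Real.pi * (Q *ᵥ z ⬝ᵥ z))) *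
        ENNReal.ofReal (Real.exp (Real.pi * (B *ᵥ y ⬝ᵥ y))) ^ 2 := by gcongr; exact hf y z
    _ = _ := by rw [mul_assoc (f (y + z) * f (y - z)), ← hexp]; ring

end MidLogConvex

section CriticalInequality

variable {ι : Type*} [Fintype ι] {n : ℕ} {k : ι → ℕ} {C : ∀ i, Matrix (Fin (k i)) (Fin n) ℝ}
  {p : ι → ℝ} {Q B : ∀ i, Matrix (Fin (k i)) (Fin (k i)) ℝ} {f : ∀ i, (Fin (k i) → ℝ) → ℝ≥0∞}

/-- The Brascamp–Lieb integrand `x ↦ ∏ᵢ fᵢ(Cᵢ x)^{pᵢ}`. -/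
def blProduct (C : ∀ i, Matrix (Fin (k i)) (Fin n) ℝ) (p : ι → ℝ)
    (f : ∀ i, (Fin (k i) → ℝ) → ℝ≥0∞) (x : Fin n → ℝ) : ℝ≥0∞ :=
  ∏ i, f i (C i *ᵥ x) ^ p i

@[fun_prop]
lemma measurable_blProduct (hf : ∀ i, Measurable (f i)) : Measurable (blProduct C p f) := by
  unfold blProduct
  fun_prop

lemma prod_gaussFn_mulVec_rpow (x : Fin n → ℝ) :
    ∏ i, ENNReal.ofReal (gaussFn (B i) (C i *ᵥ x)) ^ p i =
      ENNReal.ofReal (gaussFn (blMatrix C p B) x) := by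
  have hfactor (i : ι) : ENNReal.ofReal (gaussFn (B i) (C i *ᵥ x)) ^ p i = ENNReal.ofReal
      (Real.exp (-Real.pi * (p i * (B i *ᵥ (C i *ᵥ x) ⬝ᵥ (C i *ᵥ x))))) := by
    rw [gaussFn, ENNReal.ofReal_rpow_of_pos (Real.exp_pos _), ← Real.exp_mul]
    congr 2; ring
  simp only [hfactor]
  rw [← ENNReal.ofReal_prod_of_nonneg (fun i _ => (Real.exp_pos _).le), ← Real.exp_sum,
    gaussFn, blMatrix_mulVec_dotProduct, Finset.mul_sum]

lemma blProduct_gaussQuot_mul_gaussFn (hp : ∀ i, 0 ≤ p i) (x : Fin n → ℝ) :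
    blProduct C p (fun i => gaussQuot (B i) (f i)) x *
      ENNReal.ofReal (gaussFn (blMatrix C p B) x) = blProduct C p f x := by
  rw [← prod_gaussFn_mulVec_rpow, blProduct, ← Finset.prod_mul_distrib]
  refine Finset.prod_congr rfl fun i _ => ?_
  rw [← ENNReal.mul_rpow_of_nonneg _ _ (hp i), gaussQuot_mul_gaussFn]

lemma blProduct_gaussQuot_le_prod_couplingMatrix [DecidableEq ι] (hp : ∀ i, 0 ≤ p i)
    (hf : ∀ i, MidLogConvex (f i) (Q i)) {S : ∀ i, Matrix (Fin (k i)) (Fin (k i)) ℝ}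
    (hS : ∀ i v, Q i *ᵥ (S i *ᵥ v) = B i *ᵥ (S i *ᵥ v)) (R : Matrix (Fin n) (Fin n) ℝ) (r : ℝ)
    (w : (Fin n ⊕ Σ j, Fin (k j)) → ℝ) :
    blProduct C p (fun i => gaussQuot (B i) (f i)) (r • (fromCols R 0 *ᵥ w)) ≤
      ∏ a : ι × Bool,
        gaussQuot (B a.1) (f a.1) (r • (couplingMatrix C R S a *ᵥ w)) ^ (p a.1 / 2) := by
  rw [Fintype.prod_prod_type, blProduct]
  refine Finset.prod_le_prod' fun i _ => ?_
  rw [Fintype.prod_bool]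
  set y := C i *ᵥ (r • (fromCols R 0 *ᵥ w)) with hy
  set v := r • (blockProj (fun j => Fin (k j)) i *ᵥ (w ∘ Sum.inr)) with hv
  have hshift (σ : Bool) : r • (couplingMatrix C R S (i, σ) *ᵥ w) =
      y + (if σ then (1 : ℝ) else -1) • (S i *ᵥ v) := by
    rw [couplingMatrix_mulVec, hy, hv, fromCols_mulVec]
    simp only [zero_mulVec, add_zero, mulVec_smul, smul_add]
    rw [smul_comm]
  simp only [hshift, if_true, Bool.false_eq_true, if_false, one_smul, neg_smul, ← sub_eq_add_neg]
  have hhalf : 0 ≤ p i / 2 := div_nonneg (hp i) zero_le_two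
  have hmid := ENNReal.rpow_le_rpow ((hf i).gaussQuot_sq_le (B i) (hS i v) y) hhalf
  rwa [← ENNReal.rpow_natCast, ← ENNReal.rpow_mul, ENNReal.mul_rpow_of_nonneg _ _ hhalf,
    Nat.cast_two, mul_div_cancel₀ _ two_ne_zero] at hmid

lemma lintegral_stdGaussian_gaussQuot {κ : Type*} [Fintype κ] {d : ℕ}
    {A : Matrix (Fin d) (Fin d) ℝ} (hA : A.PosDef) {T : Matrix (Fin d) κ ℝ} (hT : T * Tᵀ = A⁻¹)
    {g : (Fin d → ℝ) → ℝ≥0∞} (hg : Measurable g) :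
    ∫⁻ w, gaussQuot A g ((√(2 * Real.pi))⁻¹ • (T *ᵥ w.ofLp)) ∂(stdGaussian (EuclideanSpace ℝ κ)) =
      ENNReal.ofReal (√A.det) * ∫⁻ y, g y := by
  rw [lintegral_stdGaussian_smul_mulVec hA hT (measurable_gaussQuot A hg)]
  simp only [gaussQuot_mul_gaussFn]

lemma lintegral_stdGaussian_blProduct_gaussQuot (hp : ∀ i, 0 ≤ p i)
    (hM : (blMatrix C p B).PosDef) {κ : Type*} [Fintype κ] {T : Matrix (Fin n) κ ℝ}
    (hT : T * Tᵀ = (blMatrix C p B)⁻¹) (hf : ∀ i, Measurable (f i)) :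
    ∫⁻ w, blProduct C p (fun i => gaussQuot (B i) (f i)) ((√(2 * Real.pi))⁻¹ • (T *ᵥ w.ofLp))
        ∂(stdGaussian (EuclideanSpace ℝ κ)) =
      ENNReal.ofReal (√(blMatrix C p B).det) * ∫⁻ x, blProduct C p f x := by
  rw [lintegral_stdGaussian_smul_mulVec hM hT
    (φ := blProduct C p (fun i => gaussQuot (B i) (f i))) (by fun_prop)]
  simp only [blProduct_gaussQuot_mul_gaussFn hp]

lemma IsCriticalPoint.lintegral_blProduct_le_of_le_one (h : IsCriticalPoint C p Q B)
    (hp : ∀ i, 0 ≤ p i) (hp1 : ∀ i, p i ≤ 1) (hf : ∀ i, Measurable (f i))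
    (hfQ : ∀ i, MidLogConvex (f i) (Q i)) (hfin : ∀ i, ∫⁻ y, f i y ≠ ⊤) :
    ENNReal.ofReal (√(blMatrix C p B).det) * ∫⁻ x, blProduct C p f x ≤
      ∏ i, (ENNReal.ofReal (√(B i).det) * ∫⁻ y, f i y) ^ p i := by
  classical
  obtain ⟨R, S, hR, hS, hQS⟩ := h.exists_factorization
  set r : ℝ := (√(2 * Real.pi))⁻¹
  set γ := stdGaussian (EuclideanSpace ℝ (Fin n ⊕ Σ j, Fin (k j)))
  have hsignal : fromCols R (0 : Matrix (Fin n) (Σ j, Fin (k j)) ℝ) *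
      (fromCols R (0 : Matrix (Fin n) (Σ j, Fin (k j)) ℝ))ᵀ = (blMatrix C p B)⁻¹ := by
    rw [transpose_fromCols, fromCols_mul_fromRows, hR]; simp
  have hmarginal (a : ι × Bool) :
      ∫⁻ w, gaussQuot (B a.1) (f a.1) (r • (couplingMatrix C R S a *ᵥ w.ofLp)) ∂γ =
        ENNReal.ofReal (√(B a.1).det) * ∫⁻ y, f a.1 y :=
    lintegral_stdGaussian_gaussQuot (h.posDef a.1)
      ((couplingMatrix_mul_transpose a).trans (hS a.1)) (hf a.1)
  calc ENNReal.ofReal (√(blMatrix C p B).det) * ∫⁻ x, blProduct C p f x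
      = ∫⁻ w, blProduct C p (fun i => gaussQuot (B i) (f i)) (r • (fromCols R 0 *ᵥ w.ofLp)) ∂γ :=
        (lintegral_stdGaussian_blProduct_gaussQuot hp h.posDef_blMatrix hsignal hf).symm
    _ ≤ ∫⁻ w, ∏ a : ι × Bool, gaussQuot (B a.1) (f a.1)
          (r • (couplingMatrix C R S a *ᵥ w.ofLp)) ^ (p a.1 / 2) ∂γ :=
        lintegral_mono fun w => blProduct_gaussQuot_le_prod_couplingMatrix hp hfQ hQS R r w.ofLp
    _ ≤ ∏ a : ι × Bool, (∫⁻ w, gaussQuot (B a.1) (f a.1)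
          (r • (couplingMatrix C R S a *ᵥ w.ofLp)) ∂γ) ^ (p a.1 / 2) :=
        lintegral_prod_rpow_le_of_mulVec (m := fun a : ι × Bool => Fin (k a.1))
          (q := fun a => p a.1 / 2) (T := couplingMatrix C R S)
          (h := fun a y => gaussQuot (B a.1) (f a.1) (r • y))
          (fun a => div_nonneg (hp a.1) zero_le_two)
          (couplingMatrix_domination hp hp1 h.posDef h.posDef_blMatrix hR hS)
          (fun a => by fun_prop) (fun a => by
            rw [hmarginal]
            exact ENNReal.mul_ne_top ENNReal.ofReal_ne_top (hfin a.1))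
    _ = ∏ i, (ENNReal.ofReal (√(B i).det) * ∫⁻ y, f i y) ^ p i := by
        simp only [hmarginal, Fintype.prod_prod_type, Fintype.prod_bool]
        refine Finset.prod_congr rfl fun i _ => ?_
        have hhalf : 0 ≤ p i / 2 := div_nonneg (hp i) zero_le_two
        rw [← ENNReal.rpow_add_of_nonneg _ _ hhalf hhalf, add_halves]

lemma IsCriticalPoint.lintegral_blProduct_le (h : IsCriticalPoint C p Q B)
    (hp : ∀ i, 0 ≤ p i) (hf : ∀ i, Measurable (f i))
    (hfQ : ∀ i, MidLogConvex (f i) (Q i)) (hfin : ∀ i, ∫⁻ y, f i y ≠ ⊤) :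
    ENNReal.ofReal (√(blMatrix C p B).det) * ∫⁻ x, blProduct C p f x ≤
      ∏ i, (ENNReal.ofReal (√(B i).det) * ∫⁻ y, f i y) ^ p i := by
  -- Repeating every factor `L` times with exponent `pᵢ / L` reduces to exponents at most one.
  obtain ⟨L, hL⟩ := exists_nat_gt (∑ i, p i)
  have hL0 : (0 : ℝ) < L := (Finset.sum_nonneg fun i _ => hp i).trans_lt hL
  have hL1 (i : ι) : p i / L ≤ 1 := by
    rw [div_le_one hL0]
    exact (Finset.single_le_sum (fun j _ => hp j) (Finset.mem_univ i)).trans hL.le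
  have hpow (t : ℝ≥0∞) (i : ι) : ∏ _l : Fin L, t ^ (p i / L) = t ^ p i := by
    rw [Finset.prod_const, Finset.card_univ, Fintype.card_fin, ← ENNReal.rpow_natCast,
      ← ENNReal.rpow_mul, div_mul_cancel₀ _ hL0.ne']
  have hL' : L ≠ 0 := Nat.cast_ne_zero.1 hL0.ne'
  have hsplit := (h.prod_fin hL').lintegral_blProduct_le_of_le_one
    (f := fun a : ι × Fin L => f a.1) (fun a => div_nonneg (hp a.1) hL0.le) (fun a => hL1 a.1)
    (fun a => hf a.1) (fun a => hfQ a.1) (fun a => hfin a.1)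
  rw [blMatrix_prod_fin (C := C) (p := p) (B := B) hL'] at hsplit
  simp only [blProduct, Fintype.prod_prod_type, hpow] at hsplit
  exact hsplit.trans_eq (Finset.prod_congr rfl fun i _ =>
    hpow (ENNReal.ofReal (√(B i).det) * ∫⁻ y, f i y) i)

end CriticalInequality

/-! ### Maximizers of the Gaussian functional are critical points -/

section RankOneUpdate

lemma posSemidef_vecMulVec_self {κ : Type*} [Finite κ] (v : κ → ℝ) :
    (vecMulVec v v).PosSemidef := by
  simpa using posSemidef_vecMulVec_self_star v

variable {κ : Type*} [Fintype κ]

lemma det_add_smul_vecMulVec [DecidableEq κ] {A : Matrix κ κ ℝ} (hA : A.det ≠ 0) (t : ℝ)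
    (v : κ → ℝ) : (A + t • vecMulVec v v).det = A.det * (1 + t * (v ⬝ᵥ A⁻¹ *ᵥ v)) := by
  rw [← smul_vecMulVec, vecMulVec_eq Unit, det_add_replicateCol_mul_replicateRow hA.isUnit,
    det_unique (n := Unit), Matrix.mul_assoc, ← replicateCol_mulVec, Matrix.add_apply, one_apply_eq,
    replicateRow_mul_replicateCol_apply, mulVec_smul, dotProduct_smul, smul_eq_mul]

lemma dotProduct_vecMulVec_mulVec (v x : κ → ℝ) : x ⬝ᵥ vecMulVec v v *ᵥ x = (v ⬝ᵥ x) ^ 2 := by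
  rw [vecMulVec_mulVec, op_smul_eq_smul, dotProduct_smul, smul_eq_mul, dotProduct_comm x v, sq]

lemma mulVec_dotProduct_of_isHermitian {D : Matrix κ κ ℝ} (hD : D.IsHermitian) (x y : κ → ℝ) :
    D *ᵥ x ⬝ᵥ y = x ⬝ᵥ D *ᵥ y := by
  rw [dotProduct_mulVec, ← mulVec_transpose, ← conjTranspose_eq_transpose_of_trivial, hD]

lemma posSemidef_sub_smul_vecMulVec {D : Matrix κ κ ℝ} (hD : D.PosSemidef) (x : κ → ℝ) {t : ℝ}
    (ht : 0 ≤ t) (htx : t * (x ⬝ᵥ D *ᵥ x) ≤ 1) :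
    (D - t • vecMulVec (D *ᵥ x) (D *ᵥ x)).PosSemidef := by
  refine .of_dotProduct_mulVec_nonneg
    (hD.1.sub ((posSemidef_vecMulVec_self (D *ᵥ x)).smul ht).1) fun y => ?_
  rw [star_trivial, sub_mulVec, dotProduct_sub, smul_mulVec, dotProduct_smul, smul_eq_mul,
    dotProduct_vecMulVec_mulVec]
  set a := D *ᵥ x ⬝ᵥ y
  have hnonneg := hD.dotProduct_mulVec_nonneg (y - (t * a) • x)
  have hxy : x ⬝ᵥ D *ᵥ y = a := (mulVec_dotProduct_of_isHermitian hD.1 x y).symm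
  have hyx : y ⬝ᵥ D *ᵥ x = a := dotProduct_comm _ _
  simp only [star_trivial, mulVec_sub, mulVec_smul, dotProduct_sub, sub_dotProduct,
    smul_dotProduct, dotProduct_smul, smul_eq_mul, hxy, hyx] at hnonneg
  nlinarith [mul_nonneg (mul_nonneg ht (sq_nonneg a)) (sub_nonneg.mpr htx)]

end RankOneUpdate

section RankOneVariation

lemma le_of_eventually_one_add_mul_rpow_le_nhdsLT {a b q : ℝ} (hq : 0 < q)
    (h : ∀ᶠ t in 𝓝[<] (0 : ℝ), (1 + t * a) ^ q ≤ 1 + t * (q * b)) : b ≤ a := by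
  have hlin (c : ℝ) : HasDerivAt (fun t : ℝ => 1 + t * c) c 0 := by
    simpa using ((hasDerivAt_id (0 : ℝ)).mul_const c).const_add 1
  have hderiv : HasDerivAt (fun t : ℝ => (1 + t * a) ^ q - (1 + t * (q * b)))
      (a * q - q * b) 0 := by
    simpa [Pi.sub_def] using
      ((hlin a).rpow_const (p := q) (Or.inl (by simp))).sub (hlin (q * b))
  have hslope := (hasDerivAt_iff_tendsto_slope.mp hderiv).mono_left
    (nhdsWithin_mono 0 fun t (ht : t ∈ Set.Iio 0) => ne_of_lt ht)
  have hnonneg : 0 ≤ a * q - q * b := by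
    refine ge_of_tendsto hslope ?_
    filter_upwards [h, self_mem_nhdsWithin] with t ht ht0
    rw [slope_def_field]
    simp only [zero_mul, add_zero, Real.one_rpow, sub_self, sub_zero]
    exact div_nonneg_of_nonpos (sub_nonpos.2 ht) (le_of_lt ht0)
  nlinarith

lemma le_of_eventually_one_add_mul_rpow_le_nhdsGT {a b q : ℝ} (hq : 0 < q)
    (h : ∀ᶠ t in 𝓝[>] (0 : ℝ), (1 + t * a) ^ q ≤ 1 + t * (q * b)) : a ≤ b := by
  have hneg : Tendsto (fun t : ℝ => -t) (𝓝[<] 0) (𝓝[>] 0) := by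
    simpa using tendsto_neg_nhdsLT (a := (0 : ℝ))
  have hle := le_of_eventually_one_add_mul_rpow_le_nhdsLT (a := -a) (b := -b) hq
    ((hneg.eventually h).mono fun t ht => by simpa using ht)
  linarith

end RankOneVariation

section Maximizer

variable {ι : Type*} [Fintype ι] {n : Type*} {m : ι → Type*}
  [∀ i, Fintype (m i)] {C : ∀ i, Matrix (m i) n ℝ} {p : ι → ℝ} {Q B : ∀ i, Matrix (m i) (m i) ℝ}

/-- The constraint `0 < Bᵢ ≤ Qᵢ` for all `i`. -/
def Admissible (Q B : ∀ i, Matrix (m i) (m i) ℝ) : Prop :=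
  ∀ i, (B i).PosDef ∧ (Q i - B i).PosSemidef

lemma blMatrix_update_add [DecidableEq ι] (i : ι) (t : ℝ) (v : m i → ℝ) :
    blMatrix C p (Function.update B i (B i + t • vecMulVec v v)) =
      blMatrix C p B + (t * p i) • vecMulVec ((C i)ᵀ *ᵥ v) ((C i)ᵀ *ᵥ v) := by
  have hterm : (C i)ᵀ * (B i + t • vecMulVec v v) * C i =
      (C i)ᵀ * B i * C i + t • vecMulVec ((C i)ᵀ *ᵥ v) ((C i)ᵀ *ᵥ v) := by
    rw [Matrix.mul_add, Matrix.add_mul, Matrix.mul_smul, Matrix.smul_mul, mul_vecMulVec,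
      vecMulVec_mul, ← mulVec_transpose]
  have hrest : ∑ j ∈ Finset.univ.erase i, p j • ((C j)ᵀ *
      Function.update B i (B i + t • vecMulVec v v) j * C j) =
      ∑ j ∈ Finset.univ.erase i, p j • ((C j)ᵀ * B j * C j) :=
    Finset.sum_congr rfl fun j hj => by rw [Function.update_of_ne (Finset.ne_of_mem_erase hj)]
  rw [blMatrix, ← Finset.add_sum_erase _ _ (Finset.mem_univ i), Function.update_self, hrest, hterm,
    smul_add, smul_smul, mul_comm (p i) t, add_right_comm,
    Finset.add_sum_erase _ (fun j => p j • ((C j)ᵀ * B j * C j)) (Finset.mem_univ i), blMatrix]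

lemma posDef_blMatrix [Fintype n] (hker : ∀ x : n → ℝ, (∀ i, C i *ᵥ x = 0) → x = 0)
    (hp : ∀ i, 0 < p i) (hB : ∀ i, (B i).PosDef) : (blMatrix C p B).PosDef := by
  have hsemidef (i : ι) : (p i • ((C i)ᵀ * B i * C i)).PosSemidef := by
    have hconj := (hB i).posSemidef.conjTranspose_mul_mul_same (C i)
    rw [conjTranspose_eq_transpose_of_trivial] at hconj
    exact hconj.smul (hp i).le
  refine .of_dotProduct_mulVec_pos (posSemidef_sum _ fun i _ => hsemidef i).1 fun x hx => ?_
  obtain ⟨i, hi⟩ : ∃ i, C i *ᵥ x ≠ 0 := by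
    by_contra! h
    exact hx (hker x h)
  rw [star_trivial, dotProduct_comm, blMatrix_mulVec_dotProduct]
  simp only [dotProduct_comm (B _ *ᵥ _)]
  exact Finset.sum_pos' (fun j _ => mul_nonneg (hp j).le
      ((hB j).posSemidef.dotProduct_mulVec_nonneg (C j *ᵥ x)))
    ⟨i, Finset.mem_univ i, mul_pos (hp i) ((hB i).dotProduct_mulVec_pos hi)⟩

variable [∀ i, DecidableEq (m i)]

/-- The numerator `∏ᵢ det(Bᵢ)^{pᵢ}` of the Gaussian Brascamp–Lieb functional. -/
def detProd (p : ι → ℝ) (B : ∀ i, Matrix (m i) (m i) ℝ) : ℝ :=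
  ∏ i, (B i).det ^ p i

lemma detProd_pos (hB : ∀ i, (B i).PosDef) : 0 < detProd p B :=
  Finset.prod_pos fun i _ => Real.rpow_pos_of_pos (hB i).det_pos _

lemma detProd_update_add [DecidableEq ι] {i : ι} (hB : (B i).PosDef) {t : ℝ} {v : m i → ℝ}
    (ht : (B i + t • vecMulVec v v).PosDef) :
    detProd p (Function.update B i (B i + t • vecMulVec v v)) =
      detProd p B * (1 + t * (v ⬝ᵥ (B i)⁻¹ *ᵥ v)) ^ p i := by
  have hrest : ∏ j ∈ Finset.univ.erase i,
      (Function.update B i (B i + t • vecMulVec v v) j).det ^ p j =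
      ∏ j ∈ Finset.univ.erase i, (B j).det ^ p j :=
    Finset.prod_congr rfl fun j hj => by rw [Function.update_of_ne (Finset.ne_of_mem_erase hj)]
  have hdet := det_add_smul_vecMulVec hB.det_pos.ne' t v
  have hfactor : 0 ≤ 1 + t * (v ⬝ᵥ (B i)⁻¹ *ᵥ v) :=
    (pos_of_mul_pos_right (hdet ▸ ht.det_pos) hB.det_pos.le).le
  rw [detProd, detProd, ← Finset.mul_prod_erase _ _ (Finset.mem_univ i), Function.update_self,
    hrest, hdet, Real.mul_rpow hB.det_pos.le hfactor,
    ← Finset.mul_prod_erase _ (fun j => (B j).det ^ p j) (Finset.mem_univ i)]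
  ring

variable [Fintype n] [DecidableEq n]

/-- The Gaussian Brascamp–Lieb functional `∏ᵢ det(Bᵢ)^{pᵢ} / det(∑ᵢ pᵢ Cᵢᵀ Bᵢ Cᵢ)`, whose supremum
over admissible `B` is the square of the Brascamp–Lieb constant. -/
def blRatio (C : ∀ i, Matrix (m i) n ℝ) (p : ι → ℝ) (B : ∀ i, Matrix (m i) (m i) ℝ) : ℝ :=
  detProd p B / (blMatrix C p B).det

lemma blRatio_pos (hker : ∀ x : n → ℝ, (∀ i, C i *ᵥ x = 0) → x = 0) (hp : ∀ i, 0 < p i)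
    (hB : ∀ i, (B i).PosDef) : 0 < blRatio C p B :=
  div_pos (detProd_pos hB) (posDef_blMatrix hker hp hB).det_pos

lemma dotProduct_blSlack_mulVec (i : ι) (v : m i → ℝ) :
    v ⬝ᵥ blSlack C p B i *ᵥ v = v ⬝ᵥ (B i)⁻¹ *ᵥ v -
      ((C i)ᵀ *ᵥ v) ⬝ᵥ (blMatrix C p B)⁻¹ *ᵥ ((C i)ᵀ *ᵥ v) := by
  rw [blSlack, sub_mulVec, dotProduct_sub, ← mulVec_mulVec, ← mulVec_mulVec,
    dotProduct_mulVec v (C i), ← mulVec_transpose]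

lemma one_add_mul_rpow_le_of_isMaxOn (hker : ∀ x : n → ℝ, (∀ i, C i *ᵥ x = 0) → x = 0)
    (hp : ∀ i, 0 < p i) (hB : Admissible Q B)
    (hmax : IsMaxOn (blRatio C p) {B' | Admissible Q B'} B) {i : ι} {v : m i → ℝ} {t : ℝ}
    (ht : (B i + t • vecMulVec v v).PosDef)
    (htQ : (Q i - (B i + t • vecMulVec v v)).PosSemidef) :
    (1 + t * (v ⬝ᵥ (B i)⁻¹ *ᵥ v)) ^ p i ≤ 1 + t *
      (p i * (((C i)ᵀ *ᵥ v) ⬝ᵥ (blMatrix C p B)⁻¹ *ᵥ ((C i)ᵀ *ᵥ v))) := by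
  classical
  set B' := Function.update B i (B i + t • vecMulVec v v) with hB'
  have hadm : Admissible Q B' := fun j => by
    rcases eq_or_ne j i with rfl | hj
    · rw [hB', Function.update_self]; exact ⟨ht, htQ⟩
    · rw [hB', Function.update_of_ne hj]; exact hB j
  have hM := (posDef_blMatrix hker hp fun j => (hB j).1).det_pos
  have hM' := (posDef_blMatrix hker hp fun j => (hadm j).1).det_pos
  have hle : detProd p B' * (blMatrix C p B).det ≤ detProd p B * (blMatrix C p B').det :=
    (div_le_div_iff₀ hM' hM).1 (hmax hadm)
  rw [hB', detProd_update_add (hB i).1 ht, blMatrix_update_add, det_add_smul_vecMulVec hM.ne',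
    mul_right_comm, ← mul_assoc, mul_assoc t] at hle
  exact le_of_mul_le_mul_left hle (mul_pos (detProd_pos fun j => (hB j).1) hM)

lemma eventually_mul_lt_one (c : ℝ) : ∀ᶠ t in 𝓝 (0 : ℝ), t * c < 1 := by
  have hlim : Tendsto (fun t : ℝ => t * c) (𝓝 0) (𝓝 0) := by
    simpa using (tendsto_id (x := 𝓝 (0 : ℝ))).mul_const c
  exact hlim.eventually (gt_mem_nhds one_pos)

lemma posSemidef_blSlack_of_isMaxOn (hker : ∀ x : n → ℝ, (∀ i, C i *ᵥ x = 0) → x = 0)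
    (hp : ∀ i, 0 < p i) (hB : Admissible Q B)
    (hmax : IsMaxOn (blRatio C p) {B' | Admissible Q B'} B) (i : ι) :
    (blSlack C p B i).PosSemidef := by
  have hM := posDef_blMatrix hker hp fun j => (hB j).1
  refine .of_dotProduct_mulVec_nonneg ((hB i).1.inv.1.sub ?_) fun v => ?_
  · rw [← conjTranspose_eq_transpose_of_trivial (C i)]
    exact isHermitian_mul_mul_conjTranspose (C i) hM.inv.1
  rw [star_trivial, dotProduct_blSlack_mulVec, sub_nonneg]
  refine le_of_eventually_one_add_mul_rpow_le_nhdsLT (hp i) ?_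
  filter_upwards [nhdsWithin_le_nhds (eventually_mul_lt_one (-(v ⬝ᵥ (B i)⁻¹ *ᵥ v))),
    self_mem_nhdsWithin] with t ht ht0
  have ht0' : 0 ≤ -t := neg_nonneg.2 (le_of_lt ht0)
  refine one_add_mul_rpow_le_of_isMaxOn hker hp hB hmax ?_ ?_
  · have hsemidef := posSemidef_sub_smul_vecMulVec (hB i).1.posSemidef ((B i)⁻¹ *ᵥ v) ht0' (by
      rw [mul_inv_mulVec (hB i).1, dotProduct_comm]; linarith)
    rw [mul_inv_mulVec (hB i).1, neg_smul, sub_neg_eq_add] at hsemidef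
    rw [hsemidef.posDef_iff_det_ne_zero, det_add_smul_vecMulVec (hB i).1.det_pos.ne']
    exact mul_ne_zero (hB i).1.det_pos.ne' (by linarith)
  · rw [← sub_sub, sub_eq_add_neg, ← neg_smul]
    exact (hB i).2.add ((posSemidef_vecMulVec_self v).smul ht0')

lemma sub_mul_blSlack_of_isMaxOn (hker : ∀ x : n → ℝ, (∀ i, C i *ᵥ x = 0) → x = 0)
    (hp : ∀ i, 0 < p i) (hB : Admissible Q B)
    (hmax : IsMaxOn (blRatio C p) {B' | Admissible Q B'} B) (i : ι) :
    (Q i - B i) * blSlack C p B i = 0 := by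
  have hslack := posSemidef_blSlack_of_isMaxOn hker hp hB hmax i
  -- `B i` may be moved a little in the direction `v vᵀ` for `v` in the range of `Q i - B i`.
  have hrange (x : m i → ℝ) : blSlack C p B i *ᵥ ((Q i - B i) *ᵥ x) = 0 := by
    set v := (Q i - B i) *ᵥ x
    rw [← hslack.dotProduct_mulVec_zero_iff]
    refine le_antisymm ?_ (hslack.dotProduct_mulVec_nonneg v)
    rw [star_trivial, dotProduct_blSlack_mulVec, sub_nonpos]
    refine le_of_eventually_one_add_mul_rpow_le_nhdsGT (hp i) ?_
    filter_upwards [nhdsWithin_le_nhds (eventually_mul_lt_one (x ⬝ᵥ (Q i - B i) *ᵥ x)),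
      self_mem_nhdsWithin] with t ht ht0
    have ht0' : 0 ≤ t := le_of_lt ht0
    refine one_add_mul_rpow_le_of_isMaxOn hker hp hB hmax
      ((hB i).1.add_posSemidef ((posSemidef_vecMulVec_self v).smul ht0')) ?_
    rw [← sub_sub]
    exact posSemidef_sub_smul_vecMulVec (hB i).2 x ht0' ht.le
  have hzero : blSlack C p B i * (Q i - B i) = 0 :=
    ext_of_mulVec_single fun j => by rw [← mulVec_mulVec, hrange, zero_mulVec]
  have hadjoint := congrArg conjTranspose hzero
  rwa [conjTranspose_mul, hslack.1, (hB i).2.1, conjTranspose_zero] at hadjoint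

lemma isCriticalPoint_of_isMaxOn (hker : ∀ x : n → ℝ, (∀ i, C i *ᵥ x = 0) → x = 0)
    (hp : ∀ i, 0 < p i) (hB : Admissible Q B)
    (hmax : IsMaxOn (blRatio C p) {B' | Admissible Q B'} B) : IsCriticalPoint C p Q B where
  posDef i := (hB i).1
  posDef_blMatrix := posDef_blMatrix hker hp fun i => (hB i).1
  posSemidef_blSlack := posSemidef_blSlack_of_isMaxOn hker hp hB hmax
  sub_mul_blSlack := sub_mul_blSlack_of_isMaxOn hker hp hB hmax

end Maximizer

/-! ### Existence of maximizers for perturbed exponents -/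

section PsdBox

lemma isClosed_setOf_posSemidef {κ : Type*} [Finite κ] :
    IsClosed {A : Matrix κ κ ℝ | A.PosSemidef} := by
  have := Fintype.ofFinite κ
  simp only [posSemidef_iff_dotProduct_mulVec, Set.ofPred_and, Set.ofPred_forall]
  refine IsClosed.inter ?_ (isClosed_iInter fun x => ?_)
  · exact isClosed_eq (by fun_prop) continuous_id
  · exact isClosed_le continuous_const (by fun_prop)

lemma abs_apply_le_of_posSemidef {κ : Type*} [Finite κ] {A Q : Matrix κ κ ℝ}
    (hA : A.PosSemidef) (hAQ : (Q - A).PosSemidef) (a b : κ) : |A a b| ≤ Q a a + Q b b := by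
  classical
  have := Fintype.ofFinite κ
  have hsymm : A b a = A a b := by simpa using congrFun (congrFun hA.1 a) b
  have hdiag (c : κ) : 0 ≤ A c c ∧ A c c ≤ Q c c :=
    ⟨hA.diag_nonneg, sub_nonneg.1 hAQ.diag_nonneg⟩
  have hadd := hA.dotProduct_mulVec_nonneg (Pi.single a 1 + Pi.single b 1)
  have hsub := hA.dotProduct_mulVec_nonneg (Pi.single a 1 - Pi.single b 1)
  simp only [star_trivial, mulVec_add, mulVec_sub, add_dotProduct, sub_dotProduct, dotProduct_add,
    dotProduct_sub, mulVec_single_one, single_one_dotProduct, col_apply, hsymm] at hadd hsub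
  rw [abs_le]
  constructor <;> linarith [hdiag a, hdiag b]

variable {ι : Type*} {m : ι → Type*}

/-- The compact set of families `0 ≤ B ≤ Q` of matrices, closing up the admissible ones. -/
def psdBox (Q : ∀ i, Matrix (m i) (m i) ℝ) : Set (∀ i, Matrix (m i) (m i) ℝ) :=
  {B | ∀ i, (B i).PosSemidef ∧ (Q i - B i).PosSemidef}

lemma isCompact_psdBox [∀ i, Finite (m i)] (Q : ∀ i, Matrix (m i) (m i) ℝ) :
    IsCompact (psdBox Q) := by
  have hentries : IsCompact (Set.pi Set.univ fun i => {A : Matrix (m i) (m i) ℝ |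
      A ∈ Set.pi Set.univ fun a => Set.pi Set.univ fun b =>
        Set.Icc (-(Q i a a + Q i b b)) (Q i a a + Q i b b)}) :=
    isCompact_univ_pi fun i => isCompact_univ_pi fun a => isCompact_univ_pi fun b => isCompact_Icc
  refine hentries.of_isClosed_subset ?_ fun B hB i _ a _ b _ =>
    abs_le.mp (abs_apply_le_of_posSemidef (hB i).1 (hB i).2 a b)
  simp only [psdBox, Set.ofPred_forall, Set.ofPred_and]
  have happly (i : ι) : Continuous fun B : ∀ i, Matrix (m i) (m i) ℝ => B i := continuous_apply i
  exact isClosed_iInter fun i => (isClosed_setOf_posSemidef.preimage (happly i)).inter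
    (isClosed_setOf_posSemidef.preimage (continuous_const.sub (happly i)))

lemma admissible_self {Q : ∀ i, Matrix (m i) (m i) ℝ} (hQ : ∀ i, (Q i).PosDef) :
    Admissible Q Q := fun i => ⟨hQ i, by rw [sub_self]; exact PosSemidef.zero⟩

lemma Admissible.mem_psdBox {Q B : ∀ i, Matrix (m i) (m i) ℝ} (hB : Admissible Q B) :
    B ∈ psdBox Q := fun i =>
  ⟨(hB i).1.posSemidef, (hB i).2⟩

end PsdBox

section Existence

variable {ι : Type*} [Fintype ι] {n : Type*} {m : ι → Type*} [∀ i, Fintype (m i)]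
  {C : ∀ i, Matrix (m i) n ℝ} {p : ι → ℝ} {Q B : ∀ i, Matrix (m i) (m i) ℝ}

lemma blMatrix_const_mul (s : ℝ) : blMatrix C (fun i => s * p i) B = s • blMatrix C p B := by
  simp only [blMatrix, Finset.smul_sum, smul_smul]

variable [∀ i, DecidableEq (m i)]

lemma posDef_of_detProd_pos (hp : ∀ i, p i ≠ 0) (hB : ∀ i, (B i).PosSemidef)
    (h : 0 < detProd p B) (i : ι) : (B i).PosDef :=
  (hB i).posDef_iff_det_ne_zero.mpr fun hi =>
    h.ne' (Finset.prod_eq_zero (Finset.mem_univ i) (by rw [hi, Real.zero_rpow (hp i)]))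

lemma continuous_detProd (hp : ∀ i, 0 ≤ p i) :
    Continuous (detProd p : (∀ i, Matrix (m i) (m i) ℝ) → ℝ) :=
  continuous_finsetProd _ fun i _ =>
    ((continuous_apply i).matrix_det).rpow_const fun _ => Or.inr (hp i)

lemma exists_detProd_le (hp : ∀ i, 0 ≤ p i) (Q : ∀ i, Matrix (m i) (m i) ℝ) :
    ∃ g, ∀ B, Admissible Q B → detProd p B ≤ g := by
  obtain ⟨g, hg⟩ := (isCompact_psdBox Q).bddAbove_image (continuous_detProd hp).continuousOn
  exact ⟨g, fun B hB => hg ⟨B, hB.mem_psdBox, rfl⟩⟩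

lemma admissible_of_mem_psdBox (hp : ∀ i, p i ≠ 0) (hB : B ∈ psdBox Q) (h : 0 < detProd p B) :
    Admissible Q B := fun i =>
  ⟨posDef_of_detProd_pos hp (fun j => (hB j).1) h i, (hB i).2⟩

lemma exists_admissible_forall_le (hp : ∀ i, 0 < p i) {Φ : (∀ i, Matrix (m i) (m i) ℝ) → ℝ}
    (hΦ : ∀ B, Admissible Q B → ContinuousAt Φ B) {δ : ℝ} (hδ : 0 < δ) (hB : Admissible Q B)
    (hδB : δ ≤ detProd p B) : ∃ B₀, Admissible Q B₀ ∧
      ∀ B', Admissible Q B' → δ ≤ detProd p B' → Φ B' ≤ Φ B₀ := by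
  set K := psdBox Q ∩ {B | δ ≤ detProd p B}
  have hKadm : ∀ B ∈ K, Admissible Q B := fun B hB =>
    admissible_of_mem_psdBox (fun i => (hp i).ne') hB.1 (hδ.trans_le hB.2)
  have hKcompact : IsCompact K := (isCompact_psdBox Q).inter_right
    (isClosed_le continuous_const (continuous_detProd fun i => (hp i).le))
  obtain ⟨B₀, hB₀, hmax⟩ := hKcompact.exists_isMaxOn ⟨B, hB.mem_psdBox, hδB⟩ fun B hB =>
    (hΦ B (hKadm B hB)).continuousWithinAt
  exact ⟨B₀, hKadm B₀ hB₀, fun B' hB' hδB' => hmax ⟨hB'.mem_psdBox, hδB'⟩⟩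

variable [Fintype n] [DecidableEq n]

lemma Admissible.continuousAt_blRatio (hB : Admissible Q B)
    (hker : ∀ x : n → ℝ, (∀ i, C i *ᵥ x = 0) → x = 0) (hp : ∀ i, 0 < p i) :
    ContinuousAt (blRatio C p) B := by
  have hcont : Continuous fun B : ∀ i, Matrix (m i) (m i) ℝ => (blMatrix C p B).det := by
    unfold blMatrix
    refine Continuous.matrix_det (continuous_finsetSum _ fun i _ => ?_)
    have := continuous_apply (A := fun i => Matrix (m i) (m i) ℝ) i
    fun_prop
  exact (continuous_detProd fun i => (hp i).le).continuousAt.div hcont.continuousAt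
    (posDef_blMatrix hker hp fun i => (hB i).1).det_pos.ne'

lemma blRatio_one_add_mul (hB : ∀ i, (B i).PosDef) (ε : ℝ) :
    blRatio C (fun i => (1 + ε) * p i) B =
      (detProd p B ^ ε * blRatio C p B) / (1 + ε) ^ Fintype.card n := by
  have hdetProd : detProd (fun i => (1 + ε) * p i) B = detProd p B ^ ε * detProd p B := by
    have hnonneg (i : ι) : 0 ≤ (B i).det ^ p i := Real.rpow_nonneg (hB i).det_pos.le _
    rw [← Real.rpow_add_one (detProd_pos hB).ne', detProd, detProd,
      ← Real.finsetProd_rpow _ _ fun i _ => hnonneg i]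
    exact Finset.prod_congr rfl fun i _ => by
      rw [← Real.rpow_mul (hB i).det_pos.le, mul_comm, add_comm 1 ε]
  rw [blRatio, hdetProd, blMatrix_const_mul, det_smul, blRatio]
  ring

/-- The supremum of `blRatio C p` itself need not be attained; the factor `detProd p B ^ ε` makes
the functional small near the degenerate families `B`. -/
lemma exists_isMaxOn_detProd_rpow_mul_blRatio
    (hker : ∀ x : n → ℝ, (∀ i, C i *ᵥ x = 0) → x = 0) (hp : ∀ i, 0 < p i)
    (hQ : ∀ i, (Q i).PosDef) {β : ℝ} (hβ : ∀ B, Admissible Q B → blRatio C p B ≤ β) {ε : ℝ}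
    (hε : 0 < ε) : ∃ B, Admissible Q B ∧
      IsMaxOn (fun B => detProd p B ^ ε * blRatio C p B) {B | Admissible Q B} B := by
  have hratio := blRatio_pos hker hp hQ
  have hβ0 : 0 < β := hratio.trans_le (hβ Q (admissible_self hQ))
  -- Where `detProd p B < δ` the functional is at most `β * δ ^ ε`, its value at `Q`.
  set δ := (blRatio C p Q / β) ^ ε⁻¹ * detProd p Q with hδ
  have hδ0 : 0 < δ := mul_pos (Real.rpow_pos_of_pos (div_pos hratio hβ0) _) (detProd_pos hQ)
  have hδε : δ ^ ε * β = detProd p Q ^ ε * blRatio C p Q := by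
    rw [hδ, Real.mul_rpow (Real.rpow_nonneg (div_pos hratio hβ0).le _) (detProd_pos hQ).le,
      Real.rpow_inv_rpow (div_pos hratio hβ0).le hε.ne']
    field_simp
  have hδQ : δ ≤ detProd p Q := mul_le_of_le_one_left (detProd_pos hQ).le
    (Real.rpow_le_one (div_pos hratio hβ0).le
      ((div_le_one hβ0).2 (hβ Q (admissible_self hQ))) (inv_pos.2 hε).le)
  obtain ⟨B, hB, hmax⟩ := exists_admissible_forall_le hp
    (Φ := fun B => detProd p B ^ ε * blRatio C p B) (fun B hB =>
      ((continuous_detProd fun i => (hp i).le).rpow_const fun _ => Or.inr hε.le).continuousAt.mul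
        (hB.continuousAt_blRatio hker hp)) hδ0 (admissible_self hQ) hδQ
  refine ⟨B, hB, fun B' hB' => ?_⟩
  rcases le_or_gt δ (detProd p B') with hδB' | hδB'
  · exact hmax B' hB' hδB'
  · have hpos := detProd_pos (p := p) fun i => (hB' i).1
    calc detProd p B' ^ ε * blRatio C p B' ≤ δ ^ ε * β := by
          gcongr
          · exact (blRatio_pos hker hp fun i => (hB' i).1).le
          · exact hβ B' hB'
      _ = detProd p Q ^ ε * blRatio C p Q := hδε
      _ ≤ detProd p B ^ ε * blRatio C p B := hmax Q (admissible_self hQ) hδQ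

lemma exists_isCriticalPoint_one_add_mul
    (hker : ∀ x : n → ℝ, (∀ i, C i *ᵥ x = 0) → x = 0) (hp : ∀ i, 0 < p i)
    (hQ : ∀ i, (Q i).PosDef) {β : ℝ} (hβ : ∀ B, Admissible Q B → blRatio C p B ≤ β) {ε : ℝ}
    (hε : 0 < ε) : ∃ B, Admissible Q B ∧ IsCriticalPoint C (fun i => (1 + ε) * p i) Q B := by
  obtain ⟨B, hB, hmax⟩ := exists_isMaxOn_detProd_rpow_mul_blRatio hker hp hQ hβ hε
  refine ⟨B, hB, isCriticalPoint_of_isMaxOn hker (fun i => by have := hp i; positivity) hB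
    fun B' hB' => ?_⟩
  change blRatio C _ B' ≤ blRatio C _ B
  rw [blRatio_one_add_mul fun i => (hB' i).1, blRatio_one_add_mul fun i => (hB i).1]
  exact div_le_div_of_nonneg_right (hmax hB') (by positivity)

end Existence

section GaussianBound

variable {ι : Type*} [Fintype ι] {n : ℕ} {k : ι → ℕ} {C : ∀ i, Matrix (Fin (k i)) (Fin n) ℝ}
  {p : ι → ℝ} {Q B : ∀ i, Matrix (Fin (k i)) (Fin (k i)) ℝ}

lemma prod_rpow_const_mul {s : ℝ} (hs : 0 ≤ s) (t : ι → ℝ≥0∞) :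
    ∏ i, t i ^ (s * p i) = (∏ i, t i ^ p i) ^ s := by
  rw [← ENNReal.prod_rpow_of_nonneg hs]
  exact Finset.prod_congr rfl fun i _ => by rw [← ENNReal.rpow_mul, mul_comm]

lemma prod_ofReal_sqrt_det_mul_rpow (hp : ∀ i, 0 ≤ p i) (hB : ∀ i, (B i).PosDef)
    (I : ι → ℝ≥0∞) : ∏ i, (ENNReal.ofReal (√(B i).det) * I i) ^ p i =
      ENNReal.ofReal (√(detProd p B)) * ∏ i, I i ^ p i := by
  have hsqrt : √(detProd p B) = ∏ i, √(B i).det ^ p i := by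
    simp only [Real.sqrt_eq_rpow, detProd]
    rw [← Real.finsetProd_rpow _ _ fun i _ => Real.rpow_nonneg (hB i).det_pos.le _]
    exact Finset.prod_congr rfl fun i _ => by
      rw [← Real.rpow_mul (hB i).det_pos.le, ← Real.rpow_mul (hB i).det_pos.le, mul_comm]
  rw [hsqrt, ofReal_prod_rpow hp fun i => Real.sqrt_nonneg _, ← Finset.prod_mul_distrib]
  exact Finset.prod_congr rfl fun i _ => ENNReal.mul_rpow_of_nonneg _ _ (hp i)

lemma exists_lintegral_blProduct_rpow_le
    (hker : ∀ x : Fin n → ℝ, (∀ i, C i *ᵥ x = 0) → x = 0) (hp : ∀ i, 0 < p i)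
    (hQ : ∀ i, (Q i).PosDef) {β : ℝ} (hβ : ∀ B, Admissible Q B → blRatio C p B ≤ β) {ε : ℝ}
    (hε : 0 < ε) : ∃ B, Admissible Q B ∧
      ∀ f : ∀ i, (Fin (k i) → ℝ) → ℝ≥0∞, (∀ i, Measurable (f i)) →
        (∀ i, MidLogConvex (f i) (Q i)) → (∀ i, ∫⁻ y, f i y ≠ ⊤) →
        ENNReal.ofReal (√(blMatrix C p B).det) * ∫⁻ x, blProduct C p f x ^ (1 + ε) ≤
          (ENNReal.ofReal (√(detProd p B)) * ∏ i, (∫⁻ y, f i y) ^ p i) ^ (1 + ε) := by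
  obtain ⟨B, hB, hcrit⟩ := exists_isCriticalPoint_one_add_mul hker hp hQ hβ hε
  have hε1 : 0 < 1 + ε := by positivity
  have hdet : (blMatrix C p B).det ≤ (blMatrix C (fun i => (1 + ε) * p i) B).det := by
    rw [blMatrix_const_mul, det_smul, Fintype.card_fin]
    exact le_mul_of_one_le_left (posDef_blMatrix hker hp fun i => (hB i).1).det_pos.le
      (one_le_pow₀ (by linarith))
  refine ⟨B, hB, fun f hf hfQ hfin => ?_⟩
  have hle := hcrit.lintegral_blProduct_le (fun i => (mul_pos hε1 (hp i)).le) hf hfQ hfin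
  simp only [blProduct, prod_rpow_const_mul hε1.le] at hle
  rw [prod_ofReal_sqrt_det_mul_rpow (fun i => (hp i).le) fun i => (hB i).1] at hle
  exact (mul_le_mul_left (ENNReal.ofReal_le_ofReal (Real.sqrt_le_sqrt hdet)) _).trans hle

end GaussianBound

/-! ### The regularized Brascamp–Lieb inequality -/

section BrascampLieb

lemma tendsto_const_rpow_of_ne_top {α : Type*} {l : Filter α} {x : ℝ≥0∞} (hx0 : x ≠ 0)
    (hx : x ≠ ⊤) {u : α → ℝ} {a : ℝ} (hu : Tendsto u l (𝓝 a)) :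
    Tendsto (fun j => x ^ u j) l (𝓝 (x ^ a)) := by
  have hreal : 0 < x.toReal := ENNReal.toReal_pos hx0 hx
  have hlim := ENNReal.tendsto_ofReal ((Real.continuousAt_const_rpow hreal.ne').tendsto.comp hu)
  simpa only [Function.comp_def, ← ENNReal.ofReal_rpow_of_pos hreal, ENNReal.ofReal_toReal hx]
    using hlim

lemma tendsto_rpow_one_add {α : Type*} {l : Filter α} {u : α → ℝ} (hu : Tendsto u l (𝓝 0))
    (hu0 : ∀ j, 0 < u j) (x : ℝ≥0∞) : Tendsto (fun j => x ^ (1 + u j)) l (𝓝 x) := by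
  have hpos : ∀ j, 0 < 1 + u j := fun j => by linarith [hu0 j]
  rcases eq_or_ne x 0 with rfl | hx0
  · simp only [ENNReal.zero_rpow_of_pos (hpos _), tendsto_const_nhds]
  rcases eq_or_ne x ⊤ with rfl | hx
  · simp only [ENNReal.top_rpow_of_pos (hpos _), tendsto_const_nhds]
  simpa using tendsto_const_rpow_of_ne_top hx0 hx (hu.const_add 1)

variable {ι : Type*} [Fintype ι] {p : ι → ℝ}

lemma prod_rpow_eq_top (hp : ∀ i, 0 < p i) {I : ι → ℝ≥0∞} (hI : ∀ i, I i ≠ 0) {j : ι}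
    (hj : I j = ⊤) : ∏ i, I i ^ p i = ⊤ := by
  classical
  rw [← Finset.mul_prod_erase _ _ (Finset.mem_univ j), hj, ENNReal.top_rpow_of_pos (hp j)]
  refine ENNReal.top_mul (Finset.prod_ne_zero_iff.2 fun i _ => ?_)
  simp [ENNReal.rpow_eq_zero_iff, hI i, (hp i).le]

variable {n : ℕ} {k : ι → ℕ} {C : ∀ i, Matrix (Fin (k i)) (Fin n) ℝ}
  {Q : ∀ i, Matrix (Fin (k i)) (Fin (k i)) ℝ} {f : ∀ i, (Fin (k i) → ℝ) → ℝ≥0∞}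

lemma exists_forall_lintegral_blProduct_rpow_le
    (hker : ∀ x : Fin n → ℝ, (∀ i, C i *ᵥ x = 0) → x = 0) (hp : ∀ i, 0 < p i)
    (hQ : ∀ i, (Q i).PosDef) {β : ℝ} (hβ : ∀ B, Admissible Q B → blRatio C p B ≤ β)
    (hf : ∀ i, Measurable (f i)) (hfQ : ∀ i, MidLogConvex (f i) (Q i))
    (hfin : ∀ i, ∫⁻ y, f i y ≠ ⊤) : ∃ g : ℝ, 0 < g ∧ ∀ ε : ℝ, 0 < ε →
      ∫⁻ x, blProduct C p f x ^ (1 + ε) ≤ ENNReal.ofReal (√β) *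
        (ENNReal.ofReal g ^ ε * (∏ i, (∫⁻ y, f i y) ^ p i) ^ (1 + ε)) := by
  obtain ⟨g, hg⟩ := exists_detProd_le (fun i => (hp i).le) Q
  have hg0 : 0 < g := (detProd_pos hQ).trans_le (hg Q (admissible_self hQ))
  refine ⟨√g, Real.sqrt_pos.2 hg0, fun ε hε => ?_⟩
  obtain ⟨B, hB, hle⟩ := exists_lintegral_blProduct_rpow_le hker hp hQ hβ hε
  have hM := (posDef_blMatrix hker hp fun i => (hB i).1).det_pos
  set D := ENNReal.ofReal (√(blMatrix C p B).det) with hD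
  set G := ENNReal.ofReal (√(detProd p B)) with hG
  set N := ∏ i, (∫⁻ y, f i y) ^ p i
  have hD0 : D ≠ 0 := by simpa [hD] using hM
  have hGD : G ≤ ENNReal.ofReal (√β) * D := by
    rw [hG, hD, ← ENNReal.ofReal_mul (Real.sqrt_nonneg _), ← Real.sqrt_mul' _ hM.le]
    exact ENNReal.ofReal_le_ofReal (Real.sqrt_le_sqrt ((div_le_iff₀ hM).1 (hβ B hB)))
  have hGg : G ≤ ENNReal.ofReal (√g) :=
    ENNReal.ofReal_le_ofReal (Real.sqrt_le_sqrt (hg B hB))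
  rw [← ENNReal.mul_le_mul_iff_right hD0 ENNReal.ofReal_ne_top]
  calc D * ∫⁻ x, blProduct C p f x ^ (1 + ε) ≤ (G * N) ^ (1 + ε) := hle f hf hfQ hfin
    _ = G * G ^ ε * N ^ (1 + ε) := by
      rw [ENNReal.mul_rpow_of_nonneg _ _ (by positivity),
        ENNReal.rpow_add_of_nonneg _ _ zero_le_one hε.le, ENNReal.rpow_one]
    _ ≤ ENNReal.ofReal (√β) * D * ENNReal.ofReal (√g) ^ ε * N ^ (1 + ε) := by gcongr
    _ = D * (ENNReal.ofReal (√β) * (ENNReal.ofReal (√g) ^ ε * N ^ (1 + ε))) := by ring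

lemma lintegral_blProduct_le_of_ne_top
    (hker : ∀ x : Fin n → ℝ, (∀ i, C i *ᵥ x = 0) → x = 0) (hp : ∀ i, 0 < p i)
    (hQ : ∀ i, (Q i).PosDef) {β : ℝ} (hβ : ∀ B, Admissible Q B → blRatio C p B ≤ β)
    (hf : ∀ i, Measurable (f i)) (hfQ : ∀ i, MidLogConvex (f i) (Q i))
    (hfin : ∀ i, ∫⁻ y, f i y ≠ ⊤) :
    ∫⁻ x, blProduct C p f x ≤ ENNReal.ofReal (√β) * ∏ i, (∫⁻ y, f i y) ^ p i := by
  obtain ⟨g, hg0, hg⟩ := exists_forall_lintegral_blProduct_rpow_le hker hp hQ hβ hf hfQ hfin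
  set F := blProduct C p f
  set N := ∏ i, (∫⁻ y, f i y) ^ p i
  set u : ℕ → ℝ := fun j => 1 / ((j : ℝ) + 1)
  have hu0 : ∀ j, 0 < u j := fun j => by positivity
  have hu : Tendsto u atTop (𝓝 0) := tendsto_one_div_add_atTop_nhds_zero_nat
  have hlim : Tendsto (fun j => ENNReal.ofReal (√β) * (ENNReal.ofReal g ^ u j * N ^ (1 + u j)))
      atTop (𝓝 (ENNReal.ofReal (√β) * N)) := by
    have hglim : Tendsto (fun j => ENNReal.ofReal g ^ u j) atTop (𝓝 1) := by
      simpa using tendsto_const_rpow_of_ne_top (by simpa using hg0) ENNReal.ofReal_ne_top hu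
    have hmul := ENNReal.Tendsto.mul hglim (Or.inl one_ne_zero)
      (tendsto_rpow_one_add hu hu0 N) (Or.inr ENNReal.one_ne_top)
    rw [one_mul] at hmul
    exact ENNReal.Tendsto.const_mul hmul (Or.inr ENNReal.ofReal_ne_top)
  calc ∫⁻ x, F x = ∫⁻ x, liminf (fun j => F x ^ (1 + u j)) atTop :=
        lintegral_congr fun x => (tendsto_rpow_one_add hu hu0 _).liminf_eq.symm
    _ ≤ liminf (fun j => ∫⁻ x, F x ^ (1 + u j)) atTop :=
        lintegral_liminf_le fun j => (measurable_blProduct hf).pow_const _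
    _ ≤ liminf (fun j => ENNReal.ofReal (√β) *
          (ENNReal.ofReal g ^ u j * N ^ (1 + u j))) atTop :=
        liminf_le_liminf (Eventually.of_forall fun j => hg (u j) (hu0 j))
    _ = ENNReal.ofReal (√β) * N := hlim.liminf_eq

lemma lintegral_blProduct_le
    (hker : ∀ x : Fin n → ℝ, (∀ i, C i *ᵥ x = 0) → x = 0) (hp : ∀ i, 0 < p i)
    (hQ : ∀ i, (Q i).PosDef) {β : ℝ} (hβ : ∀ B, Admissible Q B → blRatio C p B ≤ β)
    (hf : ∀ i, Measurable (f i)) (hfQ : ∀ i, MidLogConvex (f i) (Q i))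
    (hpos : ∀ i, ∫⁻ y, f i y ≠ 0) :
    ∫⁻ x, blProduct C p f x ≤ ENNReal.ofReal (√β) * ∏ i, (∫⁻ y, f i y) ^ p i := by
  by_cases hfin : ∀ i, ∫⁻ y, f i y ≠ ⊤
  · exact lintegral_blProduct_le_of_ne_top hker hp hQ hβ hf hfQ hfin
  · push Not at hfin
    obtain ⟨j, hj⟩ := hfin
    have hβ0 : 0 < β := (blRatio_pos hker hp hQ).trans_le (hβ Q (admissible_self hQ))
    rw [prod_rpow_eq_top hp hpos hj, ENNReal.mul_top (by simpa using hβ0)]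
    exact le_top

end BrascampLieb

/-! ### Doubling -/

section Rotation

variable {k : ℕ} {f : (Fin k → ℝ) → ℝ≥0∞} {s : ℝ}

lemma lintegral_ne_zero_of_forall_ne_zero (hf : Measurable f) (hpos : ∀ y, f y ≠ 0) :
    ∫⁻ y, f y ≠ 0 := by
  refine ((lintegral_pos_iff_support hf).2 ?_).ne'
  rw [show Function.support f = Set.univ from Set.eq_univ_of_forall hpos]
  exact Measure.measure_univ_pos.2 (NeZero.ne _)

lemma lintegral_comp_add_smul (hf : Measurable f) (a : Fin k → ℝ) {r : ℝ} (hr : r ≠ 0) :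
    ∫⁻ y, f (a + r • y) = ENNReal.ofReal |(r ^ k)⁻¹| * ∫⁻ y, f y := by
  have hmap := Measure.map_addHaar_smul (volume : Measure (Fin k → ℝ)) hr
  rw [Module.finrank_fin_fun] at hmap
  calc ∫⁻ y, f (a + r • y) = ∫⁻ y, f (a + y) ∂(Measure.map (r • ·) volume) := by
        rw [lintegral_map (by fun_prop) (by fun_prop)]
    _ = ENNReal.ofReal |(r ^ k)⁻¹| * ∫⁻ y, f (a + y) := by
        rw [hmap, lintegral_smul_measure, smul_eq_mul]
    _ = ENNReal.ofReal |(r ^ k)⁻¹| * ∫⁻ y, f y := by rw [lintegral_add_left_eq_self]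

lemma lintegral_lintegral_rotate {g : (Fin k → ℝ) → ℝ≥0∞} (hf : Measurable f) (hg : Measurable g)
    (hs : 2 * s ^ 2 = 1) :
    ∫⁻ x, ∫⁻ y, f (s • (x + y)) * g (s • (x - y)) = (∫⁻ x, f x) * ∫⁻ x, g x := by
  have hs0 : s ≠ 0 := by
    rintro rfl
    norm_num at hs
  have hjacobian : ENNReal.ofReal |((2 * s) ^ k)⁻¹| * ENNReal.ofReal |(s ^ k)⁻¹| = 1 := by
    rw [← ENNReal.ofReal_mul (abs_nonneg _), ← abs_mul, ← mul_inv, ← mul_pow,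
      show 2 * s * s = 1 by linarith]
    simp
  calc ∫⁻ x, ∫⁻ y, f (s • (x + y)) * g (s • (x - y))
      = ∫⁻ y, ∫⁻ x, f (s • (x + y)) * g (s • (x - y)) := lintegral_lintegral_swap (by fun_prop)
    _ = ∫⁻ y, ∫⁻ x, f (s • x + (2 * s) • y) * g (s • x) := by
        refine lintegral_congr fun y => ?_
        rw [← lintegral_add_right_eq_self _ y]
        refine lintegral_congr fun x => ?_
        rw [add_sub_cancel_right]
        congr 2
        module
    _ = ∫⁻ x, ∫⁻ y, f (s • x + (2 * s) • y) * g (s • x) := lintegral_lintegral_swap (by fun_prop)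
    _ = ∫⁻ x, ENNReal.ofReal |((2 * s) ^ k)⁻¹| * (∫⁻ y, f y) * g (0 + s • x) := by
        refine lintegral_congr fun x => ?_
        rw [lintegral_mul_const _ (by fun_prop), lintegral_comp_add_smul hf _ (by simpa using hs0),
          zero_add]
    _ = ENNReal.ofReal |((2 * s) ^ k)⁻¹| * (∫⁻ y, f y) *
        (ENNReal.ofReal |(s ^ k)⁻¹| * ∫⁻ x, g x) := by
        rw [lintegral_const_mul _ (by fun_prop), lintegral_comp_add_smul hg 0 hs0]
    _ = (ENNReal.ofReal |((2 * s) ^ k)⁻¹| * ENNReal.ofReal |(s ^ k)⁻¹|) *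
        ((∫⁻ x, f x) * ∫⁻ x, g x) := by ring
    _ = (∫⁻ x, f x) * ∫⁻ x, g x := by rw [hjacobian, one_mul]

/-- The slice over `z` of the tensor square of `f`, rotated by `(z, y) ↦ (s (z + y), s (z - y))`;
this map is orthogonal when `2 * s ^ 2 = 1`. -/
def rotSlice (s : ℝ) (f : (Fin k → ℝ) → ℝ≥0∞) (z y : Fin k → ℝ) : ℝ≥0∞ :=
  f (s • (z + y)) * f (s • (z - y))

/-- The marginal of the rotated tensor square of `f`, obtained by integrating its slices. -/
def rotMarginal (s : ℝ) (f : (Fin k → ℝ) → ℝ≥0∞) (z : Fin k → ℝ) : ℝ≥0∞ :=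
  ∫⁻ y, rotSlice s f z y

lemma measurable_uncurry_rotSlice (hf : Measurable f) :
    Measurable fun q : (Fin k → ℝ) × (Fin k → ℝ) => rotSlice s f q.1 q.2 := by
  unfold rotSlice
  fun_prop

lemma measurable_rotSlice (hf : Measurable f) (z : Fin k → ℝ) : Measurable (rotSlice s f z) := by
  unfold rotSlice
  fun_prop

lemma measurable_rotMarginal (hf : Measurable f) : Measurable (rotMarginal s f) :=
  (measurable_uncurry_rotSlice hf).lintegral_prod_right'

lemma rotSlice_ne_zero (hpos : ∀ y, f y ≠ 0) (z y : Fin k → ℝ) : rotSlice s f z y ≠ 0 :=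
  mul_ne_zero (hpos _) (hpos _)

lemma rotMarginal_ne_zero (hf : Measurable f) (hpos : ∀ y, f y ≠ 0) (z : Fin k → ℝ) :
    rotMarginal s f z ≠ 0 :=
  lintegral_ne_zero_of_forall_ne_zero (measurable_rotSlice hf z) (rotSlice_ne_zero hpos z)

lemma lintegral_rotMarginal (hf : Measurable f) (hs : 2 * s ^ 2 = 1) :
    ∫⁻ z, rotMarginal s f z = (∫⁻ y, f y) * ∫⁻ y, f y :=
  lintegral_lintegral_rotate hf hf hs

namespace MidLogConvex

variable {Q : Matrix (Fin k) (Fin k) ℝ}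

lemma sq_comp_smul_le (hf : MidLogConvex f Q) (hs : 2 * s ^ 2 = 1) (u v : Fin k → ℝ) :
    f (s • u) ^ 2 ≤ f (s • (u + v)) * f (s • (u - v)) *
      ENNReal.ofReal (Real.exp (Real.pi * (Q *ᵥ v ⬝ᵥ v))) := by
  have hmid := hf (s • u) (s • v)
  rw [← smul_add, ← smul_sub, mulVec_smul, dotProduct_smul, smul_dotProduct] at hmid
  simp only [smul_eq_mul] at hmid
  rwa [show 2 * Real.pi * (s * (s * (Q *ᵥ v ⬝ᵥ v))) =
    (2 * s ^ 2) * (Real.pi * (Q *ᵥ v ⬝ᵥ v)) by ring, hs, one_mul] at hmid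

lemma sq_mul_sq_comp_smul_le (hf : MidLogConvex f Q) (hs : 2 * s ^ 2 = 1) (u w v : Fin k → ℝ) :
    (f (s • u) * f (s • w)) ^ 2 ≤
      f (s • (u + v)) * f (s • (u - v)) * (f (s • (w + v)) * f (s • (w - v))) *
        ENNReal.ofReal (Real.exp (2 * Real.pi * (Q *ᵥ v ⬝ᵥ v))) := by
  have hexp : ENNReal.ofReal (Real.exp (2 * Real.pi * (Q *ᵥ v ⬝ᵥ v))) =
      ENNReal.ofReal (Real.exp (Real.pi * (Q *ᵥ v ⬝ᵥ v))) *
        ENNReal.ofReal (Real.exp (Real.pi * (Q *ᵥ v ⬝ᵥ v))) := by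
    rw [← ENNReal.ofReal_mul (Real.exp_pos _).le, ← Real.exp_add]
    ring_nf
  rw [mul_pow, hexp]
  refine (mul_le_mul' (hf.sq_comp_smul_le hs u v) (hf.sq_comp_smul_le hs w v)).trans_eq ?_
  ring

lemma rotSlice_sq_le (hf : MidLogConvex f Q) (hs : 2 * s ^ 2 = 1) (z y v : Fin k → ℝ) :
    rotSlice s f z y ^ 2 ≤ rotSlice s f (z + v) y * rotSlice s f (z - v) y *
      ENNReal.ofReal (Real.exp (2 * Real.pi * (Q *ᵥ v ⬝ᵥ v))) := by
  refine (hf.sq_mul_sq_comp_smul_le hs (z + y) (z - y) v).trans_eq ?_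
  rw [rotSlice, rotSlice, add_right_comm z v y, add_sub_right_comm z v y, sub_add_eq_add_sub z v y,
    sub_right_comm z v y]
  ring

end MidLogConvex

variable {Q : Matrix (Fin k) (Fin k) ℝ}

lemma midLogConvex_rotSlice (hf : MidLogConvex f Q) (hs : 2 * s ^ 2 = 1) (z : Fin k → ℝ) :
    MidLogConvex (rotSlice s f z) Q := fun y v => by
  refine (hf.sq_mul_sq_comp_smul_le hs (z + y) (z - y) v).trans_eq ?_
  rw [rotSlice, rotSlice, ← add_assoc, ← add_sub_assoc, show z - y + v = z - (y - v) by abel,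
    show z - y - v = z - (y + v) by abel]
  ring

lemma midLogConvex_rotMarginal (hf : Measurable f) (hfQ : MidLogConvex f Q)
    (hs : 2 * s ^ 2 = 1) : MidLogConvex (rotMarginal s f) Q := fun z v => by
  set e := ENNReal.ofReal (Real.exp (2 * Real.pi * (Q *ᵥ v ⬝ᵥ v)))
  have hm : ∀ z, Measurable (rotSlice s f z) := measurable_rotSlice hf
  have hsqrt : ∀ a b : ℝ≥0∞, a ^ 2 ≤ b ↔ a ≤ b ^ (1 / 2 : ℝ) := fun a b => by
    rw [one_div, ENNReal.le_rpow_inv_iff two_pos, ENNReal.rpow_two]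
  rw [hsqrt, ENNReal.mul_rpow_of_nonneg _ _ one_half_pos.le,
    ENNReal.mul_rpow_of_nonneg _ _ one_half_pos.le]
  calc rotMarginal s f z
      ≤ ∫⁻ y, rotSlice s f (z + v) y ^ (1 / 2 : ℝ) * rotSlice s f (z - v) y ^ (1 / 2 : ℝ) *
          e ^ (1 / 2 : ℝ) := by
        refine lintegral_mono fun y => ?_
        simpa only [hsqrt, ENNReal.mul_rpow_of_nonneg _ _ one_half_pos.le]
          using hfQ.rotSlice_sq_le hs z y v
    _ = (∫⁻ y, rotSlice s f (z + v) y ^ (1 / 2 : ℝ) * rotSlice s f (z - v) y ^ (1 / 2 : ℝ)) *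
          e ^ (1 / 2 : ℝ) :=
        lintegral_mul_const _ (((hm _).pow_const _).mul ((hm _).pow_const _))
    _ ≤ rotMarginal s f (z + v) ^ (1 / 2 : ℝ) * rotMarginal s f (z - v) ^ (1 / 2 : ℝ) *
          e ^ (1 / 2 : ℝ) := by
        gcongr
        exact ENNReal.lintegral_mul_norm_pow_le (hm _).aemeasurable (hm _).aemeasurable
          one_half_pos.le one_half_pos.le (add_halves 1)

end Rotation

section Extremizer

variable {ι : Type*} [Fintype ι] {n : ℕ} {k : ι → ℕ} {p : ι → ℝ} {s : ℝ}
  {C : ∀ i, Matrix (Fin (k i)) (Fin n) ℝ} {Q : ∀ i, Matrix (Fin (k i)) (Fin (k i)) ℝ}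
  {f : ∀ i, (Fin (k i) → ℝ) → ℝ≥0∞}

lemma blProduct_rotSlice (hp : ∀ i, 0 ≤ p i) (s : ℝ) (x y : Fin n → ℝ) :
    blProduct C p (fun i => rotSlice s (f i) (C i *ᵥ x)) y =
      blProduct C p f (s • (x + y)) * blProduct C p f (s • (x - y)) := by
  simp only [blProduct, rotSlice, ENNReal.mul_rpow_of_nonneg _ _ (hp _), Finset.prod_mul_distrib,
    mulVec_smul, mulVec_add, mulVec_sub]

lemma lintegral_blProduct_rotMarginal_le
    (hker : ∀ x : Fin n → ℝ, (∀ i, C i *ᵥ x = 0) → x = 0) (hp : ∀ i, 0 < p i)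
    (hQ : ∀ i, (Q i).PosDef) {β : ℝ} (hβ : ∀ B, Admissible Q B → blRatio C p B ≤ β)
    (hf : ∀ i, Measurable (f i)) (hfQ : ∀ i, MidLogConvex (f i) (Q i)) (hpos : ∀ i y, f i y ≠ 0)
    (hs : 2 * s ^ 2 = 1) :
    ∫⁻ x, blProduct C p (fun i => rotMarginal s (f i)) x ≤ ENNReal.ofReal (√β) *
      ((∏ i, (∫⁻ y, f i y) ^ p i) * ∏ i, (∫⁻ y, f i y) ^ p i) := by
  have hle := lintegral_blProduct_le hker hp hQ hβ (fun i => measurable_rotMarginal (hf i))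
    (fun i => midLogConvex_rotMarginal (hf i) (hfQ i) hs) fun i =>
      lintegral_ne_zero_of_forall_ne_zero (measurable_rotMarginal (hf i))
        (rotMarginal_ne_zero (hf i) (hpos i))
  simpa only [lintegral_rotMarginal (hf _) hs, ENNReal.mul_rpow_of_nonneg _ _ (hp _).le,
    Finset.prod_mul_distrib] using hle

/-- Integrating the Brascamp–Lieb inequality for the slices over `x` and then applying it to the
marginals bounds `(∫ blProduct C p f) ^ 2` by itself, so both are equalities almost everywhere. -/
lemma exists_extremizing_slice
    (hker : ∀ x : Fin n → ℝ, (∀ i, C i *ᵥ x = 0) → x = 0) (hp : ∀ i, 0 < p i)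
    (hQ : ∀ i, (Q i).PosDef) {β : ℝ} (hβ : ∀ B, Admissible Q B → blRatio C p B ≤ β)
    (hf : ∀ i, Measurable (f i)) (hfQ : ∀ i, MidLogConvex (f i) (Q i)) (hpos : ∀ i y, f i y ≠ 0)
    (hfin : ∀ i, ∫⁻ y, f i y ≠ ⊤)
    (hext : ∫⁻ x, blProduct C p f x = ENNReal.ofReal (√β) * ∏ i, (∫⁻ y, f i y) ^ p i)
    (hs : 2 * s ^ 2 = 1) :
    ∃ x, (∀ i, rotMarginal s (f i) (C i *ᵥ x) ≠ ⊤) ∧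
      ∫⁻ y, blProduct C p (fun i => rotSlice s (f i) (C i *ᵥ x)) y =
        ENNReal.ofReal (√β) * blProduct C p (fun i => rotMarginal s (f i)) x := by
  set F := blProduct C p f
  set J : (Fin n → ℝ) → ℝ≥0∞ := fun x =>
    ∫⁻ y, blProduct C p (fun i => rotSlice s (f i) (C i *ᵥ x)) y
  set R := blProduct C p fun i => rotMarginal s (f i)
  have hRm : Measurable fun x => ENNReal.ofReal (√β) * R x :=
    (measurable_blProduct fun i => measurable_rotMarginal (hf i)).const_mul _
  have hJR : ∀ x, J x ≤ ENNReal.ofReal (√β) * R x := fun x =>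
    lintegral_blProduct_le hker hp hQ hβ (fun i => measurable_rotSlice (hf i) _)
      (fun i => midLogConvex_rotSlice (hfQ i) hs _) fun i => rotMarginal_ne_zero (hf i) (hpos i) _
  have hJ : ∫⁻ x, J x = (∫⁻ x, F x) * ∫⁻ x, F x := by
    simp only [J, blProduct_rotSlice (fun i => (hp i).le)]
    exact lintegral_lintegral_rotate (measurable_blProduct hf) (measurable_blProduct hf) hs
  have hR : ∫⁻ x, ENNReal.ofReal (√β) * R x ≤ (∫⁻ x, F x) * ∫⁻ x, F x := by
    rw [lintegral_const_mul' _ _ ENNReal.ofReal_ne_top, hext, mul_mul_mul_comm, mul_assoc]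
    gcongr
    exact lintegral_blProduct_rotMarginal_le hker hp hQ hβ hf hfQ hpos hs
  have hF : (∫⁻ x, F x) * ∫⁻ x, F x ≠ ⊤ := by
    have : ∫⁻ x, F x ≠ ⊤ := hext ▸ ENNReal.mul_ne_top ENNReal.ofReal_ne_top
      (ENNReal.prod_ne_top fun i _ => ENNReal.rpow_ne_top_of_nonneg (hp i).le (hfin i))
    exact ENNReal.mul_ne_top this this
  have heq := ae_eq_of_ae_le_of_lintegral_le (Eventually.of_forall hJR) (hJ ▸ hF)
    hRm.aemeasurable (hR.trans hJ.ge)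
  obtain ⟨x, hx, hxfin⟩ := (heq.and (ae_lt_top hRm (hR.trans_lt hF.lt_top).ne)).exists
  refine ⟨x, fun i hi => hxfin.ne ?_, hx⟩
  have hβ0 : 0 < β := (blRatio_pos hker hp hQ).trans_le (hβ Q (admissible_self hQ))
  rw [show R x = ⊤ from prod_rpow_eq_top hp (fun j => rotMarginal_ne_zero (hf j) (hpos j) _) hi,
    ENNReal.mul_top (by simpa using hβ0)]

end Extremizer

/-! ### Extremal Gaussians -/

lemma mul_le_rpow_one_add_add {a c ε : ℝ} (ha : 0 ≤ a) (hc : 0 ≤ c) (hε : 0 < ε) :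
    a * c ≤ (a * c) ^ (1 + ε) + ε * (a + c) := by
  rcases (mul_nonneg ha hc).eq_or_lt with h | h
  · rw [← h, Real.zero_rpow (by linarith)]
    positivity
  set u := √(a * c)
  have hu0 : 0 < u := Real.sqrt_pos.2 h
  have hu : u ^ 2 = a * c := Real.sq_sqrt h.le
  have hgeom : 2 * u ≤ a + c := by
    refine le_of_sq_le_sq ?_ (by positivity)
    nlinarith [sq_nonneg (a - c)]
  have hlog : -(u * u * Real.log u) ≤ u := by
    have := Real.log_le_sub_one_of_pos (inv_pos.2 hu0)
    rw [Real.log_inv] at this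
    calc -(u * u * Real.log u) = u * u * -Real.log u := by ring
      _ ≤ u * u * u⁻¹ := mul_le_mul_of_nonneg_left (by linarith) (by positivity)
      _ = u := by field_simp
  have hpow : 1 + ε * (2 * Real.log u) ≤ (a * c) ^ ε := by
    rw [← hu, Real.rpow_def_of_pos (by positivity), Real.log_pow]
    push_cast
    linarith [Real.add_one_le_exp (2 * Real.log u * ε)]
  calc a * c = u * u * (1 + ε * (2 * Real.log u)) + ε * (2 * -(u * u * Real.log u)) := by
        rw [← hu]; ring
    _ ≤ u * u * (a * c) ^ ε + ε * (2 * u) := by gcongr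
    _ ≤ (a * c) ^ (1 + ε) + ε * (a + c) := by
        rw [Real.rpow_add h, Real.rpow_one, ← pow_two, hu]
        gcongr

lemma mul_le_rpow_one_add_add_of_ne_top {a c : ℝ≥0∞} (ha : a ≠ ⊤) (hc : c ≠ ⊤) {ε : ℝ}
    (hε : 0 < ε) : a * c ≤ (a * c) ^ (1 + ε) + ENNReal.ofReal ε * (a + c) := by
  lift a to NNReal using ha
  lift c to NNReal using hc
  have h := ENNReal.ofReal_le_ofReal (mul_le_rpow_one_add_add a.coe_nonneg c.coe_nonneg hε)
  rwa [ENNReal.ofReal_add (by positivity) (by positivity), ENNReal.ofReal_mul hε.le,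
    ENNReal.ofReal_add a.coe_nonneg c.coe_nonneg,
    ← ENNReal.ofReal_rpow_of_nonneg (by positivity) (by linarith),
    ENNReal.ofReal_mul a.coe_nonneg, ENNReal.ofReal_coe_nnreal, ENNReal.ofReal_coe_nnreal] at h

lemma exp_neg_two_mul_le_of_le_rpow {x c ε : ℝ} (hx : 0 < x) (hε : 0 < ε) (hc : 0 ≤ c)
    (hεc : ε * c ≤ 1 / 2) (h : 1 - ε * c ≤ x ^ ε) : Real.exp (-(2 * c)) ≤ x := by
  rw [← Real.rpow_le_rpow_iff (Real.exp_pos _).le hx.le hε, ← Real.exp_mul]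
  refine le_trans ?_ h
  have hexp := Real.add_one_le_exp (2 * (ε * c))
  rw [show -(2 * c) * ε = -(2 * (ε * c)) by ring, Real.exp_neg,
    inv_le_iff_one_le_mul₀ (Real.exp_pos _)]
  nlinarith [mul_nonneg hε.le hc]

section Extremal

variable {ι : Type*} [Fintype ι] {n : Type*} {m : ι → Type*} [∀ i, Fintype (m i)]
  [∀ i, DecidableEq (m i)] [Fintype n] [DecidableEq n]
  {C : ∀ i, Matrix (m i) n ℝ} {p : ι → ℝ} {Q : ∀ i, Matrix (m i) (m i) ℝ}

lemma eventually_le_detProd_of_almost_extremal {β : ℝ} (hβ0 : 0 < β)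
    (hβ : ∀ B, Admissible Q B → blRatio C p B ≤ β) {N c : ℝ} (hN : 0 < N) (hc : 0 ≤ c) :
    ∀ᶠ ε in 𝓝[>] (0 : ℝ), ∀ B, Admissible Q B →
      √β ≤ √(blRatio C p B) * (√(detProd p B) * N) ^ ε + ε * c →
        (Real.exp (-(2 * (c / √β))) / N) ^ 2 ≤ detProd p B := by
  have hb : 0 < √β := Real.sqrt_pos.2 hβ0
  have hsmall : ∀ᶠ ε in 𝓝 (0 : ℝ), ε * (c / √β) < 1 / 2 :=
    ((continuous_mul_const (c / √β)).tendsto' 0 0 (zero_mul _)).eventually_lt_const one_half_pos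
  filter_upwards [hsmall.filter_mono nhdsWithin_le_nhds, self_mem_nhdsWithin] with ε hεc hε B hB h
  have hG : 0 < √(detProd p B) := Real.sqrt_pos.2 (detProd_pos fun i => (hB i).1)
  have hexp : Real.exp (-(2 * (c / √β))) ≤ √(detProd p B) * N := by
    refine exp_neg_two_mul_le_of_le_rpow (mul_pos hG hN) hε (div_nonneg hc hb.le) hεc.le ?_
    refine le_of_mul_le_mul_left ?_ hb
    calc √β * (1 - ε * (c / √β)) = √β - ε * c := by field_simp
      _ ≤ √(blRatio C p B) * (√(detProd p B) * N) ^ ε := by linarith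
      _ ≤ √β * (√(detProd p B) * N) ^ ε := by
        gcongr
        exact hβ B hB
  rw [← Real.le_sqrt' (div_pos (Real.exp_pos _) hN)]
  exact (div_le_iff₀ hN).2 hexp

lemma exists_blRatio_eq_of_almost_extremal
    (hker : ∀ x : n → ℝ, (∀ i, C i *ᵥ x = 0) → x = 0) (hp : ∀ i, 0 < p i)
    (hQ : ∀ i, (Q i).PosDef) {β : ℝ} (hβ : ∀ B, Admissible Q B → blRatio C p B ≤ β)
    {N c : ℝ} (hN : 0 < N) (hc : 0 ≤ c)
    (h : ∀ ε : ℝ, 0 < ε → ∃ B, Admissible Q B ∧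
      √β ≤ √(blRatio C p B) * (√(detProd p B) * N) ^ ε + ε * c) :
    ∃ B, Admissible Q B ∧ blRatio C p B = β := by
  have hβ0 : 0 < β := (blRatio_pos hker hp hQ).trans_le (hβ Q (admissible_self hQ))
  obtain ⟨g, hg⟩ := exists_detProd_le (fun i => (hp i).le) Q
  have hg0 : 0 < g := (detProd_pos hQ).trans_le (hg Q (admissible_self hQ))
  have hδ : 0 < (Real.exp (-(2 * (c / √β))) / N) ^ 2 := by positivity
  have hlarge := eventually_le_detProd_of_almost_extremal hβ0 hβ hN hc
  obtain ⟨ε₀, hε₀, hε₀pos⟩ := (hlarge.and self_mem_nhdsWithin).exists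
  obtain ⟨B₀, hB₀, hB₀le⟩ := h ε₀ hε₀pos
  obtain ⟨B, hB, hmax⟩ := exists_admissible_forall_le hp
    (fun B hB => hB.continuousAt_blRatio hker hp) hδ hB₀ (hε₀ B₀ hB₀ hB₀le)
  refine ⟨B, hB, (hβ B hB).antisymm ?_⟩
  have hbound : ∀ᶠ ε in 𝓝[>] (0 : ℝ), √β ≤ √(blRatio C p B) * (√g * N) ^ ε + ε * c := by
    filter_upwards [hlarge, self_mem_nhdsWithin] with ε hεlarge hε
    obtain ⟨B', hB', hB'le⟩ := h ε hε
    refine hB'le.trans ?_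
    have hε' : 0 ≤ ε := le_of_lt hε
    gcongr
    · exact hmax B' hB' (hεlarge B' hB' hB'le)
    · exact hg B' hB'
  have hlim : Tendsto (fun ε : ℝ => √(blRatio C p B) * (√g * N) ^ ε + ε * c) (𝓝 0)
      (𝓝 (√(blRatio C p B))) := by
    have hbase : √g * N ≠ 0 := (mul_pos (Real.sqrt_pos.2 hg0) hN).ne'
    have hcont : Continuous fun ε : ℝ => √(blRatio C p B) * (√g * N) ^ ε + ε * c := by
      have := Real.continuous_const_rpow hbase
      fun_prop
    exact hcont.tendsto' 0 _ (by simp)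
  exact (Real.sqrt_le_sqrt_iff (blRatio_pos hker hp fun i => (hB i).1).le).1
    (ge_of_tendsto (hlim.mono_left nhdsWithin_le_nhds) hbound)

end Extremal

section Extremizer

variable {ι : Type*} [Fintype ι] {n : ℕ} {k : ι → ℕ} {p : ι → ℝ}
  {C : ∀ i, Matrix (Fin (k i)) (Fin n) ℝ} {Q : ∀ i, Matrix (Fin (k i)) (Fin (k i)) ℝ}
  {f : ∀ i, (Fin (k i) → ℝ) → ℝ≥0∞}

lemma lintegral_mul_le_lintegral_rpow_add {F₁ F₂ : (Fin n → ℝ) → ℝ≥0∞} (h₁ : Measurable F₁)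
    (h₂ : Measurable F₂) (hF₁ : ∀ y, F₁ y ≠ ⊤) (hF₂ : ∀ y, F₂ y ≠ ⊤) {ε : ℝ} (hε : 0 < ε) :
    ∫⁻ y, F₁ y * F₂ y ≤ (∫⁻ y, (F₁ y * F₂ y) ^ (1 + ε)) +
      ENNReal.ofReal ε * ((∫⁻ y, F₁ y) + ∫⁻ y, F₂ y) := by
  rw [← lintegral_add_left h₁, ← lintegral_const_mul _ (by fun_prop),
    ← lintegral_add_right _ (by fun_prop)]
  exact lintegral_mono fun y => mul_le_rpow_one_add_add_of_ne_top (hF₁ y) (hF₂ y) hε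

/-- The doubled extremizer has product `F₁ * F₂` with `F₁` and `F₂` integrable. Its square root is
then integrable, so that `ε ↦ ∫ (F₁ * F₂) ^ (1 + ε)` drops at most linearly from `ε = 0`. -/
lemma exists_extremizer_le_lintegral_rpow_add
    (hker : ∀ x : Fin n → ℝ, (∀ i, C i *ᵥ x = 0) → x = 0) (hp : ∀ i, 0 < p i)
    (hQ : ∀ i, (Q i).PosDef) {β : ℝ} (hβ : ∀ B, Admissible Q B → blRatio C p B ≤ β)
    (hf : ∀ i, Measurable (f i)) (hfQ : ∀ i, MidLogConvex (f i) (Q i)) (hpos : ∀ i y, f i y ≠ 0)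
    (htop : ∀ i y, f i y ≠ ⊤) (hfin : ∀ i, ∫⁻ y, f i y ≠ ⊤)
    (hext : ∫⁻ x, blProduct C p f x = ENNReal.ofReal (√β) * ∏ i, (∫⁻ y, f i y) ^ p i) :
    ∃ g : ∀ i, (Fin (k i) → ℝ) → ℝ≥0∞, (∀ i, Measurable (g i)) ∧
      (∀ i, MidLogConvex (g i) (Q i)) ∧ (∀ i, ∫⁻ y, g i y ≠ 0) ∧ (∀ i, ∫⁻ y, g i y ≠ ⊤) ∧
      ∃ c ≠ ⊤, ∀ ε : ℝ, 0 < ε → ENNReal.ofReal (√β) * ∏ i, (∫⁻ y, g i y) ^ p i ≤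
        (∫⁻ y, blProduct C p g y ^ (1 + ε)) + ENNReal.ofReal ε * c := by
  obtain ⟨s, hs⟩ : ∃ s : ℝ, 2 * s ^ 2 = 1 := ⟨√(1 / 2), by
    rw [Real.sq_sqrt one_half_pos.le, mul_one_div_cancel two_ne_zero]⟩
  have hs0 : s ≠ 0 := by
    rintro rfl
    norm_num at hs
  obtain ⟨x, hx, hxext⟩ := exists_extremizing_slice hker hp hQ hβ hf hfQ hpos hfin hext hs
  set F := blProduct C p f
  have hF : Measurable F := measurable_blProduct hf
  have hFtop (y : Fin n → ℝ) : F y ≠ ⊤ :=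
    ENNReal.prod_ne_top fun i _ => ENNReal.rpow_ne_top_of_nonneg (hp i).le (htop i _)
  have hFint (r : ℝ) (hr : r ≠ 0) : ∫⁻ y, F (s • x + r • y) ≠ ⊤ := by
    rw [lintegral_comp_add_smul hF _ hr, hext]
    exact ENNReal.mul_ne_top ENNReal.ofReal_ne_top (ENNReal.mul_ne_top ENNReal.ofReal_ne_top
      (ENNReal.prod_ne_top fun i _ => ENNReal.rpow_ne_top_of_nonneg (hp i).le (hfin i)))
  have hplus : ∫⁻ y, F (s • (x + y)) ≠ ⊤ := by
    simpa only [smul_add] using hFint s hs0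
  have hminus : ∫⁻ y, F (s • (x - y)) ≠ ⊤ := by
    simpa only [smul_sub, neg_smul, ← sub_eq_add_neg] using hFint (-s) (neg_ne_zero.2 hs0)
  refine ⟨fun i => rotSlice s (f i) (C i *ᵥ x), fun i => measurable_rotSlice (hf i) _,
    fun i => midLogConvex_rotSlice (hfQ i) hs _, fun i => rotMarginal_ne_zero (hf i) (hpos i) _,
    hx, _, ENNReal.add_ne_top.2 ⟨hplus, hminus⟩, fun ε hε => ?_⟩
  refine hxext.ge.trans ?_
  simp only [blProduct_rotSlice fun i => (hp i).le]
  exact lintegral_mul_le_lintegral_rpow_add (by fun_prop) (by fun_prop) (fun _ => hFtop _)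
    (fun _ => hFtop _) hε

lemma exists_blRatio_eq_of_extremizer
    (hker : ∀ x : Fin n → ℝ, (∀ i, C i *ᵥ x = 0) → x = 0) (hp : ∀ i, 0 < p i)
    (hQ : ∀ i, (Q i).PosDef) {β : ℝ} (hβ : ∀ B, Admissible Q B → blRatio C p B ≤ β)
    (hf : ∀ i, Measurable (f i)) (hfQ : ∀ i, MidLogConvex (f i) (Q i)) (hpos : ∀ i y, f i y ≠ 0)
    (htop : ∀ i y, f i y ≠ ⊤) (hfin : ∀ i, ∫⁻ y, f i y ≠ ⊤)
    (hext : ∫⁻ x, blProduct C p f x = ENNReal.ofReal (√β) * ∏ i, (∫⁻ y, f i y) ^ p i) :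
    ∃ B, Admissible Q B ∧ blRatio C p B = β := by
  obtain ⟨g, hg, hgQ, hgpos, hgfin, c, hc, hgle⟩ :=
    exists_extremizer_le_lintegral_rpow_add hker hp hQ hβ hf hfQ hpos htop hfin hext
  have hN0 : ∏ i, (∫⁻ y, g i y) ^ p i ≠ 0 := Finset.prod_ne_zero_iff.2 fun i _ => by
    simp [ENNReal.rpow_eq_zero_iff, hgpos i, (hp i).le]
  have hN : ∏ i, (∫⁻ y, g i y) ^ p i ≠ ⊤ :=
    ENNReal.prod_ne_top fun i _ => ENNReal.rpow_ne_top_of_nonneg (hp i).le (hgfin i)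
  obtain ⟨c, hc0, rfl⟩ : ∃ c' : ℝ, 0 ≤ c' ∧ ENNReal.ofReal c' = c :=
    ⟨c.toReal, ENNReal.toReal_nonneg, ENNReal.ofReal_toReal hc⟩
  obtain ⟨N, hNpos, hNeq⟩ : ∃ N : ℝ, 0 < N ∧ ENNReal.ofReal N = ∏ i, (∫⁻ y, g i y) ^ p i :=
    ⟨_, ENNReal.toReal_pos hN0 hN, ENNReal.ofReal_toReal hN⟩
  refine exists_blRatio_eq_of_almost_extremal hker hp hQ hβ hNpos (div_nonneg hc0 hNpos.le)
    fun ε hε => ?_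
  obtain ⟨B, hB, hle⟩ := exists_lintegral_blProduct_rpow_le hker hp hQ hβ hε
  refine ⟨B, hB, ?_⟩
  have hM := (posDef_blMatrix hker hp fun i => (hB i).1).det_pos
  have hG : 0 < √(detProd p B) := Real.sqrt_pos.2 (detProd_pos fun i => (hB i).1)
  set D := √(blMatrix C p B).det with hD
  have hD0 : 0 < D := Real.sqrt_pos.2 hM
  have henn := (mul_le_mul_right (hgle ε hε) (ENNReal.ofReal D)).trans
    ((mul_add _ _ _).le.trans (add_le_add_left (hle g hg hgQ hgfin) _))
  rw [← hNeq, ← ENNReal.ofReal_mul (Real.sqrt_nonneg _), ← ENNReal.ofReal_mul hD0.le,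
    ← ENNReal.ofReal_mul hG.le, ENNReal.ofReal_rpow_of_pos (by positivity),
    ← ENNReal.ofReal_mul hε.le, ← ENNReal.ofReal_mul hD0.le,
    ← ENNReal.ofReal_add (by positivity) (by positivity),
    ENNReal.ofReal_le_ofReal_iff (by positivity), Real.rpow_add (by positivity),
    Real.rpow_one] at henn
  rw [blRatio, Real.sqrt_div' _ hM.le, ← hD, ← mul_le_mul_iff_right₀ (mul_pos hD0 hNpos)]
  calc D * N * √β = D * (√β * N) := by ring
    _ ≤ √(detProd p B) * N * (√(detProd p B) * N) ^ ε + D * (ε * c) := henn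
    _ = D * N * (√(detProd p B) / D * (√(detProd p B) * N) ^ ε + ε * (c / N)) := by field_simp

end Extremizer

/-! ### Log-convex inputs -/

section LogConvex

variable {k : ℕ}

namespace LogConvexFun

variable {h : (Fin k → ℝ) → ℝ}

protected lemma continuous (hh : LogConvexFun h) : Continuous h := by
  have hconv : ConvexOn ℝ Set.univ h := ⟨convex_univ, fun x _ y _ a b ha hb hab =>
    (hh.2 x y a b ha hb hab).trans
      (Real.geom_mean_le_arith_mean2_weighted ha hb (hh.1 x) (hh.1 y) hab)⟩
  exact continuousOn_univ.1 (hconv.continuousOn isOpen_univ)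

lemma sq_le_mul (hh : LogConvexFun h) (y z : Fin k → ℝ) : h y ^ 2 ≤ h (y + z) * h (y - z) := by
  have hmid := hh.2 (y + z) (y - z) (1 / 2) (1 / 2) one_half_pos.le one_half_pos.le (add_halves 1)
  rw [show (1 / 2 : ℝ) • (y + z) + (1 / 2 : ℝ) • (y - z) = y by module,
    ← Real.mul_rpow (hh.1 _) (hh.1 _), ← Real.sqrt_eq_rpow] at hmid
  exact (Real.le_sqrt (hh.1 y) (mul_nonneg (hh.1 _) (hh.1 _))).1 hmid

lemma eq_zero_of_apply_eq_zero (hh : LogConvexFun h) {x : Fin k → ℝ} (hx : h x = 0) : h = 0 := by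
  funext y
  have hsq := hh.sq_le_mul y (x - y)
  rw [add_sub_cancel, hx, zero_mul] at hsq
  exact pow_eq_zero_iff two_ne_zero |>.1 (hsq.antisymm (sq_nonneg _))

end LogConvexFun

lemma gaussFn_sq (Q : Matrix (Fin k) (Fin k) ℝ) (y z : Fin k → ℝ) :
    gaussFn Q y ^ 2 = gaussFn Q (y + z) * gaussFn Q (y - z) *
      Real.exp (2 * Real.pi * (Q *ᵥ z ⬝ᵥ z)) := by
  unfold gaussFn
  rw [← Real.exp_add, ← Real.exp_add, ← Real.exp_nat_mul]
  simp only [mulVec_add, mulVec_sub, dotProduct_add, dotProduct_sub, add_dotProduct,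
    sub_dotProduct]
  push_cast
  ring_nf

namespace MoreLogConvex

variable {f : (Fin k → ℝ) → ℝ} {Q : Matrix (Fin k) (Fin k) ℝ}

protected lemma measurable (hf : MoreLogConvex f Q) : Measurable f := by
  obtain ⟨h, hh, rfl⟩ := hf
  have := hh.continuous
  unfold gaussFn
  fun_prop

lemma nonneg (hf : MoreLogConvex f Q) (y : Fin k → ℝ) : 0 ≤ f y := by
  obtain ⟨h, hh, rfl⟩ := hf
  exact mul_nonneg (Real.exp_pos _).le (hh.1 y)

lemma pos (hf : MoreLogConvex f Q) (hne : ¬ f =ᵐ[volume] 0) (y : Fin k → ℝ) : 0 < f y := by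
  refine (hf.nonneg y).lt_of_ne' fun hzero => hne ?_
  obtain ⟨h, hh, rfl⟩ := hf
  have hy : h y = 0 := (mul_eq_zero.1 hzero).resolve_left (Real.exp_pos _).ne'
  exact Eventually.of_forall fun z => by simp [hh.eq_zero_of_apply_eq_zero hy]

lemma midLogConvex (hf : MoreLogConvex f Q) : MidLogConvex (fun y => ENNReal.ofReal (f y)) Q :=
    fun y z => by
  rw [← ENNReal.ofReal_pow (hf.nonneg _), ← ENNReal.ofReal_mul (hf.nonneg _),
    ← ENNReal.ofReal_mul (mul_nonneg (hf.nonneg _) (hf.nonneg _))]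
  refine ENNReal.ofReal_le_ofReal ?_
  obtain ⟨h, hh, rfl⟩ := hf
  calc (gaussFn Q y * h y) ^ 2 = gaussFn Q y ^ 2 * h y ^ 2 := mul_pow _ _ _
    _ ≤ gaussFn Q y ^ 2 * (h (y + z) * h (y - z)) := by
        gcongr
        exact hh.sq_le_mul y z
    _ = gaussFn Q (y + z) * h (y + z) * (gaussFn Q (y - z) * h (y - z)) *
          Real.exp (2 * Real.pi * (Q *ᵥ z ⬝ᵥ z)) := by
        rw [gaussFn_sq Q y z]
        ring

lemma lintegral_ofReal (hf : MoreLogConvex f Q) (hfint : Integrable f) :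
    ∫⁻ y, ENNReal.ofReal (f y) = ENNReal.ofReal (∫ y, f y) :=
  (ofReal_integral_eq_lintegral_ofReal hfint (Eventually.of_forall hf.nonneg)).symm

end MoreLogConvex

end LogConvex

section Datum

variable {n m : ℕ} {ni : Fin m → ℕ} {C : ∀ i, Matrix (Fin (ni i)) (Fin n) ℝ} {p : Fin m → ℝ}
  {Q B : ∀ i, Matrix (Fin (ni i)) (Fin (ni i)) ℝ}

lemma prod_ofReal_det_rpow_div (hker : ∀ x : Fin n → ℝ, (∀ i, C i *ᵥ x = 0) → x = 0)
    (hp : ∀ i, 0 < p i) (hB : ∀ i, (B i).PosDef) :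
    (∏ i, ENNReal.ofReal (B i).det ^ p i) /
        ENNReal.ofReal (∑ i, p i • ((C i)ᵀ * B i * C i)).det =
      ENNReal.ofReal (blRatio C p B) := by
  rw [← ofReal_prod_rpow (fun i => (hp i).le) fun i => (hB i).det_pos.le]
  exact (ENNReal.ofReal_div_of_pos (posDef_blMatrix hker hp hB).det_pos).symm

lemma blRatio_le_toReal_BLconst_sq (hker : ∀ x : Fin n → ℝ, (∀ i, C i *ᵥ x = 0) → x = 0)
    (hp : ∀ i, 0 < p i) (hBL : BLconst C p Q ≠ ⊤) (hB : Admissible Q B) :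
    blRatio C p B ≤ (BLconst C p Q).toReal ^ 2 := by
  have hle : ENNReal.ofReal (blRatio C p B) ^ (2 : ℝ)⁻¹ ≤ BLconst C p Q := by
    rw [← prod_ofReal_det_rpow_div hker hp fun i => (hB i).1]
    exact le_iSup₂_of_le B hB le_rfl
  rw [ENNReal.rpow_inv_le_iff two_pos, ENNReal.rpow_two] at hle
  rw [← ENNReal.toReal_pow]
  exact (ENNReal.ofReal_le_iff_le_toReal (ENNReal.pow_ne_top hBL)).1 hle

lemma lintegral_blProduct_ofReal (hp : ∀ i, 0 ≤ p i) {f : ∀ i, (Fin (ni i) → ℝ) → ℝ}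
    (hf : ∀ i y, 0 ≤ f i y) :
    ∫⁻ x, blProduct C p (fun i y => ENNReal.ofReal (f i y)) x =
      ∫⁻ x, ENNReal.ofReal (∏ i, f i (C i *ᵥ x) ^ p i) :=
  lintegral_congr fun _ => (ofReal_prod_rpow hp fun i => hf i _).symm

end Datum

theorem gaussian_extremizable_of_extremizable_general
    {n m : ℕ} {ni : Fin m → ℕ}
    (C : ∀ i, Matrix (Fin (ni i)) (Fin n) ℝ)
    (hker : ∀ x : Fin n → ℝ, (∀ i, (C i).mulVec x = 0) → x = 0)
    (p : Fin m → ℝ) (hp : ∀ i, 0 < p i)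
    (Q : ∀ i, Matrix (Fin (ni i)) (Fin (ni i)) ℝ) (hQ : ∀ i, (Q i).PosDef)
    (hBL : BLconst C p Q < ⊤)
    (f : ∀ i, (Fin (ni i) → ℝ) → ℝ)
    (hfint : ∀ i, Integrable (f i))
    (hfne : ∀ i, ¬ (f i =ᵐ[volume] 0))
    (hflc : ∀ i, MoreLogConvex (f i) (Q i))
    (hext : (∫⁻ x : Fin n → ℝ, ENNReal.ofReal (∏ i, f i ((C i).mulVec x) ^ p i)) =
      BLconst C p Q * ∏ i, ENNReal.ofReal (∫ y, f i y) ^ p i) :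
    ∃ B : ∀ i, Matrix (Fin (ni i)) (Fin (ni i)) ℝ,
      (∀ i, (B i).PosDef ∧ (Q i - B i).PosSemidef) ∧
        BLconst C p Q ^ (2 : ℕ) =
          (∏ i, ENNReal.ofReal ((B i).det) ^ p i) /
            ENNReal.ofReal ((∑ i, p i • ((C i)ᵀ * B i * C i)).det) := by
  have hconst : ENNReal.ofReal (BLconst C p Q).toReal = BLconst C p Q :=
    ENNReal.ofReal_toReal hBL.ne
  have hintegral (i : Fin m) : ∫⁻ y, ENNReal.ofReal (f i y) = ENNReal.ofReal (∫ y, f i y) :=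
    (hflc i).lintegral_ofReal (hfint i)
  obtain ⟨B, hB, hratio⟩ := exists_blRatio_eq_of_extremizer hker hp hQ
    (fun B hB => blRatio_le_toReal_BLconst_sq hker hp hBL.ne hB)
    (f := fun i y => ENNReal.ofReal (f i y))
    (fun i => (hflc i).measurable.ennreal_ofReal) (fun i => (hflc i).midLogConvex)
    (fun i y => (ENNReal.ofReal_pos.2 ((hflc i).pos (hfne i) y)).ne')
    (fun i y => ENNReal.ofReal_ne_top) (fun i => by rw [hintegral]; exact ENNReal.ofReal_ne_top)
    (by
      simp only [hintegral]
      rw [lintegral_blProduct_ofReal (fun i => (hp i).le) fun i => (hflc i).nonneg, hext,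
        Real.sqrt_sq ENNReal.toReal_nonneg, hconst])
  refine ⟨B, hB, ?_⟩
  rw [prod_ofReal_det_rpow_div hker hp fun i => (hB i).1, hratio,
    ENNReal.ofReal_pow ENNReal.toReal_nonneg, hconst]

/-- An extremizable regularized Brascamp–Lieb datum is Gaussian-extremizable. -/
theorem gaussian_extremizable_of_extremizable
    {n m : ℕ} (hm : 1 ≤ m) {ni : Fin m → ℕ}
    (C : ∀ i, Matrix (Fin (ni i)) (Fin n) ℝ)
    (hCsurj : ∀ i, Function.Surjective (C i).mulVec)
    (hker : ∀ x : Fin n → ℝ, (∀ i, (C i).mulVec x = 0) → x = 0)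
    (p : Fin m → ℝ) (hp : ∀ i, 0 < p i)
    (Q : ∀ i, Matrix (Fin (ni i)) (Fin (ni i)) ℝ) (hQ : ∀ i, (Q i).PosDef)
    (hBL : BLconst C p Q < ⊤)
    (f : ∀ i, (Fin (ni i) → ℝ) → ℝ)
    (hfint : ∀ i, Integrable (f i))
    (hfne : ∀ i, ¬ (f i =ᵐ[volume] 0))
    (hflc : ∀ i, MoreLogConvex (f i) (Q i))
    (hext : (∫⁻ x : Fin n → ℝ, ENNReal.ofReal (∏ i, f i ((C i).mulVec x) ^ p i)) =
      BLconst C p Q * ∏ i, ENNReal.ofReal (∫ y, f i y) ^ p i) :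
    ∃ B : ∀ i, Matrix (Fin (ni i)) (Fin (ni i)) ℝ,
      (∀ i, (B i).PosDef ∧ (Q i - B i).PosSemidef) ∧
        BLconst C p Q ^ (2 : ℕ) =
          (∏ i, ENNReal.ofReal ((B i).det) ^ p i) /
            ENNReal.ofReal ((∑ i, p i • ((C i)ᵀ * B i * C i)).det) :=
  gaussian_extremizable_of_extremizable_general C hker p hp Q hQ hBL f hfint hfne hflc hext
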